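/- arXiv:1510.01343 — 7 statements merged into one kernel-verified Lean document; each statement's English description precedes it below -/
import Mathlib

section
/- Let m and ℓ be positive integers and let f_1, …, f_m be eventually quasi-polynomial functions from the positive integers to ℤ ∪ {−∞}. Define f(t) to be the ℓth largest value with multiplicity of the multiset {f_1(t), …, f_m(t)} (with −∞ smaller than every integer, and f(t) = −∞ if ℓ > m). Then f is eventually quasi-polynomial. -/
/-!
Let `D` be a common multiple of the periods. On a residue class modulo `D`, each `f i` is eventually
a single polynomial or constantly `-∞`. The sign of a real polynomial is eventually constant, so the
truth value of each comparison `f i t ≤ f j t` is eventually constant on the class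
(`eventually_le_or_eventually_not_le`). Hence one permutation `σ` sorts the tuple `(f i t)ᵢ` for all
large `t` in the class (`exists_perm_eventually_monotone`), so that the `ℓ`th largest value is
`f (σ (m - ℓ)) t`, with `m - ℓ` counted from `0` (`nthLargestW_of_monotone`): it is the same
`f i` throughout the class.
-/

/-- The ℓth largest element (with multiplicity) of a multiset of `ℤ ∪ {-∞}`;
`⊥` (= -∞) if the multiset has fewer than `ℓ` elements. -/
def nthLargestW (M : Multiset (WithBot ℤ)) (ℓ : ℕ) : WithBot ℤ :=
  (((M.sort (· ≤ ·)).reverse)[ℓ - 1]?).getD ⊥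

/-- The ℓth largest element (with multiplicity) of a multiset of integers. -/
def nthLargest (M : Multiset ℤ) (ℓ : ℕ) : WithBot ℤ :=
  nthLargestW (M.map (fun z => (z : WithBot ℤ))) ℓ

-- The multiset of values of `g` on the finite set `L` (junk value `0` if `L` is infinite).
open Classical in
noncomputable def valsOf {n : ℕ} (L : Set (Fin n → ℤ)) (g : (Fin n → ℤ) → ℤ) : Multiset ℤ :=
  if h : L.Finite then h.toFinset.val.map g else 0

/-- A function from the positive integers to `ℤ ∪ {-∞}` is eventually quasi-polynomial. -/
def IsEQP (g : ℕ → WithBot ℤ) : Prop :=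
  ∃ d : ℕ, 0 < d ∧ ∃ P : ℕ → Option (Polynomial ℝ),
    ∀ᶠ t : ℕ in Filter.atTop,
      (g t).map (fun z : ℤ => (z : ℝ)) =
        ((P (t % d)).map (fun p => ((p.eval (t : ℝ) : ℝ) : WithBot ℝ))).getD ⊥

/-- Evaluation of an integer polynomial at a positive integer, as an integer. -/
def evZ (p : Polynomial ℤ) (t : ℕ) : ℤ := p.eval (t : ℤ)

/-- Evaluation of an integer polynomial at a positive integer, as a real number. -/
def evR (p : Polynomial ℤ) (t : ℕ) : ℝ := ((p.eval (t : ℤ) : ℤ) : ℝ)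

/-- The value at `t` of one branch of a quasi-polynomial: a polynomial, or `-∞` for `none`. -/
noncomputable def branchEval (p : Option (Polynomial ℝ)) (t : ℕ) : WithBot ℝ :=
  (p.map (fun p => ((p.eval (t : ℝ) : ℝ) : WithBot ℝ))).getD ⊥

lemma poly_eventually_nonneg_or_neg (h : Polynomial ℝ) :
    (∀ᶠ t : ℕ in Filter.atTop, 0 ≤ h.eval (t : ℝ)) ∨
      (∀ᶠ t : ℕ in Filter.atTop, h.eval (t : ℝ) < 0) := by
  have hc := tendsto_natCast_atTop_atTop (R := ℝ)
  by_cases hd : 0 < h.degree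
  · rcases le_total 0 h.leadingCoeff with hl | hl
    · exact Or.inl
        (((h.tendsto_atTop_of_leadingCoeff_nonneg hd hl).comp hc).eventually_ge_atTop 0)
    · exact Or.inr
        (((h.tendsto_atBot_of_leadingCoeff_nonpos hd hl).comp hc).eventually_lt_atBot 0)
  · rw [Polynomial.eq_C_of_degree_le_zero (not_lt.mp hd)]
    simp only [Polynomial.eval_C]
    rcases le_or_gt 0 (h.coeff 0) with h0 | h0
    · exact Or.inl (.of_forall fun _ => h0)
    · exact Or.inr (.of_forall fun _ => h0)

lemma eventually_le_or_eventually_not_le (p q : Option (Polynomial ℝ)) :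
    (∀ᶠ t : ℕ in Filter.atTop, branchEval p t ≤ branchEval q t) ∨
      (∀ᶠ t : ℕ in Filter.atTop, ¬ branchEval p t ≤ branchEval q t) := by
  rcases p with _ | p
  · exact Or.inl (.of_forall fun _ => by simp [branchEval])
  rcases q with _ | q
  · exact Or.inr (.of_forall fun _ => by simp [branchEval])
  · simpa [branchEval] using poly_eventually_nonneg_or_neg (q - p)

lemma exists_perm_eventually_monotone {m : ℕ} (p : Fin m → Option (Polynomial ℝ)) :
    ∃ σ : Equiv.Perm (Fin m), ∀ᶠ t : ℕ in Filter.atTop,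
      Monotone fun k => branchEval (p (σ k)) t := by
  have key : ∀ᶠ t : ℕ in Filter.atTop, ∀ i j, branchEval (p i) t ≤ branchEval (p j) t ↔
      ∀ᶠ s : ℕ in Filter.atTop, branchEval (p i) s ≤ branchEval (p j) s := by
    refine Filter.eventually_all.2 fun i => Filter.eventually_all.2 fun j => ?_
    rcases eventually_le_or_eventually_not_le (p i) (p j) with h | h
    · filter_upwards [h] with t ht using by simp only [ht, h]
    · have hn : ¬ ∀ᶠ s : ℕ in Filter.atTop, branchEval (p i) s ≤ branchEval (p j) s :=
        fun h' => (h.and h').exists.elim fun _ hs => hs.1 hs.2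
      filter_upwards [h] with t ht using by simp only [ht, hn]
  -- A permutation sorting the values at one large `t₀` sorts them at every large `t`.
  obtain ⟨t₀, ht₀⟩ := key.exists
  refine ⟨Tuple.sort fun i => branchEval (p i) t₀, ?_⟩
  filter_upwards [key] with t ht a b hab
  exact (ht _ _).2 ((ht₀ _ _).1 (Tuple.monotone_sort (fun i => branchEval (p i) t₀) hab))

lemma nthLargestW_of_monotone {m ℓ : ℕ} (hℓ : 0 < ℓ) (v : Fin m → WithBot ℤ)
    (σ : Equiv.Perm (Fin m)) (hσ : Monotone (v ∘ σ)) :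
    nthLargestW ((Finset.univ : Finset (Fin m)).val.map v) ℓ =
      if h : ℓ ≤ m then v (σ ⟨m - ℓ, by lia⟩) else ⊥ := by
  have hM : (Finset.univ : Finset (Fin m)).val.map v = (List.ofFn (v ∘ σ) : Multiset _) := by
    rw [Fin.univ_val_map, Multiset.coe_eq_coe]
    exact (Equiv.Perm.ofFn_comp_perm σ v).symm
  have hs : ((List.ofFn (v ∘ σ) : Multiset _)).sort (· ≤ ·) = List.ofFn (v ∘ σ) := by
    rw [Multiset.coe_sort]
    exact List.mergeSort_eq_self _ (by simpa using hσ.sortedLE_ofFn.pairwise)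
  rw [nthLargestW, hM, hs]
  split_ifs with h
  · rw [List.getElem?_reverse (by simp; lia)]
    have h1 : m - 1 - (ℓ - 1) = m - ℓ := by lia
    have h2 : m - ℓ < m := by lia
    simp [h1, h2]
  · rw [List.getElem?_eq_none (by simp; lia)]
    rfl

/-- If `f₁, …, f_m` are eventually quasi-polynomial functions from the positive integers
to `ℤ ∪ {-∞}`, then so is the function giving, at each `t`, the ℓth largest value with
multiplicity among `f₁(t), …, f_m(t)`. -/
theorem nthLargest_of_EQPs_is_EQP (m ℓ : ℕ) (hm : 0 < m) (hℓ : 0 < ℓ)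
    (f : Fin m → ℕ → WithBot ℤ) (hf : ∀ i, IsEQP (f i)) :
    IsEQP (fun t : ℕ =>
      nthLargestW ((Finset.univ : Finset (Fin m)).val.map fun i => f i t) ℓ) := by
  choose d hd P hP using hf
  change ∀ i, ∀ᶠ t : ℕ in Filter.atTop,
    (f i t).map (fun z : ℤ => (z : ℝ)) = branchEval (P i (t % d i)) t at hP
  choose σ hσ using fun r : ℕ => exists_perm_eventually_monotone fun i => P i (r % d i)
  have hD : 0 < ∏ i, d i := Finset.prod_pos fun i _ => hd i
  refine ⟨∏ i, d i, hD, fun r => if h : ℓ ≤ m then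
    P (σ r ⟨m - ℓ, by lia⟩) (r % d (σ r ⟨m - ℓ, by lia⟩)) else none, ?_⟩
  have hall := (Filter.eventually_all_finset (Finset.range (∏ i, d i))).2 fun r _ => hσ r
  filter_upwards [hall, Filter.eventually_all.2 hP] with t hmono hval
  have hmod (i : Fin m) : t % (∏ i, d i) % d i = t % d i :=
    Nat.mod_mod_of_dvd _ (Finset.dvd_prod_of_mem d (Finset.mem_univ i))
  have hmono' := hmono _ (Finset.mem_range.2 (Nat.mod_lt t hD))
  simp only [hmod, ← hval] at hmono'
  have hcast : StrictMono fun z : ℤ => (z : ℝ) := Int.cast_strictMono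
  -- The comparisons of real values are those of the integer values.
  rw [nthLargestW_of_monotone hℓ (fun i => f i t) (σ (t % ∏ i, d i))
    fun a b hab => (WithBot.map_le_iff _ hcast.le_iff_le).1 (hmono' hab)]
  split_ifs with h
  · simp only [hmod]
    exact hval _
  · rfl
end

section
/- Let n and m be positive integers, let c ∈ (ℤ[t])^n, let A ∈ ℤ^{m×n} be a constant integer matrix with no zero row, and let b ∈ (ℤ[t])^m with entries of degree at most 1. For each positive integer t let R(t) = {x ∈ ℝ^n : Ax ≤ b(t)} (coordinatewise), assume R(t) is bounded for every t, and let L(t) = R(t) ∩ ℤ^n. For each row i let H_i(t) = {y ∈ ℝ^n : (Ay)_i = b_i(t)} be the ith bounding hyperplane of R(t). For positive integers ℓ and t, let f_ℓ(t) be the ℓth largest value with multiplicity of {c(t)ᵀx : x ∈ L(t)}. Then for all positive integers t and ℓ, f_ℓ(t) equals the ℓth largest value with multiplicity of {c(t)ᵀx : x ∈ L(t) and the Euclidean distance from x to H_i(t) is less than ℓ for some row i}. -/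
theorem le_getElem?_getD_iff {v : WithBot ℤ} (hv : v ≠ ⊥) (l : List (WithBot ℤ))
    (hl : l.Pairwise (fun a b => b ≤ a)) (k : ℕ) :
    v ≤ (l[k]?).getD ⊥ ↔ k < l.countP (fun a => decide (v ≤ a)) := by
  induction l generalizing k with
  | nil => simpa using hv
  | cons a l ih =>
    rw [List.pairwise_cons] at hl
    by_cases hva : v ≤ a
    · cases k with
      | zero => simp [hva]
      | succ k => simpa [hva] using ih hl.2 k
    · have h0 : l.countP (fun a => decide (v ≤ a)) = 0 := by
        rw [List.countP_eq_zero]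
        intro b hb
        have := hl.1 b hb
        simpa using lt_of_le_of_lt this (not_le.mp hva)
      cases k with
      | zero => simp [hva, h0]
      | succ k =>
        have := ih hl.2 k
        simp [h0, hva] at this ⊢
        exact this

theorem le_nthLargest_iff {α : Type*} (S : Finset α) (g : α → ℤ) {ℓ : ℕ} (hℓ : 0 < ℓ) (v : ℤ) :
    (v : WithBot ℤ) ≤ nthLargest (S.val.map g) ℓ ↔ ℓ ≤ (S.filter (fun x => v ≤ g x)).card := by
  unfold nthLargest nthLargestW
  rw [le_getElem?_getD_iff WithBot.coe_ne_bot]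
  · rw [List.countP_reverse, ← Multiset.coe_countP, Multiset.sort_eq]
    -- The coercion inside `nthLargest` elaborates to a monadic bind on multisets.
    simp only [Multiset.bind_def, Multiset.pure_def, Multiset.bind_singleton]
    rw [Multiset.map_map, Multiset.map_map, Multiset.countP_map]
    simp only [Function.comp, WithBot.coe_le_coe]
    change _ < (S.filter (fun x => v ≤ g x)).card ↔ _
    omega
  · rw [List.pairwise_reverse]
    exact Multiset.pairwise_sort _ _

/-- Passing to a subset `S` of `T` keeps the `ℓ`th largest value of `g` if every discarded
element is dominated by at least `ℓ` elements of `S`. -/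
theorem nthLargest_map_eq {α : Type*} (S T : Finset α) (hST : S ⊆ T) (g : α → ℤ) {ℓ : ℕ}
    (hℓ : 0 < ℓ)
    (h : ∀ x ∈ T, x ∉ S → ℓ ≤ (S.filter (fun y => g x ≤ g y)).card) :
    nthLargest (T.val.map g) ℓ = nthLargest (S.val.map g) ℓ := by
  refine eq_of_forall_le_iff fun v => ?_
  induction v with
  | bot => simp
  | coe v =>
    rw [le_nthLargest_iff T g hℓ, le_nthLargest_iff S g hℓ]
    constructor
    · intro hT
      by_cases hx : ∃ x ∈ T, x ∉ S ∧ v ≤ g x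
      · obtain ⟨x, hxT, hxS, hvx⟩ := hx
        refine (h x hxT hxS).trans (Finset.card_le_card ?_)
        exact Finset.monotone_filter_right _ fun y _ hy => hvx.trans hy
      · push Not at hx
        refine hT.trans (Finset.card_le_card fun x hxm => ?_)
        rw [Finset.mem_filter] at hxm ⊢
        refine ⟨?_, hxm.2⟩
        by_contra hxS
        exact absurd hxm.2 (not_le.mpr (hx x hxm.1 hxS))
    · intro hS
      exact hS.trans (Finset.card_le_card (Finset.filter_subset_filter _ hST))

/-- If the half-space `a · x ≤ β` contains `x` but not `x + kε e_j` with `ε = ±1`, then the segment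
between them meets the hyperplane `a · y = β` at distance less than `k` from `x`. -/
theorem exists_hyperplane_point {n : ℕ} (a x : Fin n → ℤ) (β : ℤ) (j : Fin n) (ε : ℤ)
    (hε : ε ^ 2 = 1) (k : ℕ) (h0 : ∑ i, a i * x i ≤ β)
    (h1 : β < ∑ i, a i * (x i + k * (Pi.single j ε : Fin n → ℤ) i)) :
    ∃ y : Fin n → ℝ, ∑ i, (a i : ℝ) * y i = (β : ℝ) ∧
      Real.sqrt (∑ i, ((x i : ℝ) - y i) ^ 2) < (k : ℝ) := by
  have e1 : ∑ i, a i * (x i + k * (Pi.single j ε : Fin n → ℤ) i) = ∑ i, a i * x i + k * (a j * ε) := by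
    simp only [mul_add, Finset.sum_add_distrib]
    congr 1
    rw [Finset.sum_eq_single j]
    · simp; ring
    · intro i _ hi; simp [hi]
    · simp
  rw [e1] at h1
  set P := ∑ i, a i * x i with hP
  have hkd : 0 < (k : ℤ) * (a j * ε) := by linarith
  have hd : 0 < a j * ε := pos_of_mul_pos_right hkd (by positivity)
  have hdR : (0 : ℝ) < (a j : ℝ) * ε := by exact_mod_cast hd
  have h0R : (P : ℝ) ≤ β := by exact_mod_cast h0
  have h1R : (β : ℝ) < P + k * (a j * ε) := by exact_mod_cast h1
  have hPR : (P : ℝ) = ∑ i, (a i : ℝ) * x i := by rw [hP]; push_cast; rfl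
  have hεR : (ε : ℝ) ^ 2 = 1 := by exact_mod_cast hε
  set s : ℝ := (β - P) / (a j * ε) with hs
  have hs0 : 0 ≤ s := div_nonneg (by linarith) hdR.le
  have hsk : s < k := by rw [hs, div_lt_iff₀ hdR]; linarith
  refine ⟨fun i => x i + s * (Pi.single j (ε : ℝ) : Fin n → ℝ) i, ?_, ?_⟩
  · simp only [mul_add, Finset.sum_add_distrib]
    rw [← hPR, Finset.sum_eq_single j]
    · have : s * (a j * ε) = β - P := by rw [hs]; exact div_mul_cancel₀ _ hdR.ne'
      simp only [Pi.single_eq_same]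
      linarith
    · intro i _ hi; simp [hi]
    · simp
  · have : ∑ i, ((x i : ℝ) - (x i + s * (Pi.single j (ε : ℝ) : Fin n → ℝ) i)) ^ 2 = s ^ 2 := by
      rw [Finset.sum_eq_single j]
      · simp only [Pi.single_eq_same]
        linear_combination s ^ 2 * hεR
      · intro i _ hi; simp [hi]
      · simp
    rw [this, Real.sqrt_sq hs0]
    exact hsk

theorem finite_lattice_points {n m : ℕ} (A : Matrix (Fin m) (Fin n) ℤ) (β : Fin m → ℤ)
    (hbdd : Bornology.IsBounded
      {x : Fin n → ℝ | ∀ i, ∑ j, (A i j : ℝ) * x j ≤ (β i : ℝ)}) :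
    {x : Fin n → ℤ | ∀ i, ∑ j, A i j * x j ≤ β i}.Finite := by
  obtain ⟨C, hC⟩ := hbdd.subset_closedBall 0
  refine (Set.finite_Icc (fun _ => -⌈C⌉ : Fin n → ℤ) (fun _ => ⌈C⌉)).subset fun x hx => ?_
  have hmem : (fun j => (x j : ℝ)) ∈ Metric.closedBall (0 : Fin n → ℝ) C := by
    refine hC fun i => ?_
    exact_mod_cast hx i
  rw [mem_closedBall_zero_iff] at hmem
  have key : ∀ j, |x j| ≤ ⌈C⌉ := fun j => by
    have h1 : |(x j : ℝ)| ≤ C := (norm_le_pi_norm (fun j => (x j : ℝ)) j).trans hmem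
    have h2 : ((|x j| : ℤ) : ℝ) ≤ (⌈C⌉ : ℤ) := by
      push_cast
      exact h1.trans (Int.le_ceil C)
    exact_mod_cast h2
  exact ⟨fun j => (abs_le.mp (key j)).1, fun j => (abs_le.mp (key j)).2⟩

/-- A lattice point at distance at least `ℓ` from all bounding hyperplanes is dominated by `ℓ`
lattice points at distance less than `ℓ` from one of them. -/
theorem many_near_points {n m : ℕ} (hn : 0 < n) (A : Matrix (Fin m) (Fin n) ℤ) (β : Fin m → ℤ)
    (γ : Fin n → ℤ) (hfin : {x : Fin n → ℤ | ∀ i, ∑ j, A i j * x j ≤ β i}.Finite)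
    (ℓ : ℕ) (S : Finset (Fin n → ℤ))
    (hS : ∀ x, x ∈ S ↔ (∀ i, ∑ j, A i j * x j ≤ β i) ∧
            ∃ i, ∃ y : Fin n → ℝ, (∑ j, (A i j : ℝ) * y j = (β i : ℝ)) ∧
              Real.sqrt (∑ j, ((x j : ℝ) - y j) ^ 2) < (ℓ : ℝ))
    (x : Fin n → ℤ) (hx : ∀ i, ∑ j, A i j * x j ≤ β i) (hxS : x ∉ S) :
    ℓ ≤ (S.filter (fun y => ∑ j, γ j * x j ≤ ∑ j, γ j * y j)).card := by
  classical
  let j₀ : Fin n := ⟨0, hn⟩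
  obtain ⟨ε, hε, hγ⟩ : ∃ ε : ℤ, ε ^ 2 = 1 ∧ 0 ≤ γ j₀ * ε := by
    rcases le_total 0 (γ j₀) with h | h
    · exact ⟨1, by norm_num, by linarith⟩
    · exact ⟨-1, by norm_num, by linarith⟩
  have hε0 : ε ≠ 0 := by rintro rfl; norm_num at hε
  let p : ℕ → Fin n → ℤ := fun k i => x i + k * (Pi.single j₀ ε : Fin n → ℤ) i
  have hpinj : Function.Injective p := fun k k' h => by
    have := congrFun h j₀
    simpa [p, hε0] using this
  have hpadd : ∀ k r : ℕ, p (k + r) = fun i => p k i + r * (Pi.single j₀ ε : Fin n → ℤ) i := fun k r => by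
    funext i
    simp only [p]
    push_cast
    ring
  have hexit : ∃ k, ¬ ∀ i, ∑ j, A i j * p k j ≤ β i := by
    by_contra! hall
    refine Set.infinite_range_of_injective hpinj (hfin.subset ?_)
    rintro _ ⟨k, rfl⟩
    exact hall k
  obtain ⟨K, hK0, hmin⟩ : ∃ K, (¬ ∀ i, ∑ j, A i j * p K j ≤ β i) ∧
      ∀ k < K, ¬ ¬ ∀ i, ∑ j, A i j * p k j ≤ β i :=
    ⟨Nat.find hexit, Nat.find_spec hexit, fun _ hk => Nat.find_min hexit hk⟩
  obtain ⟨i₀, hi₀⟩ : ∃ i, β i < ∑ j, A i j * p K j := by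
    push Not at hK0
    exact hK0
  have hin : ∀ k < K, ∀ i, ∑ j, A i j * p k j ≤ β i := fun k hk =>
    not_not.mp (hmin k hk)
  have hK : ℓ < K := by
    by_contra! hle
    obtain ⟨y, hy, hd⟩ := exists_hyperplane_point (A i₀) x (β i₀) j₀ ε hε K (hx i₀) hi₀
    exact hxS ((hS x).2 ⟨hx, i₀, y, hy, hd.trans_le (by exact_mod_cast hle)⟩)
  have hsub : (Finset.range ℓ).image (fun r => p (K - 1 - r)) ⊆
      S.filter (fun y => ∑ j, γ j * x j ≤ ∑ j, γ j * y j) := by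
    intro q hq
    obtain ⟨r, hr, rfl⟩ := Finset.mem_image.mp hq
    rw [Finset.mem_range] at hr
    have hmem := hin (K - 1 - r) (by omega)
    rw [Finset.mem_filter, hS]
    refine ⟨⟨hmem, i₀, ?_⟩, ?_⟩
    · have hKr : K = (K - 1 - r) + (r + 1) := by omega
      rw [hKr, hpadd] at hi₀
      obtain ⟨y, hy, hd⟩ := exists_hyperplane_point (A i₀) _ (β i₀) j₀ ε hε (r + 1) (hmem i₀) hi₀
      exact ⟨y, hy, hd.trans_le (by exact_mod_cast hr)⟩
    · refine Finset.sum_le_sum fun j _ => ?_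
      simp only [p]
      by_cases hj : j = j₀
      · subst hj
        have : 0 ≤ ((K - 1 - r : ℕ) : ℤ) * (γ j₀ * ε) := by positivity
        simp only [Pi.single_eq_same]
        linarith
      · simp [hj]
  have hcard : ((Finset.range ℓ).image (fun r => p (K - 1 - r))).card = ℓ := by
    rw [Finset.card_image_of_injOn, Finset.card_range]
    intro r hr r' hr' h
    have h1 := hpinj h
    simp only [Finset.coe_range, Set.mem_Iio] at hr hr'
    omega
  rw [← hcard]
  exact Finset.card_le_card hsub

/-- For a bounded program `{x | Ax ≤ b(t)}` with constant integer matrix `A` having no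
zero row and right-hand sides of degree at most 1, the ℓth largest value of the objective
over all lattice points equals the ℓth largest value over only those lattice points at
Euclidean distance less than ℓ from some bounding hyperplane `H_i(t) = {y | (Ay)_i = b_i(t)}`. -/
theorem nthLargest_near_boundary (n m : ℕ) (hn : 0 < n) (hm : 0 < m)
    (c : Fin n → Polynomial ℤ) (A : Matrix (Fin m) (Fin n) ℤ)
    (hA : ∀ i, ∃ j, A i j ≠ 0)
    (b : Fin m → Polynomial ℤ) (hb : ∀ i, (b i).degree ≤ 1)
    (hbdd : ∀ t : ℕ, 0 < t → Bornology.IsBounded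
      {x : Fin n → ℝ | ∀ i, ∑ j, (A i j : ℝ) * x j ≤ evR (b i) t}) :
    ∀ t ℓ : ℕ, 0 < t → 0 < ℓ →
      nthLargest
        (valsOf {x : Fin n → ℤ | ∀ i, ∑ j, A i j * x j ≤ evZ (b i) t}
          (fun x => ∑ j, evZ (c j) t * x j)) ℓ =
      nthLargest
        (valsOf {x : Fin n → ℤ | (∀ i, ∑ j, A i j * x j ≤ evZ (b i) t) ∧
            ∃ i, ∃ y : Fin n → ℝ, (∑ j, (A i j : ℝ) * y j = evR (b i) t) ∧
              Real.sqrt (∑ j, ((x j : ℝ) - y j) ^ 2) < (ℓ : ℝ)}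
          (fun x => ∑ j, evZ (c j) t * x j)) ℓ := by
  intro t ℓ ht hℓ
  have hfin := finite_lattice_points A (fun i => evZ (b i) t) (hbdd t ht)
  have hfin' := hfin.subset (fun x (hx : x ∈ {x : Fin n → ℤ |
    (∀ i, ∑ j, A i j * x j ≤ evZ (b i) t) ∧
      ∃ i, ∃ y : Fin n → ℝ, (∑ j, (A i j : ℝ) * y j = evR (b i) t) ∧
        Real.sqrt (∑ j, ((x j : ℝ) - y j) ^ 2) < (ℓ : ℝ)}) => hx.1)
  rw [valsOf, valsOf, dif_pos hfin, dif_pos hfin']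
  refine nthLargest_map_eq _ _ (fun x hx => ?_) _ hℓ fun x hx hxS => ?_
  · rw [Set.Finite.mem_toFinset] at hx ⊢
    exact hx.1
  · rw [Set.Finite.mem_toFinset] at hx
    exact many_near_points hn A (fun i => evZ (b i) t) (fun j => evZ (c j) t) hfin ℓ _
      (fun y => by rw [Set.Finite.mem_toFinset]; rfl) x hx hxS
end

section
/- Let n and m be positive integers, let c ∈ (ℤ[t])^n, let A ∈ ℤ^{m×n} be a constant integer matrix with no zero row, and let b ∈ (ℤ[t])^m with entries of degree at most 1. For each positive integer t let R(t) = {x ∈ ℝ^n : Ax ≤ b(t)} (coordinatewise), assume R(t) is bounded for every t, and let L(t) = R(t) ∩ ℤ^n; let f_ℓ(t) be the ℓth largest value with multiplicity of {c(t)ᵀx : x ∈ L(t)}. Fix a positive integer ℓ₀ and for 1 ≤ i ≤ m set c_i = ⌈ℓ₀·√(Σ_{j=1}^n A_{ij}²)⌉. For 1 ≤ i ≤ m and 0 ≤ k < c_i define L_{i,k}(t) = {x ∈ ℤ^n : Ax ≤ b(t), (Ax)_i = b_i(t) − k, and (Ax)_h ≤ b_h(t) − c_h for all 1 ≤ h <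 i}, and let f_{ℓ,i,k}(t) be the ℓth largest value with multiplicity of {c(t)ᵀx : x ∈ L_{i,k}(t)}. Then for every positive integer t, f_{ℓ₀}(t) equals the ℓ₀th largest value with multiplicity of the multiset {f_{ℓ,i,k}(t) : 1 ≤ ℓ ≤ ℓ₀, 1 ≤ i ≤ m, 0 ≤ k < c_i} of elements of ℤ ∪ {−∞} (with −∞ smaller than every integer). -/
/-- `c_i = ⌈ℓ₀ √(Σ_j A_{ij}²)⌉`. -/
noncomputable def rowCeil {n m : ℕ} (A : Matrix (Fin m) (Fin n) ℤ) (ℓ₀ : ℕ) (i : Fin m) : ℕ :=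
  ⌈(ℓ₀ : ℝ) * Real.sqrt (∑ j, (A i j : ℝ) ^ 2)⌉₊

/-- The lattice point set `L_{i,k}(t)` of the auxiliary program `Q_{i,k}`:
points of `L(t)` on the hyperplane `(Ax)_i = b_i(t) - k` which moreover satisfy
`(Ax)_h ≤ b_h(t) - c_h` for all rows `h < i`. -/
noncomputable def Lik {n m : ℕ} (A : Matrix (Fin m) (Fin n) ℤ) (b : Fin m → Polynomial ℤ)
    (ℓ₀ : ℕ) (t : ℕ) (i : Fin m) (k : ℕ) : Set (Fin n → ℤ) :=
  {x | (∀ h, ∑ j, A h j * x j ≤ evZ (b h) t) ∧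
       (∑ j, A i j * x j = evZ (b i) t - (k : ℤ)) ∧
       ∀ h : Fin m, h < i → ∑ j, A h j * x j ≤ evZ (b h) t - (rowCeil A ℓ₀ h : ℤ)}


/-! ### Order statistics through counting -/

lemma le_getD_iff_countP (v : ℤ) (l : List (WithBot ℤ)) (hl : l.Pairwise (· ≥ ·)) (k : ℕ) :
    (v : WithBot ℤ) ≤ (l[k]?).getD ⊥ ↔ k + 1 ≤ l.countP (fun w => decide ((v : WithBot ℤ) ≤ w)) := by
  induction l generalizing k with
  | nil => simp
  | cons a l ih =>
    rw [List.pairwise_cons] at hl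
    by_cases ha : (v : WithBot ℤ) ≤ a
    · rw [List.countP_cons_of_pos (by simpa using ha)]
      cases k with
      | zero => simp [ha]
      | succ k =>
        rw [List.getElem?_cons_succ, ih hl.2 k]
        omega
    · have h0 : l.countP (fun w => decide ((v : WithBot ℤ) ≤ w)) = 0 := by
        rw [List.countP_eq_zero]
        intro w hw
        have := hl.1 w hw
        simp only [decide_eq_true_eq]
        exact fun h => ha (h.trans this)
      rw [List.countP_cons_of_neg (by simpa using ha), h0]
      cases k with
      | zero => simp [ha]
      | succ k =>
        rw [List.getElem?_cons_succ, ih hl.2 k, h0]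
        omega

/-- An integer `v` is a lower bound for the `ℓ`th largest value iff at least `ℓ` members of the
multiset are `≥ v`. -/
lemma le_nthLargestW_iff (v : ℤ) (M : Multiset (WithBot ℤ)) (ℓ : ℕ) (hℓ : 0 < ℓ) :
    (v : WithBot ℤ) ≤ nthLargestW M ℓ ↔ ℓ ≤ M.countP (fun w => (v : WithBot ℤ) ≤ w) := by
  have hs : ((M.sort (· ≤ ·)).reverse).Pairwise (· ≥ ·) :=
    List.pairwise_reverse.2 (Multiset.pairwise_sort M (· ≤ ·))
  unfold nthLargestW
  rw [le_getD_iff_countP v _ hs, List.countP_reverse, Nat.sub_add_cancel hℓ]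
  conv_rhs => rw [← Multiset.sort_eq M (· ≤ ·)]
  rw [Multiset.coe_countP]

open Classical in
lemma le_nthLargest_valsOf_iff {n : ℕ} (v : ℤ) (L : Set (Fin n → ℤ)) (hL : L.Finite)
    (g : (Fin n → ℤ) → ℤ) (ℓ : ℕ) (hℓ : 0 < ℓ) :
    (v : WithBot ℤ) ≤ nthLargest (valsOf L g) ℓ ↔
      ℓ ≤ (hL.toFinset.filter (fun x => v ≤ g x)).card := by
  unfold nthLargest
  -- The cast of the multiset inside `nthLargest` elaborates to a monadic `do` block.
  have hcast : ∀ M : Multiset ℤ, (do let a ← M; pure (a : WithBot ℤ)) =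
      M.map (fun z : ℤ => (z : WithBot ℤ)) := fun M => by
    simp only [Multiset.bind_def, Multiset.pure_def, Multiset.bind_singleton]
  rw [le_nthLargestW_iff v _ ℓ hℓ, valsOf, dif_pos hL, hcast, Multiset.map_map, Multiset.map_map,
    Multiset.countP_map]
  simp only [Function.comp, WithBot.coe_le_coe]
  rfl

lemma eq_of_forall_int_le_iff (a b : WithBot ℤ)
    (h : ∀ v : ℤ, (v : WithBot ℤ) ≤ a ↔ (v : WithBot ℤ) ≤ b) : a = b := by
  apply le_antisymm
  · induction a using WithBot.recBotCoe with
    | bot => exact bot_le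
    | coe a => exact (h a).1 le_rfl
  · induction b using WithBot.recBotCoe with
    | bot => exact bot_le
    | coe b => exact (h b).2 le_rfl

lemma le_sum_min_iff {ι : Type*} (s : Finset ι) (N : ι → ℕ) (ℓ : ℕ) :
    ℓ ≤ ∑ p ∈ s, min ℓ (N p) ↔ ℓ ≤ ∑ p ∈ s, N p := by
  constructor
  · intro h
    exact h.trans (Finset.sum_le_sum fun p _ => min_le_right _ _)
  · intro h
    by_cases hp : ∃ p ∈ s, ℓ ≤ N p
    · obtain ⟨p, hps, hp⟩ := hp
      calc ℓ = min ℓ (N p) := (min_eq_left hp).symm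
        _ ≤ _ := Finset.single_le_sum (f := fun p => min ℓ (N p)) (fun _ _ => Nat.zero_le _) hps
    · push Not at hp
      rwa [Finset.sum_congr rfl fun p hps => min_eq_right (hp p hps).le]

lemma card_filter_Icc_le (ℓ N : ℕ) : ((Finset.Icc 1 ℓ).filter (fun k => k ≤ N)).card = min ℓ N := by
  have : (Finset.Icc 1 ℓ).filter (fun k => k ≤ N) = Finset.Icc 1 (min ℓ N) := by
    ext k
    simp only [Finset.mem_filter, Finset.mem_Icc, le_min_iff]
    tauto
  simp [this]

/-- Counting in the multiset `{f_{ℓ,p} : 1 ≤ ℓ ≤ ℓ₀}`, where `v ≤ f_{ℓ,p}` iff `ℓ ≤ N_p`: each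
index `p = (i, k)` contributes `min ℓ₀ N_p`. -/
lemma countP_pieces (v : ℤ) (ℓ₀ m : ℕ) (r : Fin m → ℕ) (f : ℕ → Fin m → ℕ → WithBot ℤ)
    (N : Fin m → ℕ → ℕ)
    (hf : ∀ ℓ i k, 0 < ℓ → ((v : WithBot ℤ) ≤ f ℓ i k ↔ ℓ ≤ N i k)) :
    Multiset.countP (fun w => (v : WithBot ℤ) ≤ w)
      ((Finset.Icc 1 ℓ₀).val.bind fun ℓ => (Finset.univ : Finset (Fin m)).val.bind fun i =>
        (Finset.range (r i)).val.map fun k => f ℓ i k) =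
      ∑ i, ∑ k ∈ Finset.range (r i), min ℓ₀ (N i k) := by
  have h1 : ∀ ℓ i, Multiset.countP (fun w => (v : WithBot ℤ) ≤ w)
      ((Finset.range (r i)).val.map fun k => f ℓ i k) =
      ∑ k ∈ Finset.range (r i), if (v : WithBot ℤ) ≤ f ℓ i k then 1 else 0 := by
    intro ℓ i
    rw [Multiset.countP_map, ← Finset.card_filter]
    rfl
  have h2 : ∀ {α : Type} (s : Finset α) (F : α → Multiset (WithBot ℤ)),
      Multiset.countP (fun w => (v : WithBot ℤ) ≤ w) (s.val.bind F) =
      ∑ a ∈ s, Multiset.countP (fun w => (v : WithBot ℤ) ≤ w) (F a) := by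
    intro α s F
    rw [Multiset.countP_eq_card_filter, Multiset.filter_bind, Multiset.card_bind]
    simp only [Multiset.countP_eq_card_filter]
    rfl
  simp only [h2, h1]
  rw [Finset.sum_comm]
  refine Finset.sum_congr rfl fun i _ => ?_
  rw [Finset.sum_comm]
  refine Finset.sum_congr rfl fun k _ => ?_
  rw [← card_filter_Icc_le, Finset.card_filter]
  refine Finset.sum_congr rfl fun ℓ hℓ => ?_
  simp only [hf ℓ i k (Finset.mem_Icc.1 hℓ).1]

/-! ### Lattice points near the boundary -/

/-- The only property of `c_i` that the walk needs. -/
lemma mul_abs_le_rowCeil {n m : ℕ} (A : Matrix (Fin m) (Fin n) ℤ) (ℓ₀ : ℕ) (i : Fin m)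
    (j : Fin n) : (ℓ₀ : ℤ) * |A i j| ≤ (rowCeil A ℓ₀ i : ℤ) := by
  have h1 : |(A i j : ℝ)| ≤ Real.sqrt (∑ j, (A i j : ℝ) ^ 2) := by
    apply Real.abs_le_sqrt
    exact Finset.single_le_sum (f := fun j => (A i j : ℝ) ^ 2) (fun _ _ => sq_nonneg _)
      (Finset.mem_univ j)
  have h2 : (ℓ₀ : ℝ) * |(A i j : ℝ)| ≤ (rowCeil A ℓ₀ i : ℝ) :=
    (mul_le_mul_of_nonneg_left h1 (Nat.cast_nonneg _)).trans (Nat.le_ceil _)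
  exact_mod_cast h2

lemma finite_lattice {n m : ℕ} (A : Matrix (Fin m) (Fin n) ℤ) (β : Fin m → ℤ)
    (h : Bornology.IsBounded {x : Fin n → ℝ | ∀ i, ∑ j, (A i j : ℝ) * x j ≤ (β i : ℝ)}) :
    {x : Fin n → ℤ | ∀ i, ∑ j, A i j * x j ≤ β i}.Finite := by
  obtain ⟨R, hR⟩ := h.exists_norm_le
  refine (Set.finite_Icc (fun _ : Fin n => -⌈R⌉) (fun _ => ⌈R⌉)).subset ?_
  intro x hx
  have hx' := hR (fun j => (x j : ℝ)) (fun i => by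
    have := hx i
    beta_reduce
    exact_mod_cast this)
  have hj : ∀ j, |x j| ≤ ⌈R⌉ := by
    intro j
    have h1 : |(x j : ℝ)| ≤ R := (norm_le_pi_norm (fun j => (x j : ℝ)) j).trans hx'
    have h2 := h1.trans (Int.le_ceil R)
    exact_mod_cast h2
  exact ⟨fun j => (abs_le.1 (hj j)).1, fun j => (abs_le.1 (hj j)).2⟩

/-- If `x` satisfies every constraint with slack at least `r i`, where `ℓ₀ * |A i j| ≤ r i`, then
there are `ℓ₀` feasible points of objective value at least that of `x`, each having slack less than
`r i` in some row. They are the last `ℓ₀` feasible points on the walk from `x` in direction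
`± e_j`. -/
lemma exists_near_boundary {n m : ℕ} (A : Matrix (Fin m) (Fin n) ℤ) (β : Fin m → ℤ) (γ : Fin n → ℤ)
    (r : Fin m → ℕ)
    (ℓ₀ : ℕ) (j₀ : Fin n) (hr : ∀ i, (ℓ₀ : ℤ) * |A i j₀| ≤ r i)
    (hfin : {x : Fin n → ℤ | ∀ i, ∑ j, A i j * x j ≤ β i}.Finite)
    (x : Fin n → ℤ) (hx : ∀ i, ∑ j, A i j * x j ≤ β i - r i) :
    ∃ T : Finset (Fin n → ℤ), T.card = ℓ₀ ∧ ∀ y ∈ T, (∀ i, ∑ j, A i j * y j ≤ β i) ∧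
      (∃ i, β i - r i < ∑ j, A i j * y j) ∧ ∑ j, γ j * x j ≤ ∑ j, γ j * y j := by
  obtain ⟨ε, hε, hγ⟩ : ∃ ε : ℤ, |ε| = 1 ∧ 0 ≤ γ j₀ * ε := by
    rcases le_total 0 (γ j₀) with h | h
    · exact ⟨1, by simp, by simpa⟩
    · exact ⟨-1, by simp, by simpa⟩
  have hε0 : ε ≠ 0 := by rintro rfl; simp at hε
  let y : ℕ → Fin n → ℤ := fun s => x + Pi.single j₀ (ε * s)
  have hdot : ∀ (a : Fin n → ℤ) (s : ℕ),
      ∑ j, a j * y s j = ∑ j, a j * x j + a j₀ * ε * s := by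
    intro a s
    simp only [y, Pi.add_apply, mul_add, Finset.sum_add_distrib]
    congr 1
    rw [Finset.sum_eq_single j₀]
    · simp [mul_assoc]
    · intro j _ hj
      simp [hj]
    · simp
  have hinj : Function.Injective y := by
    intro s s' h
    have := congrFun h j₀
    simpa [y, hε0] using this
  have hexit : ∃ s, ¬ ∀ i, ∑ j, A i j * y s j ≤ β i := by
    by_contra! hc
    exact (Set.infinite_of_injective_forall_mem
      (s := {x : Fin n → ℤ | ∀ i, ∑ j, A i j * x j ≤ β i}) hinj hc) hfin
  classical
  obtain ⟨i, hi⟩ := not_forall.1 (Nat.find_spec hexit)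
  set S := Nat.find hexit with hS
  have hmin : ∀ s < S, ∀ i, ∑ j, A i j * y s j ≤ β i := fun s hs =>
    not_not.1 (Nat.find_min hexit hs)
  have hstep : A i j₀ * ε ≤ |A i j₀| := by
    calc A i j₀ * ε ≤ |A i j₀ * ε| := le_abs_self _
      _ = |A i j₀| := by rw [abs_mul, hε, mul_one]
  have hri := hr i
  have hxi := hx i
  rw [hdot] at hi
  push Not at hi
  have hpos := abs_nonneg (A i j₀)
  -- The whole slack `r i` of row `i` is used up by the first `S` steps.
  have hlS : ℓ₀ ≤ S := by
    by_contra! hlt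
    have h1 : A i j₀ * ε * S ≤ |A i j₀| * S := mul_le_mul_of_nonneg_right hstep (by positivity)
    have h2 : |A i j₀| * S ≤ |A i j₀| * ℓ₀ :=
      mul_le_mul_of_nonneg_left (by exact_mod_cast hlt.le) hpos
    linarith
  refine ⟨(Finset.Ico (S - ℓ₀) S).image y, ?_, ?_⟩
  · rw [Finset.card_image_of_injective _ hinj, Nat.card_Ico]
    omega
  · intro z hz
    obtain ⟨s, hs, rfl⟩ := Finset.mem_image.1 hz
    rw [Finset.mem_Ico] at hs
    refine ⟨hmin s hs.2, ⟨i, ?_⟩, ?_⟩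
    · rw [hdot]
      have h1 : A i j₀ * ε * ((S : ℤ) - s) ≤ |A i j₀| * ((S : ℤ) - s) :=
        mul_le_mul_of_nonneg_right hstep (by have := hs.2; omega)
      have h2 : |A i j₀| * ((S : ℤ) - s) ≤ |A i j₀| * ℓ₀ :=
        mul_le_mul_of_nonneg_left (by have := hs.1; omega) hpos
      linarith
    · rw [hdot]
      have : 0 ≤ γ j₀ * ε * s := mul_nonneg hγ (by positivity)
      linarith

/-! ### Decomposition into hyperplane pieces -/

/-- The pieces `L_{i,k}(t)` are disjoint and their union is the set of points of `L(t)` with slack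
less than `c_i` in some row `i`; here this is counted inside the set `{v ≤ g}`. -/
lemma sum_card_pieces {n m : ℕ} (A : Matrix (Fin m) (Fin n) ℤ) (b : Fin m → Polynomial ℤ)
    (ℓ₀ t : ℕ) (g : (Fin n → ℤ) → ℤ) (v : ℤ)
    (hL : {x : Fin n → ℤ | ∀ i, ∑ j, A i j * x j ≤ evZ (b i) t}.Finite)
    (hLik : ∀ i k, (Lik A b ℓ₀ t i k).Finite) :
    ∑ i, ∑ k ∈ Finset.range (rowCeil A ℓ₀ i), ((hLik i k).toFinset.filter (fun x => v ≤ g x)).card =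
      (hL.toFinset.filter (fun x => v ≤ g x ∧
        ∃ i, evZ (b i) t - rowCeil A ℓ₀ i < ∑ j, A i j * x j)).card := by
  classical
  rw [Finset.sum_sigma', ← Finset.card_biUnion]
  · congr 1
    ext x
    simp only [Finset.mem_biUnion, Finset.mem_sigma, Finset.mem_univ, true_and, Finset.mem_range,
      Finset.mem_filter, Set.Finite.mem_toFinset, Lik, Set.mem_ofPred_eq, Sigma.exists]
    constructor
    · rintro ⟨i, k, hk, ⟨h1, h2, _⟩, hv⟩
      exact ⟨h1, hv, i, by omega⟩
    · rintro ⟨h1, hv, hex⟩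
      -- The piece containing `x` is indexed by the first row with small slack.
      obtain ⟨i, hi, hmin⟩ := WellFounded.has_min (wellFounded_lt (α := Fin m))
        {i | evZ (b i) t - rowCeil A ℓ₀ i < ∑ j, A i j * x j} hex
      simp only [Set.mem_ofPred_eq] at hi hmin
      have := h1 i
      refine ⟨i, (evZ (b i) t - ∑ j, A i j * x j).toNat, by omega, ⟨h1, by omega, ?_⟩, hv⟩
      intro h hh
      by_contra! hc
      exact hmin h hc hh
  · rintro ⟨i, k⟩ hp ⟨i', k'⟩ hp' hne
    simp only [Finset.coe_sigma, Set.mem_sigma_iff, Finset.coe_univ, Set.mem_univ, true_and,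
      Finset.coe_range, Set.mem_Iio] at hp hp'
    refine Finset.disjoint_left.2 fun x hx hx' => hne ?_
    simp only [Finset.mem_filter, Set.Finite.mem_toFinset, Lik, Set.mem_ofPred_eq] at hx hx'
    obtain ⟨⟨_, h2, h3⟩, _⟩ := hx
    obtain ⟨⟨_, h2', h3'⟩, _⟩ := hx'
    rcases lt_trichotomy i i' with h | h | h
    · have := h3' i h
      omega
    · subst h
      obtain rfl : k = k' := by omega
      rfl
    · have := h3 i' h
      omega

/-- `f_{ℓ₀}(t)` equals the ℓ₀th largest value of the multiset
`{f_{ℓ,i,k}(t) : 1 ≤ ℓ ≤ ℓ₀, 1 ≤ i ≤ m, 0 ≤ k < c_i}`. -/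
theorem nthLargest_eq_nthLargest_hyperplane_pieces (n m : ℕ) (hn : 0 < n) (hm : 0 < m)
    (c : Fin n → Polynomial ℤ) (A : Matrix (Fin m) (Fin n) ℤ)
    (hA : ∀ i, ∃ j, A i j ≠ 0)
    (b : Fin m → Polynomial ℤ) (hb : ∀ i, (b i).degree ≤ 1)
    (hbdd : ∀ t : ℕ, 0 < t → Bornology.IsBounded
      {x : Fin n → ℝ | ∀ i, ∑ j, (A i j : ℝ) * x j ≤ evR (b i) t})
    (ℓ₀ : ℕ) (hℓ₀ : 0 < ℓ₀) :
    ∀ t : ℕ, 0 < t →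
      nthLargest
        (valsOf {x : Fin n → ℤ | ∀ i, ∑ j, A i j * x j ≤ evZ (b i) t}
          (fun x => ∑ j, evZ (c j) t * x j)) ℓ₀ =
      nthLargestW
        ((Finset.Icc 1 ℓ₀).val.bind fun ℓ =>
          (Finset.univ : Finset (Fin m)).val.bind fun i =>
            (Finset.range (rowCeil A ℓ₀ i)).val.map fun k =>
              nthLargest (valsOf (Lik A b ℓ₀ t i k) (fun x => ∑ j, evZ (c j) t * x j)) ℓ)
        ℓ₀ := by
  intro t ht
  classical
  have hL := finite_lattice A (fun i => evZ (b i) t) (hbdd t ht)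
  have hLik : ∀ i k, (Lik A b ℓ₀ t i k).Finite := fun i k => hL.subset fun x hx => hx.1
  set g : (Fin n → ℤ) → ℤ := fun x => ∑ j, evZ (c j) t * x j with hg
  refine eq_of_forall_int_le_iff _ _ fun v => ?_
  rw [le_nthLargest_valsOf_iff v _ hL g ℓ₀ hℓ₀, le_nthLargestW_iff v _ ℓ₀ hℓ₀,
    countP_pieces v ℓ₀ m _ (fun ℓ i k => nthLargest (valsOf (Lik A b ℓ₀ t i k) g) ℓ)
      (fun i k => ((hLik i k).toFinset.filter (fun x => v ≤ g x)).card)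
      (fun ℓ i k hℓ => le_nthLargest_valsOf_iff v _ (hLik i k) g ℓ hℓ),
    Finset.sum_sigma', le_sum_min_iff, Finset.sum_sigma, sum_card_pieces A b ℓ₀ t g v hL hLik]
  constructor
  · intro h
    by_cases hin : ∃ x ∈ hL.toFinset, v ≤ g x ∧
        ∀ i, ∑ j, A i j * x j ≤ evZ (b i) t - rowCeil A ℓ₀ i
    · obtain ⟨x, _, hv, hx⟩ := hin
      obtain ⟨T, hT, hTy⟩ := exists_near_boundary A (fun i => evZ (b i) t) (fun j => evZ (c j) t)
        (rowCeil A ℓ₀) ℓ₀ ⟨0, hn⟩ (fun i => mul_abs_le_rowCeil A ℓ₀ i _) hL x hx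
      refine hT.ge.trans (Finset.card_le_card fun y hy => ?_)
      obtain ⟨h1, h2, h3⟩ := hTy y hy
      exact Finset.mem_filter.2 ⟨hL.mem_toFinset.2 h1, hv.trans h3, h2⟩
    · push Not at hin
      refine h.trans (Finset.card_le_card fun x hx => ?_)
      rw [Finset.mem_filter] at hx ⊢
      exact ⟨hx.1, hx.2, hin x hx.1 hx.2⟩
  · intro h
    refine h.trans (Finset.card_le_card fun x hx => ?_)
    rw [Finset.mem_filter] at hx ⊢
    exact ⟨hx.1, hx.2.1⟩
end

section
/- Let n and k be positive integers and for 1 ≤ i ≤ k let v_i ∈ (ℚ(t))^n be a vector of rational functions (each defined at all sufficiently large positive integers t). Assume there is a constant C such that ‖v_i(t)‖ ≤ C·t for all sufficiently large positive integers t and all i. For each positive integer t let R(t) ⊆ ℝ^n be the convex hull of v_1(t), …, v_k(t). Then there exists a positive integer d such that for each residue class r mod d there exist finitely many polynomial vectors w_1, …, w_z ∈ (ℚ[t])^n (with z depending on r, possibly z = 0) such that for all sufficiently large positive integers t ≡ r (mod d), the set of vertices (extreme points) of the convex hull of R(t) ∩ ℤ^n is exactly {w_1(t), …, w_z(t)}.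 -/
/-!
Write `R(t)` for the convex hull of the `v i (t)` and `S(t)` for its lattice points.

*Inequalities.* Signs of polynomials in `t` are eventually constant, so Fourier–Motzkin elimination
of the barycentric coordinates can be carried out uniformly in `t` (`fm`, `hrep`): there is a finite
set `H` of affine forms with coefficients in `ℚ[t]` such that, for all large `t`, a point `x` lies
in `R(t)` iff `aff h t x ≤ 0` for all `h ∈ H`.

*Finitely many candidates.* The key claim (`exists_finset`) is that a fixed finite set `W` of
polynomial vectors contains all vertices for all large `t`. The sets of pairs `(t, x)` whose
complement is covered, for large `t`, by finitely many polynomial vectors form a filter. If the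
claim fails, some ultrafilter `U` on pairs `(t, x)` is finer than it, contains the vertex pairs,
and satisfies `x ≠ w(t)` along `U` for each polynomial vector `w`. Let `L` be the ℚ-space of
`φ ∈ ℚⁿ` for which `φ · x` is a polynomial in `t` along `U`; then `L ≠ ℚⁿ`, so some integer vector
`u ≠ 0` is annihilated by `L`. A vertex `x` cannot have both `x + u` and `x - u` in `R(t)`, so
along `U` some form `h ∈ H` with coefficient vector `α(t)` has slack less than `|α(t) · u|`, that
is, slack `O(t ^ m)` with `m` the degree of `α(t) · u`. Now peel off coefficients of `α` from the
top (`coeff_mem`): if `M ≥ m` is the top degree, dividing by `t ^ M` and using `x = O(t)` gives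
`α_M · x = (polynomial in t) + O(1)`. The bounded difference has bounded denominator, so it is
constant along `U` and `α_M ∈ L`. Repeating, `α_i ∈ L` for all `i ≥ m`; hence `α_m · u = 0`,
contradicting the choice of `m`.

*Selecting the vertices.* For `w ∈ W`, the point `w(t)` is a vertex iff it lies in `S(t)` and not
in the convex hull of the other points of `W(t) ∩ S(t)`. Integrality of `w(t)` is periodic in `t`,
and all other conditions involved are eventually constant by `hrep`. So being a vertex is eventually
periodic in `t` (`EP`) for each of the finitely many `w ∈ W`, and a common period is the required
modulus.
-/

namespace IntHull

open Polynomial Filter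

/-! ### Evaluation of polynomials at natural numbers -/

/-- The value at `t : ℕ` of a rational polynomial, as a real number. -/
noncomputable def ev (p : ℚ[X]) (t : ℕ) : ℝ := ((p.eval (t : ℚ) : ℚ) : ℝ)

@[simp] lemma ev_add (p q : ℚ[X]) (t : ℕ) : ev (p + q) t = ev p t + ev q t := by simp [ev]
@[simp] lemma ev_sub (p q : ℚ[X]) (t : ℕ) : ev (p - q) t = ev p t - ev q t := by simp [ev]
@[simp] lemma ev_mul (p q : ℚ[X]) (t : ℕ) : ev (p * q) t = ev p t * ev q t := by simp [ev]
@[simp] lemma ev_neg (p : ℚ[X]) (t : ℕ) : ev (-p) t = -ev p t := by simp [ev]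
@[simp] lemma ev_zero (t : ℕ) : ev 0 t = 0 := by simp [ev]
@[simp] lemma ev_one (t : ℕ) : ev 1 t = 1 := by simp [ev]
@[simp] lemma ev_C (a : ℚ) (t : ℕ) : ev (C a) t = a := by simp [ev]
@[simp] lemma ev_X (t : ℕ) : ev X t = t := by simp [ev]
@[simp] lemma ev_pow (p : ℚ[X]) (m t : ℕ) : ev (p ^ m) t = ev p t ^ m := by simp [ev]
lemma ev_sum {ι : Type*} (s : Finset ι) (f : ι → ℚ[X]) (t : ℕ) :
    ev (∑ i ∈ s, f i) t = ∑ i ∈ s, ev (f i) t := by simp [ev, eval_finsetSum]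

lemma ev_pos {p : ℚ[X]} (h : 0 < p.leadingCoeff) : ∀ᶠ t : ℕ in atTop, 0 < ev p t := by
  rcases Nat.eq_zero_or_pos p.natDegree with h0 | h0
  · rw [eq_C_of_natDegree_eq_zero h0] at h ⊢
    simp only [leadingCoeff_C] at h
    exact Eventually.of_forall fun t => by simpa using h
  · have := (p.tendsto_atTop_of_leadingCoeff_nonneg (natDegree_pos_iff_degree_pos.1 h0) h.le).comp
      (tendsto_natCast_atTop_atTop (R := ℚ))
    filter_upwards [this.eventually_gt_atTop 0] with t ht
    simpa [ev] using ht

lemma ev_lt_zero {p : ℚ[X]} (h : p.leadingCoeff < 0) : ∀ᶠ t : ℕ in atTop, ev p t < 0 := by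
  have : 0 < (-p).leadingCoeff := by simpa using h
  filter_upwards [ev_pos this] with t ht
  simpa using ht

/-! ### Fourier–Motzkin elimination, uniformly in `t` -/

/-- Fourier–Motzkin elimination of one real variable. -/
lemma fm_real {ι : Type*} (s : Finset ι) (a r : ι → ℝ) :
    (∃ y, ∀ i ∈ s, a i * y + r i ≤ 0) ↔
      (∀ i ∈ s, a i = 0 → r i ≤ 0) ∧
        ∀ i ∈ s, ∀ j ∈ s, 0 < a i → a j < 0 → a i * r j - a j * r i ≤ 0 := by
  classical
  constructor
  · rintro ⟨y, hy⟩
    refine ⟨fun i hi h0 => by simpa [h0] using hy i hi, fun i hi j hj hp hn => ?_⟩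
    nlinarith [mul_le_mul_of_nonneg_left (hy j hj) hp.le,
      mul_le_mul_of_nonneg_left (hy i hi) (neg_pos.2 hn).le]
  · rintro ⟨h0, h1⟩
    have key : ∃ y, (∀ i ∈ s, 0 < a i → y ≤ - r i / a i) ∧ ∀ j ∈ s, a j < 0 → - r j / a j ≤ y := by
      by_cases hn : (s.filter fun j => a j < 0).Nonempty
      · obtain ⟨j, hj, hmax⟩ := Finset.exists_max_image _ (fun j => - r j / a j) hn
        simp only [Finset.mem_filter, and_imp] at hj hmax
        refine ⟨- r j / a j, fun i hi hp => ?_, hmax⟩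
        rw [le_div_iff₀ hp, div_mul_eq_mul_div, div_le_iff_of_neg hj.2]
        linarith [h1 i hi j hj.1 hp hj.2]
      · have hn' : ∀ j ∈ s, ¬ a j < 0 := by simpa [Finset.filter_eq_empty_iff] using hn
        by_cases hp : (s.filter fun j => 0 < a j).Nonempty
        · obtain ⟨j, hj, hmin⟩ := Finset.exists_min_image _ (fun j => - r j / a j) hp
          simp only [Finset.mem_filter, and_imp] at hj hmin
          exact ⟨_, hmin, fun i hi h => (hn' i hi h).elim⟩
        · have hp' : ∀ j ∈ s, ¬ 0 < a j := by simpa [Finset.filter_eq_empty_iff] using hp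
          exact ⟨0, fun i hi h => (hp' i hi h).elim, fun i hi h => (hn' i hi h).elim⟩
    obtain ⟨y, hy1, hy2⟩ := key
    refine ⟨y, fun i hi => ?_⟩
    rcases lt_trichotomy (a i) 0 with h | h | h
    · have := hy2 i hi h
      rw [div_le_iff_of_neg h] at this
      linarith
    · simpa [h] using h0 i hi h
    · have := hy1 i hi h
      rw [le_div_iff₀ h] at this
      linarith

/-- The linear form with coefficient vector `h(t)`, evaluated at `p`. -/
noncomputable def pair {κ : Type*} [Fintype κ] (h : κ → ℚ[X]) (t : ℕ) (p : κ → ℝ) : ℝ :=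
  ∑ c, ev (h c) t * p c

lemma pair_update {κ : Type*} [Fintype κ] [DecidableEq κ] (h : κ → ℚ[X]) (t : ℕ) (p : κ → ℝ)
    (j : κ) (y : ℝ) :
    pair h t (Function.update p j y) = ev (h j) t * y + (pair h t p - ev (h j) t * p j) := by
  unfold pair
  rw [← Finset.add_sum_erase _ _ (Finset.mem_univ j),
    ← Finset.add_sum_erase _ (fun c => ev (h c) t * p c) (Finset.mem_univ j)]
  have : ∑ x ∈ Finset.univ.erase j, ev (h x) t * Function.update p j y x
      = ∑ x ∈ Finset.univ.erase j, ev (h x) t * p x :=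
    Finset.sum_congr rfl fun x hx => by rw [Function.update_of_ne (Finset.ne_of_mem_erase hx)]
  rw [this]; simp

/-- Elimination of the coordinate `j`. The right-hand system is again over `κ`; its forms do not
involve the coordinate `j` (at large `t`), although this is not recorded. -/
lemma fm_step {κ : Type*} [Fintype κ] [DecidableEq κ] (H : Finset (κ → ℚ[X])) (j : κ) :
    ∃ H' : Finset (κ → ℚ[X]), ∀ᶠ t : ℕ in atTop, ∀ p : κ → ℝ,
      (∃ y, ∀ h ∈ H, pair h t (Function.update p j y) ≤ 0) ↔ ∀ h ∈ H', pair h t p ≤ 0 := by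
  classical
  refine ⟨(H.filter fun h => h j = 0) ∪
    Finset.image₂ (fun f g c => f j * g c - g j * f c)
      (H.filter fun h => 0 < (h j).leadingCoeff) (H.filter fun h => (h j).leadingCoeff < 0), ?_⟩
  have h1 : ∀ᶠ t : ℕ in atTop, ∀ h ∈ H, 0 < (h j).leadingCoeff → 0 < ev (h j) t :=
    (Filter.eventually_all_finset H).2 fun h _ => by
      by_cases hh : 0 < (h j).leadingCoeff
      · filter_upwards [ev_pos hh] with t ht _ using ht
      · exact Eventually.of_forall fun t h => (hh h).elim
  have h2 : ∀ᶠ t : ℕ in atTop, ∀ h ∈ H, (h j).leadingCoeff < 0 → ev (h j) t < 0 :=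
    (Filter.eventually_all_finset H).2 fun h _ => by
      by_cases hh : (h j).leadingCoeff < 0
      · filter_upwards [ev_lt_zero hh] with t ht _ using ht
      · exact Eventually.of_forall fun t h => (hh h).elim
  filter_upwards [h1, h2] with t h1 h2 p
  have s0 : ∀ h ∈ H, (ev (h j) t = 0 ↔ h j = 0) := fun h hh => by
    refine ⟨fun h0 => ?_, fun h0 => by simp [h0]⟩
    rcases lt_trichotomy (h j).leadingCoeff 0 with h3 | h3 | h3
    · exact absurd h0 (h2 h hh h3).ne
    · exact leadingCoeff_eq_zero.1 h3
    · exact absurd h0 (h1 h hh h3).ne'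
  have s1 : ∀ h ∈ H, (0 < ev (h j) t ↔ 0 < (h j).leadingCoeff) := fun h hh => by
    refine ⟨fun h0 => ?_, h1 h hh⟩
    rcases lt_trichotomy (h j).leadingCoeff 0 with h3 | h3 | h3
    · exact absurd h0 (h2 h hh h3).not_gt
    · rw [(s0 h hh).2 (leadingCoeff_eq_zero.1 h3)] at h0; exact absurd h0 (lt_irrefl _)
    · exact h3
  have s2 : ∀ h ∈ H, (ev (h j) t < 0 ↔ (h j).leadingCoeff < 0) := fun h hh => by
    refine ⟨fun h0 => ?_, h2 h hh⟩
    rcases lt_trichotomy (h j).leadingCoeff 0 with h3 | h3 | h3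
    · exact h3
    · rw [(s0 h hh).2 (leadingCoeff_eq_zero.1 h3)] at h0; exact absurd h0 (lt_irrefl _)
    · exact absurd h0 (h1 h hh h3).not_gt
  simp only [pair_update]
  rw [fm_real H (fun h => ev (h j) t) (fun h => pair h t p - ev (h j) t * p j)]
  have pc : ∀ f g : κ → ℚ[X], pair (fun c => f j * g c - g j * f c) t p
      = ev (f j) t * (pair g t p - ev (g j) t * p j)
        - ev (g j) t * (pair f t p - ev (f j) t * p j) := by
    intro f g
    have : pair (fun c => f j * g c - g j * f c) t p
        = ev (f j) t * pair g t p - ev (g j) t * pair f t p := by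
      simp only [pair, ev_sub, ev_mul, Finset.mul_sum, ← Finset.sum_sub_distrib]
      exact Finset.sum_congr rfl fun c _ => by ring
    rw [this]; ring
  constructor
  · rintro ⟨ha, hb⟩ h hh
    rcases Finset.mem_union.1 hh with hh | hh
    · obtain ⟨hm, h0⟩ := Finset.mem_filter.1 hh
      have := ha h hm ((s0 h hm).2 h0)
      rw [(s0 h hm).2 h0] at this
      simpa using this
    · obtain ⟨f, hf, g, hg, rfl⟩ := Finset.mem_image₂.1 hh
      obtain ⟨hf, hf'⟩ := Finset.mem_filter.1 hf
      obtain ⟨hg, hg'⟩ := Finset.mem_filter.1 hg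
      rw [pc]
      exact hb f hf g hg ((s1 f hf).2 hf') ((s2 g hg).2 hg')
  · intro hh
    refine ⟨fun h hm h0 => ?_, fun f hf g hg hf' hg' => ?_⟩
    · have := hh h (Finset.mem_union_left _ (Finset.mem_filter.2 ⟨hm, (s0 h hm).1 h0⟩))
      simpa [h0] using this
    · rw [← pc]
      exact hh _ (Finset.mem_union_right _ (Finset.mem_image₂_of_mem
        (Finset.mem_filter.2 ⟨hf, (s1 f hf).1 hf'⟩) (Finset.mem_filter.2 ⟨hg, (s2 g hg).1 hg'⟩)))

/-- Elimination of all coordinates in `J`. -/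
lemma fm {κ : Type*} [Fintype κ] [DecidableEq κ] (H : Finset (κ → ℚ[X])) (J : Finset κ) :
    ∃ H' : Finset (κ → ℚ[X]), ∀ᶠ t : ℕ in atTop, ∀ p : κ → ℝ,
      (∃ q : κ → ℝ, (∀ c ∉ J, q c = p c) ∧ ∀ h ∈ H, pair h t q ≤ 0) ↔
        ∀ h ∈ H', pair h t p ≤ 0 := by
  induction J using Finset.induction_on with
  | empty =>
    refine ⟨H, Eventually.of_forall fun t p => ⟨?_, fun h => ⟨p, by simp, h⟩⟩⟩
    rintro ⟨q, hq, h⟩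
    obtain rfl : q = p := funext fun c => hq c (by simp)
    exact h
  | insert j J hj ih =>
    obtain ⟨H₁, h₁⟩ := ih
    obtain ⟨H₂, h₂⟩ := fm_step H₁ j
    refine ⟨H₂, ?_⟩
    filter_upwards [h₁, h₂] with t h₁ h₂ p
    rw [← h₂]
    simp only [← h₁]
    constructor
    · rintro ⟨q, hq, h⟩
      refine ⟨q j, q, fun c hc => ?_, h⟩
      by_cases hcj : c = j
      · subst hcj; simp
      · rw [Function.update_of_ne hcj]; exact hq c (by simp [hc, hcj])
    · rintro ⟨y, q, hq, h⟩
      refine ⟨q, fun c hc => ?_, h⟩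
      rw [Finset.mem_insert, not_or] at hc
      rw [hq c hc.2, Function.update_of_ne hc.1]

/-! ### Polytopes with rational function vertices -/

lemma mem_convexHull_range {ι E : Type*} [Fintype ι] [AddCommGroup E] [Module ℝ E] (f : ι → E)
    (x : E) : x ∈ convexHull ℝ (Set.range f) ↔
      ∃ l : ι → ℝ, (∀ i, 0 ≤ l i) ∧ ∑ i, l i = 1 ∧ ∑ i, l i • f i = x := by
  classical
  have h : Set.range f = Fintype.linearCombination ℝ f '' Set.range fun i => Pi.single i (1 : ℝ) := by
    rw [← Set.range_comp]
    congr 1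
    ext i
    simp [Fintype.linearCombination_apply_single]
  rw [h, ← LinearMap.image_convexHull, convexHull_rangle_single_eq_stdSimplex]
  simp only [stdSimplex, Set.mem_image, Set.mem_ofPred_eq, Fintype.linearCombination_apply]
  exact ⟨fun ⟨l, ⟨h1, h2⟩, h3⟩ => ⟨l, h1, h2, h3⟩, fun ⟨l, h1, h2, h3⟩ => ⟨l, ⟨h1, h2⟩, h3⟩⟩

/-- The affine form with linear part `h.1(t)` and constant term `h.2(t)`, evaluated at `x`. -/
noncomputable def aff {n : ℕ} (h : (Fin n → ℚ[X]) × ℚ[X]) (t : ℕ) (x : Fin n → ℝ) : ℝ :=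
  ∑ j, ev (h.1 j) t * x j + ev h.2 t

/-- A polytope with vertices `N i (t) / D(t)` is cut out, for all large `t`, by a fixed finite set of
inequalities with coefficients in `ℚ[t]`. -/
lemma hrep {ι : Type*} [Fintype ι] {n : ℕ} (N : ι → Fin n → ℚ[X]) (D : ℚ[X]) (hD : D ≠ 0) :
    ∃ H : Finset ((Fin n → ℚ[X]) × ℚ[X]), ∀ᶠ t : ℕ in atTop, ∀ x : Fin n → ℝ,
      x ∈ convexHull ℝ (Set.range fun i j => ev (N i j) t / ev D t) ↔ ∀ h ∈ H, aff h t x ≤ 0 := by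
  classical
  -- Coordinates: `some (inl i)` are the barycentric weights, `some (inr j)` the coordinates of `x`,
  -- and `none` carries the constant `1`. The forms encode `∑ l i = 1` (`g0`), `0 ≤ l i` (`gn`) and
  -- `∑ l i * N i j = D * x j` (`gc`).
  let g0 : Option (ι ⊕ Fin n) → ℚ[X] := fun c => Option.elim c (-1) (Sum.elim 1 0)
  let gn : ι → Option (ι ⊕ Fin n) → ℚ[X] := fun i c =>
    Option.elim c 0 (Sum.elim (fun i' => if i' = i then -1 else 0) 0)
  let gc : Fin n → Option (ι ⊕ Fin n) → ℚ[X] := fun j c =>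
    Option.elim c 0 (Sum.elim (fun i => N i j) (fun j' => if j' = j then -D else 0))
  let G : Finset (Option (ι ⊕ Fin n) → ℚ[X]) :=
    {g0, -g0} ∪ (Finset.univ.image gn ∪ (Finset.univ.image gc ∪ Finset.univ.image (fun j => - gc j)))
  let J : Finset (Option (ι ⊕ Fin n)) := Finset.univ.image fun i => some (Sum.inl i)
  obtain ⟨H, hH⟩ := fm G J
  have hD0 : ∀ᶠ t : ℕ in atTop, ev D t ≠ 0 := by
    rcases lt_trichotomy D.leadingCoeff 0 with h | h | h
    · exact (ev_lt_zero h).mono fun t h => h.ne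
    · exact absurd (leadingCoeff_eq_zero.1 h) hD
    · exact (ev_pos h).mono fun t h => h.ne'
  refine ⟨H.image fun h => (fun j => h (some (Sum.inr j)), h none), ?_⟩
  filter_upwards [hH, hD0] with t hH hD0 x
  have hx := hH (fun c => Option.elim c 1 (Sum.elim 0 x))
  have e1 : ∀ q, pair g0 t q = ∑ i, q (some (Sum.inl i)) - q none := by
    intro q; simp [pair, g0, Fintype.sum_option]; ring
  have e2 : ∀ i q, pair (gn i) t q = - q (some (Sum.inl i)) := by
    intro i q; simp [pair, gn, Fintype.sum_option, apply_ite (fun p => ev p t)]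
  have e3 : ∀ j q, pair (gc j) t q = ∑ i, ev (N i j) t * q (some (Sum.inl i))
      - ev D t * q (some (Sum.inr j)) := by
    intro j q; simp [pair, gc, Fintype.sum_option, apply_ite (fun p => ev p t)]; ring
  have e4 : ∀ (g : Option (ι ⊕ Fin n) → ℚ[X]) q, pair (-g) t q = - pair g t q := by
    intro g q; simp [pair]
  have eH : (∀ h ∈ H, pair h t (fun c => Option.elim c 1 (Sum.elim 0 x)) ≤ 0) ↔
      ∀ h ∈ H.image fun h => ((fun j => h (some (Sum.inr j)), h none) :
        (Fin n → ℚ[X]) × ℚ[X]), aff h t x ≤ 0 := by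
    simp [pair, aff, Fintype.sum_option, add_comm]
  rw [← eH, ← hx, mem_convexHull_range]
  constructor
  · rintro ⟨l, hl0, hl1, hlx⟩
    refine ⟨fun c => Option.elim c 1 (Sum.elim l x), ?_, ?_⟩
    · rintro (_ | (i | j)) hc
      · rfl
      · simp [J] at hc
      · rfl
    · have k3 : ∀ j, pair (gc j) t (fun c => Option.elim c 1 (Sum.elim l x)) = 0 := by
        intro j
        rw [e3, ← hlx]
        simp only [Option.elim, Sum.elim_inl, Sum.elim_inr, Finset.sum_apply, Pi.smul_apply,
          smul_eq_mul, Finset.mul_sum]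
        rw [sub_eq_zero]
        exact Finset.sum_congr rfl fun i _ => by field_simp
      intro h hh
      simp only [G, Finset.mem_union, Finset.mem_insert, Finset.mem_singleton, Finset.mem_image,
        Finset.mem_univ, true_and] at hh
      rcases hh with (rfl | rfl) | ⟨i, rfl⟩ | ⟨j, rfl⟩ | ⟨j, rfl⟩
      · rw [e1]; simp [hl1]
      · rw [e4, e1]; simp [hl1]
      · rw [e2]; simpa using hl0 i
      · rw [k3]
      · rw [e4, k3]; simp
  · rintro ⟨q, hq, hG⟩
    have q0 : q none = 1 := hq none (by simp [J])
    have qx : ∀ j, q (some (Sum.inr j)) = x j := fun j => hq _ (by simp [J])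
    have m0 := hG g0 (by simp [G])
    have m0' := hG (-g0) (by simp [G])
    rw [e4] at m0'
    rw [e1, q0] at m0 m0'
    refine ⟨fun i => q (some (Sum.inl i)), fun i => ?_, by linarith, ?_⟩
    · have := hG (gn i) (by simp [G])
      rw [e2] at this; linarith
    · ext j
      have m := hG (gc j) (by simp [G])
      have m' := hG (-gc j) (by simp [G])
      rw [e4] at m'
      rw [e3, qx] at m m'
      have : ∑ i, ev (N i j) t * q (some (Sum.inl i)) = ev D t * x j := by linarith
      simp only [Finset.sum_apply, Pi.smul_apply, smul_eq_mul]
      have h2 : ∀ i, q (some (Sum.inl i)) * (ev (N i j) t / ev D t)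
          = (ev (N i j) t * q (some (Sum.inl i))) / ev D t := fun i => by ring
      simp only [h2, ← Finset.sum_div, this]
      field_simp

/-- Rational functions can be put over a common denominator; the identity holds for all `t` at which
none of the denominators vanishes. -/
lemma exists_common_denom {ι κ : Type*} [Fintype ι] [Fintype κ] (v : ι → κ → RatFunc ℚ) :
    ∃ (N : ι → κ → ℚ[X]) (D : ℚ[X]), D ≠ 0 ∧ ∀ᶠ t : ℕ in atTop, ∀ i j,
      RatFunc.eval (algebraMap ℚ ℝ) (t : ℝ) (v i j) = ev (N i j) t / ev D t := by
  classical
  let d : ι × κ → ℚ[X] := fun c => (v c.1 c.2).denom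
  have hd : ∀ c, d c ≠ 0 := fun c => RatFunc.denom_ne_zero _
  refine ⟨fun i j => (v i j).num * ∏ c ∈ Finset.univ.erase (i, j), d c, ∏ c, d c,
    Finset.prod_ne_zero_iff.2 fun c _ => hd c, ?_⟩
  have : ∀ᶠ t : ℕ in atTop, ∀ c, ev (d c) t ≠ 0 := eventually_all.2 fun c => by
    rcases lt_trichotomy (d c).leadingCoeff 0 with h | h | h
    · exact (ev_lt_zero h).mono fun t h => h.ne
    · exact absurd (leadingCoeff_eq_zero.1 h) (hd c)
    · exact (ev_pos h).mono fun t h => h.ne'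
  filter_upwards [this] with t ht i j
  have e : ∀ p : ℚ[X], p.eval₂ (algebraMap ℚ ℝ) (t : ℝ) = ev p t := fun p => by
    simp [ev]
  have ep : ∀ s : Finset (ι × κ), ev (∏ c ∈ s, d c) t = ∏ c ∈ s, ev (d c) t := fun s => by
    simp [ev, eval_prod]
  rw [RatFunc.eval, e, e, ev_mul, ep, ep, ← Finset.mul_prod_erase _ _ (Finset.mem_univ (i, j)),
    mul_div_mul_right _ _ (Finset.prod_ne_zero_iff.2 fun c _ => ht c)]

/-! ### Bounded denominators and growth -/

lemma exists_den_finset {ι : Type*} [Fintype ι] (q : ι → ℚ) :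
    ∃ N : ℕ, 0 < N ∧ ∀ i, ∃ z : ℤ, (N : ℚ) * q i = z := by
  classical
  refine ⟨∏ i, (q i).den, Finset.prod_pos fun i _ => (q i).den_pos, fun i =>
    ⟨(∏ k ∈ Finset.univ.erase i, ((q k).den : ℤ)) * (q i).num, ?_⟩⟩
  rw [← Finset.prod_erase_mul _ _ (Finset.mem_univ i)]
  push_cast
  rw [mul_assoc, Rat.den_mul_eq_num]

lemma exists_den_poly (p : ℚ[X]) : ∃ N : ℕ, 0 < N ∧ ∀ t : ℕ, ∃ z : ℤ, (N : ℝ) * ev p t = z := by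
  induction p using Polynomial.induction_on' with
  | add p q hp hq =>
    obtain ⟨M, hM, hp⟩ := hp
    obtain ⟨N, hN, hq⟩ := hq
    refine ⟨M * N, Nat.mul_pos hM hN, fun t => ?_⟩
    obtain ⟨a, ha⟩ := hp t
    obtain ⟨b, hb⟩ := hq t
    refine ⟨N * a + M * b, ?_⟩
    push_cast
    rw [← ha, ← hb, ev_add]; ring
  | monomial k a =>
    refine ⟨a.den, a.den_pos, fun t => ⟨a.num * t ^ k, ?_⟩⟩
    have : (a.den : ℝ) * (a : ℝ) = a.num := by exact_mod_cast Rat.den_mul_eq_num a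
    rw [← C_mul_X_pow_eq_monomial]
    push_cast
    rw [← this]; simp; ring

/-- A bounded function with values in `(1/N)ℤ` takes finitely many values, so it is constant along
any ultrafilter. -/
lemma ultrafilter_const {α : Type*} (U : Ultrafilter α) (f : α → ℝ) (N : ℕ) (hN : 0 < N)
    (hf : ∀ a, ∃ z : ℤ, (N : ℝ) * f a = z) (K : ℝ) (hK : ∀ᶠ a in U, |f a| ≤ K) :
    ∃ c : ℚ, ∀ᶠ a in U, f a = c := by
  choose z hz using hf
  have hN' : (0 : ℝ) < N := by exact_mod_cast hN
  have h1 : ∀ᶠ a in U, ∃ m ∈ Set.Icc (-⌈N * K⌉) ⌈N * K⌉, z a = m := by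
    filter_upwards [hK] with a ha
    refine ⟨z a, ?_, rfl⟩
    have h2 : |(z a : ℝ)| ≤ ⌈N * K⌉ := by
      rw [← hz, abs_mul, abs_of_pos hN']
      exact (mul_le_mul_of_nonneg_left ha hN'.le).trans (Int.le_ceil _)
    have h3 : |z a| ≤ ⌈N * K⌉ := by exact_mod_cast h2
    exact abs_le.1 h3
  have h2 : (⋃ m ∈ Set.Icc (-⌈N * K⌉) ⌈N * K⌉, {a | z a = m}) ∈ U := by
    filter_upwards [h1] with a ha
    simpa using ha
  obtain ⟨m, -, hm⟩ := (Ultrafilter.finite_biUnion_mem_iff (Set.finite_Icc _ _)).1 h2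
  refine ⟨m / N, ?_⟩
  filter_upwards [hm] with a ha
  have ha : z a = m := ha
  push_cast
  rw [eq_div_iff hN'.ne', ← ha, ← hz, mul_comm]

/-- A polynomial of degree less than `M` is `O(t ^ (M - 1))`, stated without truncated subtraction so
that `M = 0` (the zero polynomial) is covered. -/
lemma grow (p : ℚ[X]) (M : ℕ) (hp : ∀ i, M ≤ i → p.coeff i = 0) :
    ∃ K : ℝ, 0 ≤ K ∧ ∀ t : ℕ, 1 ≤ t → (t : ℝ) * |ev p t| ≤ K * (t : ℝ) ^ M := by
  refine ⟨∑ i ∈ Finset.range M, |(p.coeff i : ℝ)|, Finset.sum_nonneg fun _ _ => abs_nonneg _,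
    fun t ht => ?_⟩
  have e : p = ∑ i ∈ Finset.range M, C (p.coeff i) * X ^ i := by
    ext i
    simp only [finsetSum_coeff, coeff_C_mul_X_pow]
    by_cases hi : i < M
    · simp [hi]
    · simp [hi, hp i (not_lt.1 hi)]
  have ht' : (1 : ℝ) ≤ t := by exact_mod_cast ht
  have e2 : ev p t = ∑ i ∈ Finset.range M, (p.coeff i : ℝ) * (t : ℝ) ^ i := by
    conv_lhs => rw [e, ev_sum]
    simp
  rw [e2, Finset.sum_mul]
  calc (t : ℝ) * |∑ i ∈ Finset.range M, (p.coeff i : ℝ) * (t : ℝ) ^ i|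
      ≤ t * ∑ i ∈ Finset.range M, |(p.coeff i : ℝ) * (t : ℝ) ^ i| := by
        gcongr; exact Finset.abs_sum_le_sum_abs _ _
    _ ≤ _ := by
      rw [Finset.mul_sum]
      refine Finset.sum_le_sum fun i hi => ?_
      rw [abs_mul, abs_of_nonneg (by positivity : (0 : ℝ) ≤ (t : ℝ) ^ i)]
      calc (t : ℝ) * (|(p.coeff i : ℝ)| * (t : ℝ) ^ i) = |(p.coeff i : ℝ)| * (t : ℝ) ^ (i + 1) := by
            ring
        _ ≤ _ := by
          gcongr
          exact Finset.mem_range.1 hi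

/-! ### Lattice points along an ultrafilter -/

/-- The rational linear form `φ`, evaluated at a lattice point. -/
noncomputable def lin {n : ℕ} (φ : Fin n → ℚ) (x : Fin n → ℤ) : ℝ := ∑ j, (φ j : ℝ) * (x j : ℝ)

/-- The rational linear forms `φ` such that, along the ultrafilter `U` on pairs `(t, x)`, the value
`φ · x` is a polynomial in `t`. -/
def polyForms {n : ℕ} (U : Ultrafilter (ℕ × (Fin n → ℤ))) : Submodule ℚ (Fin n → ℚ) where
  carrier := {φ | ∃ p : ℚ[X], ∀ᶠ a : ℕ × (Fin n → ℤ) in U, lin φ a.2 = ev p a.1}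
  add_mem' := by
    rintro φ ψ ⟨p, hp⟩ ⟨q, hq⟩
    refine ⟨p + q, ?_⟩
    filter_upwards [hp, hq] with a hp hq
    rw [ev_add, ← hp, ← hq]
    simp [lin, add_mul, Finset.sum_add_distrib]
  zero_mem' := ⟨0, Eventually.of_forall fun a => by simp [lin]⟩
  smul_mem' := by
    rintro c φ ⟨p, hp⟩
    refine ⟨C c * p, ?_⟩
    filter_upwards [hp] with a hp
    rw [ev_mul, ← hp]
    simp [lin, Finset.mul_sum, mul_assoc]

/-- If `α(t) · x + β(t) = O(t ^ m)` and `x = O(t)` along `U`, and `α` has degree at most `M` with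
`m ≤ M`, then dividing by `t ^ M` shows that the form given by the coefficient of `t ^ M` in `α` is
a polynomial in `t` up to a bounded error with bounded denominator, which is constant along `U`. -/
lemma top_coeff_mem {n : ℕ} {U : Ultrafilter (ℕ × (Fin n → ℤ))} {C₀ : ℝ}
    (h1 : ∀ᶠ a : ℕ × (Fin n → ℤ) in U, 1 ≤ a.1)
    (hx : ∀ᶠ a : ℕ × (Fin n → ℤ) in U, ∀ j, |(a.2 j : ℝ)| ≤ C₀ * a.1)
    {m M : ℕ} (hmM : m ≤ M) (α : Fin n → ℚ[X]) (β : ℚ[X])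
    (hα : ∀ j i, M + 1 ≤ i → (α j).coeff i = 0) {C₁ : ℝ}
    (hb : ∀ᶠ a : ℕ × (Fin n → ℤ) in U, |aff (α, β) a.1 fun j => (a.2 j : ℝ)| ≤ C₁ * (a.1 : ℝ) ^ m) :
    (fun j => (α j).coeff M) ∈ polyForms U := by
  set φ : Fin n → ℚ := fun j => (α j).coeff M with hφ
  set B := β /ₘ X ^ M with hB
  set r := β %ₘ X ^ M with hr
  have hβ : β = r + X ^ M * B := (modByMonic_add_div β (X ^ M : ℚ[X])).symm
  set α' : Fin n → ℚ[X] := fun j => α j - C (φ j) * X ^ M with hα'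
  have hα'0 : ∀ j i, M ≤ i → (α' j).coeff i = 0 := by
    intro j i hi
    rcases hi.eq_or_lt with rfl | hi
    · simp [hα', hφ]
    · simp [hα', hα j i hi, hi.ne']
  have hr0 : ∀ i, M ≤ i → r.coeff i = 0 := fun i hi => by
    refine coeff_eq_zero_of_degree_lt (lt_of_lt_of_le (degree_modByMonic_lt β (monic_X_pow M)) ?_)
    rw [degree_X_pow]; exact_mod_cast hi
  choose K hK0 hK using fun j => grow (α' j) M (hα'0 j)
  obtain ⟨Kr, hKr0, hKr⟩ := grow r M hr0
  obtain ⟨N₁, hN₁, hi₁⟩ := exists_den_finset φ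
  obtain ⟨N₂, hN₂, hi₂⟩ := exists_den_poly B
  -- `α(t) · x + β(t) = t ^ M * (φ · x + B(t)) + α'(t) · x + r(t)`, where everything but the first
  -- summand on the right is `O(t ^ M)`.
  obtain ⟨c, hc⟩ := ultrafilter_const U (fun a => lin φ a.2 + ev B a.1) (N₁ * N₂)
    (Nat.mul_pos hN₁ hN₂) (by
      intro a
      choose z₁ hz₁ using hi₁
      obtain ⟨z₂, hz₂⟩ := hi₂ a.1
      refine ⟨N₂ * (∑ j, z₁ j * a.2 j) + N₁ * z₂, ?_⟩
      have hz : ∀ j, (z₁ j : ℝ) = N₁ * φ j := fun j => by rw [← Rat.cast_intCast, ← hz₁]; simp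
      push_cast
      rw [← hz₂]
      simp only [hz, lin, mul_assoc, ← Finset.mul_sum]
      ring) (|C₁| + ∑ j, K j * |C₀| + Kr) (by
      filter_upwards [h1, hx, hb] with a h1 hx hb
      have h1' : (1 : ℝ) ≤ a.1 := by exact_mod_cast h1
      have h0 : (0 : ℝ) < a.1 := by linarith
      have hT : (0 : ℝ) < (a.1 : ℝ) ^ M := by positivity
      have e : (a.1 : ℝ) ^ M * (lin φ a.2 + ev B a.1) = aff (α, β) a.1 (fun j => (a.2 j : ℝ))
          - ∑ j, ev (α' j) a.1 * a.2 j - ev r a.1 := by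
        rw [aff, show ev (α, β).2 a.1 = ev (r + X ^ M * B) a.1 by rw [← hβ]]
        simp only [hα', lin, ev_sub, ev_mul, ev_add, ev_pow, ev_C, ev_X, sub_mul,
          Finset.sum_sub_distrib, mul_add, Finset.mul_sum]
        have : ∀ j, (φ j : ℝ) * (a.1 : ℝ) ^ M * a.2 j = (a.1 : ℝ) ^ M * (φ j * a.2 j) :=
          fun j => by ring
        simp only [this]
        ring
      have b1 : |aff (α, β) a.1 (fun j => (a.2 j : ℝ))| ≤ |C₁| * (a.1 : ℝ) ^ M :=
        hb.trans (mul_le_mul (le_abs_self _) (pow_le_pow_right₀ h1' hmM) (by positivity)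
          (abs_nonneg _))
      have b2 : |∑ j, ev (α' j) a.1 * a.2 j| ≤ (∑ j, K j * |C₀|) * (a.1 : ℝ) ^ M := by
        refine (Finset.abs_sum_le_sum_abs _ _).trans ?_
        rw [Finset.sum_mul]
        refine Finset.sum_le_sum fun j _ => ?_
        rw [abs_mul]
        calc |ev (α' j) a.1| * |(a.2 j : ℝ)| ≤ |ev (α' j) a.1| * (|C₀| * a.1) := by
              gcongr; exact (hx j).trans (by gcongr; exact le_abs_self _)
          _ = |C₀| * (a.1 * |ev (α' j) a.1|) := by ring
          _ ≤ |C₀| * (K j * (a.1 : ℝ) ^ M) := 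
              mul_le_mul_of_nonneg_left (hK j _ h1) (abs_nonneg _)
          _ = _ := by ring
      have b3 : |ev r a.1| ≤ Kr * (a.1 : ℝ) ^ M :=
        le_trans (by nlinarith [abs_nonneg (ev r a.1)]) (hKr _ h1)
      have : (a.1 : ℝ) ^ M * |lin φ a.2 + ev B a.1|
          ≤ (a.1 : ℝ) ^ M * (|C₁| + ∑ j, K j * |C₀| + Kr) := by
        rw [← abs_of_pos hT, ← abs_mul, abs_of_pos hT, e]
        calc _ ≤ |aff (α, β) a.1 (fun j => (a.2 j : ℝ))| + |∑ j, ev (α' j) a.1 * a.2 j|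
              + |ev r a.1| := (abs_sub _ _).trans (by gcongr; exact abs_sub _ _)
          _ ≤ _ := by nlinarith
      exact le_of_mul_le_mul_left this hT)
  refine ⟨C c - B, ?_⟩
  filter_upwards [hc] with a ha
  simp [← ha]

/-- All coefficients of `t ^ i` in `α` with `i ≥ m` are polynomial forms: once the top one is known to
be a polynomial `p(t)` along `U`, it can be moved into `β`, which lowers the degree of `α`. -/
lemma coeff_mem {n : ℕ} {U : Ultrafilter (ℕ × (Fin n → ℤ))} {C₀ : ℝ}
    (h1 : ∀ᶠ a : ℕ × (Fin n → ℤ) in U, 1 ≤ a.1)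
    (hx : ∀ᶠ a : ℕ × (Fin n → ℤ) in U, ∀ j, |(a.2 j : ℝ)| ≤ C₀ * a.1)
    {m : ℕ} {C₁ : ℝ}
    (M : ℕ) : ∀ (α : Fin n → ℚ[X]) (β : ℚ[X]), (∀ j i, M ≤ i → (α j).coeff i = 0) →
    (∀ᶠ a : ℕ × (Fin n → ℤ) in U, |aff (α, β) a.1 fun j => (a.2 j : ℝ)| ≤ C₁ * (a.1 : ℝ) ^ m) →
    ∀ i, m ≤ i → (fun j => (α j).coeff i) ∈ polyForms U := by
  induction M with
  | zero =>
    intro α β hα _ i _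
    simp only [hα _ i (Nat.zero_le i)]
    exact Submodule.zero_mem _
  | succ M ih =>
    intro α β hα hb i hi
    rcases lt_or_ge M i with hMi | hMi
    · simp only [hα _ i hMi]
      exact Submodule.zero_mem _
    have htop := top_coeff_mem h1 hx (hi.trans hMi) α β hα hb
    rcases hMi.eq_or_lt with rfl | hMi
    · exact htop
    obtain ⟨p, hp⟩ := htop
    have := ih (fun j => α j - C ((α j).coeff M) * X ^ M) (β + X ^ M * p) (by
      intro j k hk
      rcases hk.eq_or_lt with rfl | hk
      · simp
      · simp [hα j k hk, hk.ne']) (by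
      filter_upwards [hb, hp] with a hb hp
      convert hb using 2
      simp only [aff, ev_sub, ev_mul, ev_add, ev_pow, ev_C, ev_X, sub_mul,
          Finset.sum_sub_distrib, ← hp, lin, Finset.mul_sum]
      have : ∀ j, ((α j).coeff M : ℝ) * (a.1 : ℝ) ^ M * a.2 j
          = (a.1 : ℝ) ^ M * ((α j).coeff M * a.2 j) := fun j => by ring
      simp only [this]
      ring) i hi
    simpa [hMi.ne] using this

/-- Along an ultrafilter on pairs `(t, x)`, where `x` is a lattice point of size `O(t)` in the polytope
cut out by `H` and is not the midpoint of two other such lattice points, `x` is polynomial in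
`t`. -/
lemma core {n : ℕ} (U : Ultrafilter (ℕ × (Fin n → ℤ))) {C₀ : ℝ}
    (H : Finset ((Fin n → ℚ[X]) × ℚ[X]))
    (h1 : ∀ᶠ a : ℕ × (Fin n → ℤ) in U, 1 ≤ a.1)
    (hx : ∀ᶠ a : ℕ × (Fin n → ℤ) in U, ∀ j, |(a.2 j : ℝ)| ≤ C₀ * a.1)
    (hin : ∀ᶠ a : ℕ × (Fin n → ℤ) in U, ∀ h ∈ H, aff h a.1 (fun j => (a.2 j : ℝ)) ≤ 0)
    (hex : ∀ᶠ a : ℕ × (Fin n → ℤ) in U, ∀ u : Fin n → ℤ, u ≠ 0 → ¬ ∀ h ∈ H,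
      aff h a.1 (fun j => (a.2 j : ℝ) + u j) ≤ 0 ∧ aff h a.1 (fun j => (a.2 j : ℝ) - u j) ≤ 0) :
    ∃ w : Fin n → ℚ[X], ∀ᶠ a : ℕ × (Fin n → ℤ) in U, ∀ j, (a.2 j : ℝ) = ev (w j) a.1 := by
  classical
  by_cases hL : polyForms U = ⊤
  · have : ∀ j, ∃ p : ℚ[X], ∀ᶠ a : ℕ × (Fin n → ℤ) in U, (a.2 j : ℝ) = ev p a.1 := fun j => by
      have : Pi.single j (1 : ℚ) ∈ polyForms U := by rw [hL]; trivial
      obtain ⟨p, hp⟩ := this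
      refine ⟨p, ?_⟩
      filter_upwards [hp] with a ha
      rw [← ha, lin, Finset.sum_eq_single j]
      · simp
      · intro b _ hb; simp [hb]
      · simp
    choose w hw using this
    exact ⟨w, eventually_all.2 hw⟩
  exfalso
  -- An integer direction `u ≠ 0` annihilated by all forms in `polyForms U`.
  obtain ⟨f, hf0, hf⟩ := Submodule.exists_le_ker_of_lt_top _ (lt_top_iff_ne_top.2 hL)
  obtain ⟨N, hN, hz⟩ := exists_den_finset fun j => f (Pi.single j 1)
  choose u hu using hz
  have hfu : ∀ φ : Fin n → ℚ, ∑ j, φ j * u j = N * f φ := fun φ => by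
    conv_rhs => rw [LinearMap.pi_apply_eq_sum_univ f φ]
    rw [Finset.mul_sum]
    refine Finset.sum_congr rfl fun j _ => ?_
    rw [← hu]
    have : (fun i => if j = i then (1 : ℚ) else 0) = Pi.single j 1 := by
      ext i; simp [Pi.single_apply, eq_comm]
    rw [this, smul_eq_mul]; ring
  have hN' : (N : ℚ) ≠ 0 := by exact_mod_cast hN.ne'
  have hu0 : u ≠ 0 := by
    rintro rfl
    apply hf0
    ext φ
    have := hu φ
    simpa [hN'] using this
  -- The slack of every inequality is at least its variation in the direction `u`.
  have main : ∀ h ∈ H, ∀ᶠ a : ℕ × (Fin n → ℤ) in U,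
      |ev (∑ j, h.1 j * C (u j : ℚ)) a.1| ≤ - aff h a.1 (fun j => (a.2 j : ℝ)) := by
    intro h hh
    by_contra hcon
    rw [← Ultrafilter.eventually_not] at hcon
    set q := ∑ j, h.1 j * C (u j : ℚ) with hq
    have hq0 : q ≠ 0 := by
      intro h0
      obtain ⟨a, ha, hb⟩ := (hcon.and hin).exists
      rw [h0] at ha
      have := hb h hh
      apply ha
      simpa using this
    obtain ⟨K, -, hK⟩ := grow q (q.natDegree + 1)
      fun i hi => coeff_eq_zero_of_natDegree_lt hi
    have hmem := coeff_mem h1 hx (m := q.natDegree) (C₁ := K)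
      (Finset.univ.sup (fun j => (h.1 j).natDegree) + 1) h.1 h.2 (fun j i hi =>
        coeff_eq_zero_of_natDegree_lt (lt_of_lt_of_le (Nat.lt_succ_of_le
          (Finset.le_sup (f := fun j => (h.1 j).natDegree) (Finset.mem_univ j))) hi)) (by
        filter_upwards [hcon, hin, h1] with a ha hb h1
        have h0 : (0 : ℝ) < a.1 := by exact_mod_cast h1
        have hk := hK _ h1
        rw [pow_succ', mul_left_comm] at hk
        have hk := le_of_mul_le_mul_left hk h0
        rw [abs_of_nonpos (hb h hh)]
        exact (not_le.1 ha).le.trans hk) q.natDegree le_rfl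
    have hker : f (fun j => (h.1 j).coeff q.natDegree) = 0 := hf hmem
    have := hfu fun j => (h.1 j).coeff q.natDegree
    rw [hker, mul_zero] at this
    apply hq0
    have hc : ∀ i, q.coeff i = ∑ j, (h.1 j).coeff i * u j := fun i => by
      simp only [hq, finsetSum_coeff, coeff_mul_C]
    rw [← leadingCoeff_eq_zero, leadingCoeff, hc, this]
  obtain ⟨a, ha, hb⟩ := (((eventually_all_finset H).2 main).and hex).exists
  refine hb u hu0 fun h hh => ?_
  have := ha h hh
  have e : ev (∑ j, h.1 j * C (u j : ℚ)) a.1 = ∑ j, ev (h.1 j) a.1 * u j := by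
    simp only [ev_sum, ev_mul, ev_C, Rat.cast_intCast]
  rw [e, abs_le] at this
  simp only [aff, mul_add, mul_sub, Finset.sum_add_distrib, Finset.sum_sub_distrib] at this ⊢
  constructor <;> linarith [this.1, this.2]

/-- Finitely many polynomial vectors suffice to describe, for all large `t`, the lattice points of
the polytope cut out by `H` that are not midpoints of other such points. -/
lemma exists_finset {n : ℕ} {C₀ : ℝ} (H : Finset ((Fin n → ℚ[X]) × ℚ[X]))
    (hx : ∀ᶠ t : ℕ in atTop, ∀ x : Fin n → ℝ, (∀ h ∈ H, aff h t x ≤ 0) → ∀ j, |x j| ≤ C₀ * t) :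
    ∃ W : Finset (Fin n → ℚ[X]), ∀ᶠ t : ℕ in atTop, ∀ x : Fin n → ℤ,
      (∀ h ∈ H, aff h t (fun j => (x j : ℝ)) ≤ 0) →
      (∀ u : Fin n → ℤ, u ≠ 0 → ¬ ∀ h ∈ H,
        aff h t (fun j => (x j : ℝ) + u j) ≤ 0 ∧ aff h t (fun j => (x j : ℝ) - u j) ≤ 0) →
      ∃ w ∈ W, ∀ j, (x j : ℝ) = ev (w j) t := by
  classical
  -- The filter of sets whose complement is covered, for large `t`, by finitely many polynomial vectors.
  let F : Filter (ℕ × (Fin n → ℤ)) :=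
    { sets := {A | ∃ W : Finset (Fin n → ℚ[X]), ∀ᶠ t : ℕ in atTop, ∀ x : Fin n → ℤ,
        (t, x) ∉ A → ∃ w ∈ W, ∀ j, (x j : ℝ) = ev (w j) t}
      univ_sets := ⟨∅, by simp⟩
      sets_of_superset := by
        rintro A B ⟨W, hW⟩ hAB
        exact ⟨W, hW.mono fun t ht x hx => ht x fun h => hx (hAB h)⟩
      inter_sets := by
        rintro A B ⟨W, hW⟩ ⟨V, hV⟩
        refine ⟨W ∪ V, ?_⟩
        filter_upwards [hW, hV] with t hW hV x hx
        by_cases hA : (t, x) ∈ A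
        · obtain ⟨w, hw, h⟩ := hV x fun hB => hx ⟨hA, hB⟩
          exact ⟨w, Finset.mem_union_right _ hw, h⟩
        · obtain ⟨w, hw, h⟩ := hW x hA
          exact ⟨w, Finset.mem_union_left _ hw, h⟩ }
  have hF : ∀ A, A ∈ F ↔ ∃ W : Finset (Fin n → ℚ[X]), ∀ᶠ t : ℕ in atTop, ∀ x : Fin n → ℤ,
        (t, x) ∉ A → ∃ w ∈ W, ∀ j, (x j : ℝ) = ev (w j) t := fun A => Iff.rfl
  have hfst : ∀ P : ℕ → Prop, (∀ᶠ t in atTop, P t) → ∀ᶠ a : ℕ × (Fin n → ℤ) in F, P a.1 :=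
    fun P hP => (hF _).2 ⟨∅, hP.mono fun t ht x hx => (hx ht).elim⟩
  let good : Set (ℕ × (Fin n → ℤ)) := {a | (∀ h ∈ H, aff h a.1 (fun j => (a.2 j : ℝ)) ≤ 0) ∧
      (∀ u : Fin n → ℤ, u ≠ 0 → ¬ ∀ h ∈ H, aff h a.1 (fun j => (a.2 j : ℝ) + u j) ≤ 0 ∧
        aff h a.1 (fun j => (a.2 j : ℝ) - u j) ≤ 0)}
  have hgood : goodᶜ ∈ F := by
    refine mem_iff_ultrafilter.2 fun U hU => ?_
    by_contra hcon
    rw [Ultrafilter.compl_notMem_iff] at hcon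
    have hg1 : ∀ᶠ a : ℕ × (Fin n → ℤ) in U, ∀ h ∈ H, aff h a.1 (fun j => (a.2 j : ℝ)) ≤ 0 := by
      filter_upwards [hcon] with a ha using ha.1
    obtain ⟨w, hw⟩ := core U (C₀ := C₀) H (hU (hfst _ (eventually_ge_atTop 1))) (by
      filter_upwards [hU (hfst _ hx), hg1] with a ha hb using ha _ hb) hg1
      (by filter_upwards [hcon] with a ha using ha.2)
    have : {a : ℕ × (Fin n → ℤ) | ∀ j, (a.2 j : ℝ) = ev (w j) a.1}ᶜ ∈ F :=
      (hF _).2 ⟨{w}, Eventually.of_forall fun t x h => ⟨w, by simp, by simpa using h⟩⟩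
    exact (Ultrafilter.compl_mem_iff_notMem.1 (hU this)) hw
  obtain ⟨W, hW⟩ := (hF _).1 hgood
  exact ⟨W, hW.mono fun t ht x h1 h2 => ht x fun h => h ⟨h1, h2⟩⟩

/-! ### Eventually periodic predicates -/

/-- `P` is eventually periodic: for some `d > 0`, the truth value of `P t` is eventually constant on
each residue class mod `d`. (For `r ≥ d` the condition is vacuous.) -/
def EP (P : ℕ → Prop) : Prop :=
  ∃ d : ℕ, 0 < d ∧ ∀ r, (∀ᶠ t in atTop, t % d = r → P t) ∨ (∀ᶠ t in atTop, t % d = r → ¬ P t)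

lemma EP.congr {P Q : ℕ → Prop} (hP : EP P) (h : ∀ᶠ t in atTop, P t ↔ Q t) : EP Q := by
  obtain ⟨d, hd, hP⟩ := hP
  refine ⟨d, hd, fun r => (hP r).imp (fun h' => ?_) fun h' => ?_⟩
  · filter_upwards [h, h'] with t h h' hr using h.1 (h' hr)
  · filter_upwards [h, h'] with t h h' hr using fun hq => h' hr (h.2 hq)

lemma EP.not {P : ℕ → Prop} (hP : EP P) : EP fun t => ¬ P t := by
  obtain ⟨d, hd, hP⟩ := hP
  exact ⟨d, hd, fun r => (hP r).symm.imp_right fun h => h.mono fun t h hr => not_not.2 (h hr)⟩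

lemma EP.of_dec {P : ℕ → Prop} (h : (∀ᶠ t in atTop, P t) ∨ ∀ᶠ t in atTop, ¬ P t) : EP P :=
  ⟨1, one_pos, fun _ => h.imp (fun h => h.mono fun _ h _ => h) fun h => h.mono fun _ h _ => h⟩

/-- Finitely many eventually periodic predicates have a common period. -/
lemma EP.uniform {ι : Type*} (s : Finset ι) {P : ι → ℕ → Prop} (h : ∀ i ∈ s, EP (P i)) :
    ∃ d : ℕ, 0 < d ∧ ∀ r, ∀ i ∈ s, (∀ᶠ t in atTop, t % d = r → P i t) ∨
      (∀ᶠ t in atTop, t % d = r → ¬ P i t) := by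
  classical
  induction s using Finset.induction_on with
  | empty => exact ⟨1, one_pos, by simp⟩
  | insert a s _ ih =>
    obtain ⟨d, hd, hs⟩ := ih fun i hi => h i (Finset.mem_insert_of_mem hi)
    obtain ⟨e, he, ha⟩ := h a (Finset.mem_insert_self _ _)
    refine ⟨d * e, Nat.mul_pos hd he, fun r i hi => ?_⟩
    rcases Finset.mem_insert.1 hi with rfl | hi
    · refine (ha (r % e)).imp (fun h => h.mono fun t h hr => h ?_) fun h =>
        h.mono fun t h hr => h ?_ <;> rw [← hr, Nat.mod_mul_left_mod]
    · refine (hs (r % d) i hi).imp (fun h => h.mono fun t h hr => h ?_) fun h =>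
        h.mono fun t h hr => h ?_ <;> rw [← hr, Nat.mod_mul_right_mod]

lemma EP.forall_finset {ι : Type*} (s : Finset ι) {P : ι → ℕ → Prop} (h : ∀ i ∈ s, EP (P i)) :
    EP fun t => ∀ i ∈ s, P i t := by
  obtain ⟨d, hd, hs⟩ := EP.uniform s h
  refine ⟨d, hd, fun r => ?_⟩
  by_cases hall : ∀ i ∈ s, ∀ᶠ t in atTop, t % d = r → P i t
  · left
    filter_upwards [(eventually_all_finset s).2 hall] with t ht hr i hi using ht i hi hr
  · right
    simp only [not_forall] at hall
    obtain ⟨i, hi, hn⟩ := hall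
    filter_upwards [(hs r i hi).resolve_left hn] with t ht hr hP using ht hr (hP i hi)

lemma EP.forall {ι : Type*} [Fintype ι] {P : ι → ℕ → Prop} (h : ∀ i, EP (P i)) :
    EP fun t => ∀ i, P i t := by
  simpa using EP.forall_finset Finset.univ fun i _ => h i

lemma EP.and {P Q : ℕ → Prop} (hP : EP P) (hQ : EP Q) : EP fun t => P t ∧ Q t := by
  have := EP.forall (P := fun b : Bool => if b then P else Q) (by simp [hP, hQ])
  simpa [and_comm] using this

lemma EP.exists_finset {ι : Type*} (s : Finset ι) {P : ι → ℕ → Prop} (h : ∀ i ∈ s, EP (P i)) :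
    EP fun t => ∃ i ∈ s, P i t := by
  simpa using (EP.forall_finset s fun i hi => (h i hi).not).not

lemma EP.le_zero (p : ℚ[X]) : EP fun t => ev p t ≤ 0 := by
  refine EP.of_dec ?_
  rcases lt_trichotomy p.leadingCoeff 0 with h | h | h
  · exact Or.inl ((ev_lt_zero h).mono fun t h => h.le)
  · exact Or.inl (Eventually.of_forall fun t => by simp [leadingCoeff_eq_zero.1 h])
  · exact Or.inr ((ev_pos h).mono fun t h => not_le.2 h)

lemma EP.eq (p q : ℚ[X]) : EP fun t => ev p t = ev q t := by
  refine ((EP.le_zero (p - q)).and (EP.le_zero (q - p))).congr (Eventually.of_forall fun t => ?_)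
  simp only [ev_sub, sub_nonpos]
  exact ⟨fun h => le_antisymm h.1 h.2, fun h => ⟨h.le, h.ge⟩⟩

/-- The values of a rational polynomial modulo `ℤ` are periodic. -/
lemma exists_period (p : ℚ[X]) : ∃ N : ℕ, 0 < N ∧ ∀ t s : ℕ, t ≡ s [MOD N] →
    ∃ z : ℤ, ev p t - ev p s = z := by
  induction p using Polynomial.induction_on' with
  | add p q hp hq =>
    obtain ⟨M, hM, hp⟩ := hp
    obtain ⟨N, hN, hq⟩ := hq
    refine ⟨M * N, Nat.mul_pos hM hN, fun t s h => ?_⟩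
    obtain ⟨a, ha⟩ := hp t s (h.of_dvd (dvd_mul_right _ _))
    obtain ⟨b, hb⟩ := hq t s (h.of_dvd (dvd_mul_left _ _))
    refine ⟨a + b, ?_⟩
    push_cast
    rw [← ha, ← hb, ev_add, ev_add]; ring
  | monomial k a =>
    refine ⟨a.den, a.den_pos, fun t s h => ?_⟩
    obtain ⟨c, hc⟩ := (Nat.modEq_iff_dvd.1 (h.symm.pow k))
    refine ⟨a.num * c, ?_⟩
    have h1 : (a.den : ℝ) * (a : ℝ) = a.num := by exact_mod_cast Rat.den_mul_eq_num a
    have h2 : (t : ℝ) ^ k - (s : ℝ) ^ k = a.den * c := by exact_mod_cast hc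
    rw [← C_mul_X_pow_eq_monomial]
    push_cast
    rw [← h1]
    simp only [ev_mul, ev_C, ev_pow, ev_X, ← mul_sub, h2]
    ring

lemma EP.int (p : ℚ[X]) : EP fun t => ∃ y : ℤ, ev p t = y := by
  obtain ⟨N, hN, h⟩ := exists_period p
  refine ⟨N, hN, fun r => ?_⟩
  by_cases hr : ∃ y : ℤ, ev p r = y
  · left
    refine Eventually.of_forall fun t ht => ?_
    obtain ⟨y, hy⟩ := hr
    obtain ⟨z, hz⟩ := h t r (by subst ht; exact (Nat.mod_modEq t N).symm)
    exact ⟨z + y, by push_cast; linarith⟩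
  · right
    refine Eventually.of_forall fun t ht => ?_
    rintro ⟨y, hy⟩
    obtain ⟨z, hz⟩ := h t r (by subst ht; exact (Nat.mod_modEq t N).symm)
    exact hr ⟨y - z, by push_cast; linarith⟩

/-! ### Selecting the vertices -/

/-- The point `w(t)` of a polynomial vector `w`. -/
noncomputable def pt {n : ℕ} (w : Fin n → ℚ[X]) (t : ℕ) : Fin n → ℝ := fun j => ev (w j) t

lemma EP.conv {ι : Type*} [Fintype ι] {n : ℕ} (N : ι → Fin n → ℚ[X]) (D : ℚ[X]) (hD : D ≠ 0)
    (w : Fin n → ℚ[X]) :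
    EP fun t => pt w t ∈ convexHull ℝ (Set.range fun i j => ev (N i j) t / ev D t) := by
  obtain ⟨H, hH⟩ := hrep N D hD
  refine (EP.forall_finset H fun h _ => EP.le_zero (∑ j, h.1 j * w j + h.2)).congr ?_
  filter_upwards [hH] with t ht
  rw [ht]
  simp [aff, pt, ev_sum]

/-- Membership in the vertex set of `conv S`, tested against any set `A ⊆ S` containing all the
vertices. -/
lemma mem_extremePoints_hull {n : ℕ} {S A : Set (Fin n → ℝ)} (hS : S.Finite) (hAS : A ⊆ S)
    (hA : (convexHull ℝ S).extremePoints ℝ ⊆ A) (a : Fin n → ℝ) :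
    a ∈ (convexHull ℝ S).extremePoints ℝ ↔ a ∈ S ∧ a ∉ convexHull ℝ (A \ {a}) := by
  constructor
  · intro ha
    refine ⟨extremePoints_convexHull_subset ha, fun h => ?_⟩
    have hsub : convexHull ℝ (A \ {a}) ⊆ convexHull ℝ S :=
      convexHull_mono (Set.sdiff_subset.trans hAS)
    exact (extremePoints_convexHull_subset
      (inter_extremePoints_subset_extremePoints_of_subset hsub ⟨h, ha⟩)).2 rfl
  · rintro ⟨haS, ha⟩
    by_contra hn
    have hkm := closure_convexHull_extremePoints (hS.isCompact_convexHull ℝ) (convex_convexHull ℝ S)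
    rw [((hS.subset extremePoints_convexHull_subset).isClosed_convexHull ℝ).closure_eq] at hkm
    apply ha
    have : a ∈ convexHull ℝ ((convexHull ℝ S).extremePoints ℝ) := by
      rw [hkm]; exact subset_convexHull ℝ S haS
    have hsub : (convexHull ℝ S).extremePoints ℝ ⊆ A \ {a} := fun b hb =>
      ⟨hA hb, fun h => hn (by rw [← Set.mem_singleton_iff.1 h]; exact hb)⟩
    exact convexHull_mono hsub this

/-- All vertices of the integer hull are among finitely many polynomial vectors, each of which is a
vertex for an eventually periodic set of `t`. -/
lemma main_aux {n k : ℕ} (N : Fin k → Fin n → ℚ[X]) (D : ℚ[X]) (hD : D ≠ 0) (C₀ : ℝ)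
    (R : ℕ → Set (Fin n → ℝ))
    (hR : R = fun t => convexHull ℝ (Set.range fun i j => ev (N i j) t / ev D t))
    (hsz : ∀ᶠ t : ℕ in atTop, ∀ x ∈ R t, ∀ j, |x j| ≤ C₀ * t) :
    ∃ W : Finset (Fin n → ℚ[X]),
      (∀ᶠ t : ℕ in atTop, Set.extremePoints ℝ
        (convexHull ℝ (R t ∩ {x | ∀ j, ∃ y : ℤ, x j = (y : ℝ)})) ⊆ {x | ∃ w ∈ W, pt w t = x}) ∧
      ∀ w ∈ W, EP fun t => pt w t ∈ Set.extremePoints ℝ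
        (convexHull ℝ (R t ∩ {x | ∀ j, ∃ y : ℤ, x j = (y : ℝ)})) := by
  classical
  obtain ⟨H, hH⟩ := hrep N D hD
  have hH : ∀ᶠ t : ℕ in atTop, ∀ x, x ∈ R t ↔ ∀ h ∈ H, aff h t x ≤ 0 := by simpa only [hR] using hH
  obtain ⟨W, hW⟩ := exists_finset (C₀ := C₀) H (by
    filter_upwards [hH, hsz] with t h1 h2 x hx using h2 x ((h1 x).2 hx))
  set S : ℕ → Set (Fin n → ℝ) := fun t => R t ∩ {x | ∀ j, ∃ y : ℤ, x j = (y : ℝ)} with hS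
  have hfin : ∀ᶠ t in atTop, (S t).Finite := by
    filter_upwards [hsz] with t ht
    refine ((Set.finite_Icc (fun _ : Fin n => -⌈C₀ * t⌉) (fun _ => ⌈C₀ * t⌉)).image
      (fun x j => (x j : ℝ))).subset ?_
    rintro x ⟨hx, hxi⟩
    choose y hy using hxi
    have hb : ∀ j, |y j| ≤ ⌈C₀ * t⌉ := fun j => by
      have h1 := (ht x hx j).trans (Int.le_ceil _)
      rw [hy] at h1
      exact_mod_cast h1
    exact ⟨y, ⟨fun j => (abs_le.1 (hb j)).1, fun j => (abs_le.1 (hb j)).2⟩,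
      funext fun j => (hy j).symm⟩
  have hsub : ∀ᶠ t : ℕ in atTop, Set.extremePoints ℝ (convexHull ℝ (S t)) ⊆
      {x | ∃ w ∈ W, pt w t = x} := by
    filter_upwards [hH, hW] with t hH hW x hx
    have hxS : x ∈ S t := extremePoints_convexHull_subset hx
    obtain ⟨hxR, hxi⟩ := hxS
    choose y hy using hxi
    obtain rfl : x = fun j => (y j : ℝ) := funext hy
    obtain ⟨w, hw, h⟩ := hW y ((hH _).1 hxR) (by
      intro u hu hcon
      apply hu
      have hp : ∀ s : ℤ, (fun j => (y j : ℝ) + s * u j) ∈ R t →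
          (fun j => (y j : ℝ) + s * u j) ∈ convexHull ℝ (S t) := fun s hs =>
        subset_convexHull ℝ _ ⟨hs, fun j => ⟨y j + s * u j, by push_cast; rfl⟩⟩
      have h1 := hp 1 ((hH _).2 fun h hh => by simpa using (hcon h hh).1)
      have h2 := hp (-1) ((hH _).2 fun h hh => by simpa [← sub_eq_add_neg] using (hcon h hh).2)
      have := hx.2 h1 h2 ⟨1 / 2, 1 / 2, by norm_num, by norm_num, by norm_num, by
        ext j; simp; ring⟩
      ext j
      have := congrFun this j
      simpa using this)
    exact ⟨w, hw, funext fun j => (h j).symm⟩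
  have hSep : ∀ w, EP fun t => pt w t ∈ S t := fun w => by
    have h1 := EP.conv N D hD w
    have h2 : EP fun t => ∀ j, ∃ y : ℤ, ev (w j) t = y := EP.forall fun j => EP.int (w j)
    refine (h1.and h2).congr (Eventually.of_forall fun t => ?_)
    simp [hS, hR, pt]
  have heq : ∀ w w' : Fin n → ℚ[X], EP fun t => pt w t = pt w' t := fun w w' => by
    refine (EP.forall fun j => EP.eq (w j) (w' j)).congr (Eventually.of_forall fun t => ?_)
    simp [pt, funext_iff]
  refine ⟨W, hsub, fun w _ => ?_⟩
  have hconv : ∀ T : Finset (Fin n → ℚ[X]),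
      EP fun t => pt w t ∈ convexHull ℝ {x | ∃ w' ∈ T, pt w' t = x} := fun T => by
    refine (EP.conv (fun i : T => (i : Fin n → ℚ[X])) 1 one_ne_zero w).congr
      (Eventually.of_forall fun t => ?_)
    have : (Set.range fun (i : T) j => ev ((i : Fin n → ℚ[X]) j) t / ev 1 t)
        = {x | ∃ w' ∈ T, pt w' t = x} := by
      ext x
      simp only [Set.mem_range, Subtype.exists, ev_one, div_one, exists_prop, Set.mem_ofPred_eq]
      rfl
    rw [this]
  refine ((hSep w).and (EP.exists_finset W.powerset fun T _ =>
    (EP.forall_finset T fun w' _ => (hSep w').and (heq w' w).not).and (hconv T)).not).congr ?_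
  filter_upwards [hfin, hsub] with t hfin hsub
  rw [mem_extremePoints_hull (A := {x | ∃ w ∈ W, pt w t = x} ∩ S t) hfin Set.inter_subset_right
    (Set.subset_inter hsub extremePoints_convexHull_subset)]
  refine and_congr_right fun _ => not_congr ⟨?_, fun h => ?_⟩
  · rintro ⟨T, hT, hT', hc⟩
    refine convexHull_mono ?_ hc
    rintro _ ⟨w', hw', rfl⟩
    exact ⟨⟨⟨w', Finset.mem_powerset.1 hT hw', rfl⟩, (hT' w' hw').1⟩, (hT' w' hw').2⟩
  · refine ⟨W.filter fun w' => pt w' t ∈ S t ∧ pt w' t ≠ pt w t, by simp, by simp, ?_⟩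
    refine convexHull_mono ?_ h
    rintro _ ⟨⟨⟨w', hw', rfl⟩, h1⟩, h2⟩
    exact ⟨w', Finset.mem_filter.2 ⟨hw', h1, h2⟩, rfl⟩

end IntHull

/-- **Calegari–Walker (Theorem 3.5 of \cite{CW}).**
If `R(t)` is the convex hull of vectors of rational functions `v₁(t), …, v_k(t)` of
size `O(t)`, then there is a modulus `d` such that on each residue class mod `d`, for
all sufficiently large `t`, the vertices of the convex hull of the lattice points of
`R(t)` are given by finitely many fixed polynomial vectors evaluated at `t`. -/
theorem convex_hull_lattice_vertices_EQP_of_linear_size (n k : ℕ) (hn : 0 < n) (hk : 0 < k)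
    (v : Fin k → Fin n → RatFunc ℚ)
    (hsize : ∃ C : ℝ, ∀ᶠ t : ℕ in Filter.atTop, ∀ i : Fin k,
      Real.sqrt (∑ j, (RatFunc.eval (algebraMap ℚ ℝ) (t : ℝ) (v i j)) ^ 2) ≤ C * t) :
    ∃ d : ℕ, 0 < d ∧ ∀ r : ℕ, r < d →
      ∃ (z : ℕ) (w : Fin z → Fin n → Polynomial ℚ),
        ∀ᶠ t : ℕ in Filter.atTop, t % d = r →
          Set.extremePoints ℝ
            (convexHull ℝ
              (convexHull ℝ
                  (Set.range fun i : Fin k => fun j : Fin n =>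
                    RatFunc.eval (algebraMap ℚ ℝ) (t : ℝ) (v i j)) ∩
                {x : Fin n → ℝ | ∀ j, ∃ y : ℤ, x j = (y : ℝ)})) =
          Set.range (fun h : Fin z => fun j : Fin n => (((w h j).eval (t : ℚ) : ℚ) : ℝ)) := by
  classical
  obtain ⟨N, D, hD, hND⟩ := IntHull.exists_common_denom v
  obtain ⟨C₀, hC⟩ := hsize
  have hRe : ∀ᶠ t : ℕ in Filter.atTop,
      (Set.range fun i : Fin k => fun j : Fin n => RatFunc.eval (algebraMap ℚ ℝ) (t : ℝ) (v i j)) =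
        Set.range fun i j => IntHull.ev (N i j) t / IntHull.ev D t := by
    filter_upwards [hND] with t ht
    simp only [ht]
  obtain ⟨W, hW, hEP⟩ := IntHull.main_aux N D hD C₀ _ rfl (by
    filter_upwards [hC, hND] with t hC hND x hx j
    have hcv : Convex ℝ {x : Fin n → ℝ | |x j| ≤ C₀ * t} := by
      have he : {x : Fin n → ℝ | |x j| ≤ C₀ * t} =
          (LinearMap.proj j : (Fin n → ℝ) →ₗ[ℝ] ℝ) ⁻¹' Set.Icc (-(C₀ * t)) (C₀ * t) :=
        Set.ext fun x => by
          rw [Set.mem_preimage, Set.mem_ofPred_eq, Set.mem_Icc]; exact abs_le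
      rw [he]
      exact (convex_Icc (-(C₀ * t)) (C₀ * t)).linear_preimage _
    refine convexHull_min ?_ hcv hx
    rintro _ ⟨i, rfl⟩
    have h := hC i
    simp only [hND] at h
    refine le_trans (Real.abs_le_sqrt ?_) h
    exact Finset.single_le_sum (f := fun j => (IntHull.ev (N i j) t / IntHull.ev D t) ^ 2)
      (fun _ _ => sq_nonneg _) (Finset.mem_univ j))
  obtain ⟨d, hd, hdec⟩ := IntHull.EP.uniform W hEP
  refine ⟨d, hd, fun r _ => ?_⟩
  let V := W.filter fun w => ∀ᶠ t : ℕ in Filter.atTop, t % d = r →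
    IntHull.pt w t ∈ Set.extremePoints ℝ (convexHull ℝ
      (convexHull ℝ (Set.range fun i j => IntHull.ev (N i j) t / IntHull.ev D t) ∩
        {x | ∀ j, ∃ y : ℤ, x j = (y : ℝ)}))
  refine ⟨V.card, fun h => (V.equivFin.symm h : Fin n → Polynomial ℚ), ?_⟩
  have h1 := (Filter.eventually_all_finset V).2 fun w hw => (Finset.mem_filter.1 hw).2
  have h2 := (Filter.eventually_all_finset (W \ V)).2 fun w hw => by
    obtain ⟨hw, hV⟩ := Finset.mem_sdiff.1 hw
    exact (hdec r w hw).resolve_left fun h => hV (Finset.mem_filter.2 ⟨hw, h⟩)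
  filter_upwards [hRe, hW, h1, h2] with t hRe hW h1 h2 hr
  rw [hRe]
  ext x
  constructor
  · intro hx
    obtain ⟨w, hw, rfl⟩ := hW hx
    have hwV : w ∈ V := by
      by_contra hV
      exact h2 w (Finset.mem_sdiff.2 ⟨hw, hV⟩) hr hx
    exact ⟨V.equivFin ⟨w, hwV⟩, by simp; rfl⟩
  · rintro ⟨h, rfl⟩
    exact h1 _ (V.equivFin.symm h).2 hr
end

section
/- Let n and k be positive integers and for 1 ≤ i ≤ k let v_i ∈ (ℚ(t))^n be a vector of rational functions (each defined at all sufficiently large positive integers t). For each positive integer t let R(t) ⊆ ℝ^n be the convex hull of v_1(t), …, v_k(t). Then there exists a positive integer d such that for each residue class r mod d there exist finitely many polynomial vectors w_1, …, w_z ∈ (ℚ[t])^n (with z depending on r, possibly z = 0) such that for all sufficiently large positive integers t ≡ r (mod d), the set of vertices (extreme points) of the convex hull of R(t) ∩ ℤ^n is exactly {w_1(t), …, w_z(t)}. -/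
/-!
Write `R(t)` for the polytope and `S(t)` for its lattice points. The sign of a polynomial in `t` is
eventually constant, so Fourier–Motzkin elimination can be carried out uniformly in `t`: for large
`t`, `R(t)` is cut out by finitely many linear inequalities with coefficients in `ℤ[t]`
(`hull_ineqs`), and whether a given rational vector lies in such a hull is eventually constant
(`hull_decide`).

Points of `R(t)` are bounded by a power of `t`, so those of `S(t)` can be written in base `t` with a
fixed number of digits. On vectors of digits, which are bounded by `t`, an inequality with
coefficients in `ℤ[t]` is a finite disjunction of systems of inequalities with constant normal
vectors, one system for each sequence of carries (`IsDNF.poly`). In a system with constant normals,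
consider the inequalities that are nearly tight at an integer solution `a`. If a nonzero integer
vector `u` (one of finitely many) is orthogonal to their normals, then `a + u` and `a - u` are
solutions too, and so the corresponding point of `S(t)` is not a vertex. Otherwise `a` is determined
by its slacks in these inequalities, which take boundedly many values, and is given by a polynomial
in `t` (`polynomial_or_movable`). Hence for large `t` all vertices are among the values of finitely
many polynomial vectors (`extreme_candidates`).

It remains to select the right candidates. Integrality of their values is periodic in `t`
(`exists_period`), and membership in `R(t)` is eventually constant; the vertices are the candidates
in `S(t)` that are not in the convex hull of the other ones, which again does not depend on `t`.
-/

open Polynomial Filter Set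

/-! ### Inequalities describing parametric hulls -/

/-- Evaluation of an integer polynomial at a natural number, with values in `ℝ`. -/
noncomputable def ev (t : ℕ) : ℤ[X] →+* ℝ :=
  (Int.castRingHom ℝ).comp (evalRingHom (t : ℤ))

lemma ev_apply (t : ℕ) (p : ℤ[X]) : ev t p = ((p.eval (t : ℤ) : ℤ) : ℝ) := rfl

lemma ev_eq_eval_map (t : ℕ) (p : ℤ[X]) :
    ev t p = (p.map (Int.castRingHom ℝ)).eval (t : ℝ) := by
  rw [ev_apply, show (t : ℝ) = Int.castRingHom ℝ (t : ℤ) by simp, eval_map_apply]; rfl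

lemma eventually_pos_of_leadingCoeff {p : ℤ[X]} (h : 0 < p.leadingCoeff) :
    ∀ᶠ t : ℕ in atTop, 0 < ev t p := by
  by_cases hd : 0 < p.degree
  · have hinj : Function.Injective (Int.castRingHom ℝ) := Int.cast_injective
    have h1 := (p.map (Int.castRingHom ℝ)).tendsto_atTop_of_leadingCoeff_nonneg
      (by rwa [degree_map_eq_of_injective hinj])
      (by rw [leadingCoeff_map_of_injective hinj]; simpa using h.le)
    have h2 := (h1.comp tendsto_natCast_atTop_atTop).eventually_gt_atTop 0
    filter_upwards [h2] with t ht
    rw [ev_eq_eval_map]; exact ht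
  · rw [eq_C_of_degree_le_zero (not_lt.1 hd)] at h ⊢
    rw [leadingCoeff_C] at h
    refine Eventually.of_forall fun t => ?_
    rw [ev_apply, eval_C]
    exact_mod_cast h

lemma ev_trichotomy (p : ℤ[X]) :
    (∀ᶠ t : ℕ in atTop, 0 < ev t p) ∨ p = 0 ∨ (∀ᶠ t : ℕ in atTop, ev t p < 0) := by
  rcases lt_trichotomy 0 p.leadingCoeff with h | h | h
  · exact .inl (eventually_pos_of_leadingCoeff h)
  · exact .inr (.inl (leadingCoeff_eq_zero.1 h.symm))
  · refine .inr (.inr ?_)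
    have := eventually_pos_of_leadingCoeff (p := -p) (by simpa using h)
    filter_upwards [this] with t ht
    simpa using ht

lemma ev_nonneg_or_neg (p : ℤ[X]) :
    (∀ᶠ t : ℕ in atTop, 0 ≤ ev t p) ∨ (∀ᶠ t : ℕ in atTop, ev t p < 0) := by
  rcases ev_trichotomy p with h | rfl | h
  · exact .inl (h.mono fun _ => le_of_lt)
  · exact .inl (by simp)
  · exact .inr h

lemma ev_eventually_ne_zero {p : ℤ[X]} (hp : p ≠ 0) : ∀ᶠ t : ℕ in atTop, ev t p ≠ 0 := by
  rcases ev_trichotomy p with h | h | h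
  · exact h.mono fun _ => ne_of_gt
  · exact absurd h hp
  · exact h.mono fun _ => ne_of_lt

/-- One step of Fourier–Motzkin elimination: a common multiplier `μ ≥ 0` with `μ * s p ≤ y p`
exists iff every lower bound for it is at most every upper bound. -/
lemma exists_multiplier {α : Type*} (F : Finset α) (s y : α → ℝ) :
    (∃ μ : ℝ, 0 ≤ μ ∧ ∀ p ∈ F, μ * s p ≤ y p) ↔
      (∀ p ∈ F, 0 ≤ s p → 0 ≤ y p) ∧
        ∀ p ∈ F, ∀ q ∈ F, 0 < s p → s q < 0 → 0 ≤ s p * y q - s q * y p := by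
  classical
  constructor
  · rintro ⟨μ, h0, h⟩
    refine ⟨fun p hp hs => (mul_nonneg h0 hs).trans (h p hp), fun p hp q hq hsp hsq => ?_⟩
    have h1 := mul_le_mul_of_nonneg_left (h q hq) hsp.le
    have h2 := mul_le_mul_of_nonpos_left (h p hp) hsq.le
    linarith [mul_comm (s p) (μ * s q), mul_comm (s q) (μ * s p), mul_right_comm μ (s q) (s p)]
  · rintro ⟨h1, h2⟩
    set T : Finset ℝ := insert 0 ((F.filter fun p => s p < 0).image fun p => y p / s p)
    have hT : T.Nonempty := ⟨0, Finset.mem_insert_self _ _⟩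
    refine ⟨T.max' hT, T.le_max' _ (Finset.mem_insert_self _ _), fun p hp => ?_⟩
    rcases lt_trichotomy (s p) 0 with hs | hs | hs
    · have : y p / s p ≤ T.max' hT := T.le_max' _ (Finset.mem_insert_of_mem
        (Finset.mem_image_of_mem _ (Finset.mem_filter.2 ⟨hp, hs⟩)))
      rwa [div_le_iff_of_neg hs] at this
    · rw [hs, mul_zero]; exact h1 p hp hs.ge
    · rw [← le_div_iff₀ hs]
      refine Finset.max'_le _ _ _ fun z hz => ?_
      rcases Finset.mem_insert.1 hz with rfl | hz
      · exact div_nonneg (h1 p hp hs.le) hs.le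
      · obtain ⟨q, hq, rfl⟩ := Finset.mem_image.1 hz
        obtain ⟨hq, hsq⟩ := Finset.mem_filter.1 hq
        rw [div_le_iff_of_neg hsq, div_mul_eq_mul_div, div_le_iff₀ hs]
        linarith [h2 p hp q hq hs hsq, mul_comm (y q) (s p), mul_comm (y p) (s q)]

/-- A cone generated by polynomial vectors is, for all large parameters, cut out by finitely
many homogeneous linear inequalities with polynomial coefficients. -/
lemma cone_ineqs {ι κ : Type*} [Fintype κ] (V : ι → κ → ℤ[X]) (s : Finset ι) :
    ∃ F : Finset (κ → ℤ[X]), ∀ᶠ t : ℕ in atTop, ∀ x : κ → ℝ,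
      (∃ c : ι → ℝ, (∀ i, 0 ≤ c i) ∧ ∀ j, x j = ∑ i ∈ s, c i * ev t (V i j)) ↔
        ∀ p ∈ F, 0 ≤ ∑ j, ev t (p j) * x j := by
  classical
  induction s using Finset.induction_on with
  | empty =>
    refine ⟨Finset.univ.image (fun j => Pi.single j 1) ∪
      Finset.univ.image (fun j => Pi.single j (-1)), Eventually.of_forall fun t x => ?_⟩
    have key : ∀ (j : κ) (a : ℤ[X]), ∑ i, ev t ((Pi.single j a : κ → ℤ[X]) i) * x i
        = ev t a * x j := by
      intro j a
      rw [Finset.sum_eq_single j]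
      · simp
      · intro i _ hi; simp [hi]
      · simp
    simp only [Finset.sum_empty]
    constructor
    · rintro ⟨-, -, h⟩ p -
      simp [h]
    · intro h
      refine ⟨0, fun _ => le_rfl, fun j => le_antisymm ?_ ?_⟩
      · have := h (Pi.single j (-1)) (Finset.mem_union_right _ (Finset.mem_image_of_mem _ (Finset.mem_univ j)))
        rw [key] at this
        simpa using this
      · have := h (Pi.single j 1) (Finset.mem_union_left _ (Finset.mem_image_of_mem _ (Finset.mem_univ j)))
        rw [key] at this
        simpa using this
  | insert a s ha ih =>
    obtain ⟨F, hF⟩ := ih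
    set σ : (κ → ℤ[X]) → ℤ[X] := fun p => ∑ j, p j * V a j with hσ
    have hsign : ∀ᶠ t : ℕ in atTop, ∀ p ∈ F, (0 ≤ ev t (σ p) ↔ 0 ≤ (σ p).leadingCoeff) ∧
        (0 < ev t (σ p) ↔ 0 < (σ p).leadingCoeff) := by
      rw [eventually_all_finset]
      intro p _
      rcases lt_trichotomy 0 (σ p).leadingCoeff with h | h | h
      · filter_upwards [eventually_pos_of_leadingCoeff h] with t ht
        simp [h, ht, h.le, ht.le]
      · refine Eventually.of_forall fun t => ?_
        rw [leadingCoeff_eq_zero.1 h.symm]; simp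
      · have h' := eventually_pos_of_leadingCoeff (p := -σ p) (by simpa using h)
        filter_upwards [h'] with t ht
        have ht : ev t (σ p) < 0 := by simpa using ht
        simp [h.not_ge, ht.not_ge, h.not_gt, ht.not_gt]
    refine ⟨F.filter (fun p => 0 ≤ (σ p).leadingCoeff) ∪
      Finset.image₂ (fun p q => σ p • q - σ q • p) (F.filter fun p => 0 < (σ p).leadingCoeff)
        (F.filter fun p => ¬ 0 ≤ (σ p).leadingCoeff), ?_⟩
    filter_upwards [hF, hsign] with t hF hs x
    have hlin : ∀ p : κ → ℤ[X], ∀ μ : ℝ, ∑ j, ev t (p j) * (x j - μ * ev t (V a j))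
        = (∑ j, ev t (p j) * x j) - μ * ev t (σ p) := by
      intro p μ
      simp only [hσ, map_sum, map_mul, mul_sub, Finset.sum_sub_distrib, Finset.mul_sum]
      congr 1
      exact Finset.sum_congr rfl fun j _ => by ring
    have hpair : ∀ p q : κ → ℤ[X], ∑ j, ev t ((σ p • q - σ q • p) j) * x j =
        ev t (σ p) * (∑ j, ev t (q j) * x j) - ev t (σ q) * (∑ j, ev t (p j) * x j) := by
      intro p q
      simp only [Pi.sub_apply, Pi.smul_apply, smul_eq_mul, map_sub, map_mul, sub_mul,
        Finset.sum_sub_distrib, Finset.mul_sum, mul_assoc]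
    have hstep : (∃ c : ι → ℝ, (∀ i, 0 ≤ c i) ∧
          ∀ j, x j = ∑ i ∈ insert a s, c i * ev t (V i j)) ↔
        ∃ μ : ℝ, 0 ≤ μ ∧ ∀ p ∈ F, μ * ev t (σ p) ≤ ∑ j, ev t (p j) * x j := by
      constructor
      · rintro ⟨c, hc, hx⟩
        refine ⟨c a, hc a, fun p hp => ?_⟩
        have := (hF fun j => x j - c a * ev t (V a j)).1
          ⟨c, hc, fun j => by rw [hx j, Finset.sum_insert ha]; ring⟩ p hp
        rw [hlin] at this
        linarith
      · rintro ⟨μ, hμ, h⟩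
        obtain ⟨c, hc, hx⟩ := (hF fun j => x j - μ * ev t (V a j)).2 fun p hp => by
          rw [hlin]; linarith [h p hp]
        refine ⟨Function.update c a μ, fun i => ?_, fun j => ?_⟩
        · by_cases hi : i = a
          · subst hi; simpa using hμ
          · simpa [hi] using hc i
        · rw [Finset.sum_insert ha, Function.update_self]
          have : ∑ i ∈ s, Function.update c a μ i * ev t (V i j)
              = ∑ i ∈ s, c i * ev t (V i j) := Finset.sum_congr rfl fun i hi => by
            rw [Function.update_of_ne (by rintro rfl; exact ha hi)]
          rw [this, ← hx j]; ring
    rw [hstep, exists_multiplier]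
    constructor
    · rintro ⟨h1, h2⟩ p' hp'
      rcases Finset.mem_union.1 hp' with hp | hp
      · obtain ⟨hp, hs'⟩ := Finset.mem_filter.1 hp
        exact h1 p' hp ((hs p' hp).1.2 hs')
      · obtain ⟨p, hp1, q, hq, rfl⟩ := Finset.mem_image₂.1 hp
        obtain ⟨hp, hsp⟩ := Finset.mem_filter.1 hp1
        obtain ⟨hq, hsq⟩ := Finset.mem_filter.1 hq
        rw [hpair]
        exact h2 p hp q hq ((hs p hp).2.2 hsp)
          (not_le.1 fun h => hsq ((hs q hq).1.1 h))
    · intro h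
      refine ⟨fun p hp h0 => h p (Finset.mem_union_left _
        (Finset.mem_filter.2 ⟨hp, (hs p hp).1.1 h0⟩)), fun p hp q hq h0 h1 => ?_⟩
      rw [← hpair]
      exact h _ (Finset.mem_union_right _ (Finset.mem_image₂_of_mem
        (Finset.mem_filter.2 ⟨hp, (hs p hp).2.1 h0⟩)
        (Finset.mem_filter.2 ⟨hq, fun h => absurd ((hs q hq).1.2 h) h1.not_ge⟩)))

/-- A real function of the parameter that is eventually a quotient of integer polynomials with
positive denominator. -/
def IsRat (f : ℕ → ℝ) : Prop :=
  ∃ N D : ℤ[X], ∀ᶠ t : ℕ in atTop, 0 < ev t D ∧ f t = ev t N / ev t D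

lemma IsRat.common_denom {α : Type*} [Fintype α] {f : α → ℕ → ℝ} (hf : ∀ a, IsRat (f a)) :
    ∃ (D : ℤ[X]) (N : α → ℤ[X]), ∀ᶠ t : ℕ in atTop, 0 < ev t D ∧
      ∀ a, f a t = ev t (N a) / ev t D := by
  classical
  choose N D h using hf
  refine ⟨∏ a, D a, fun a => N a * ∏ b ∈ Finset.univ.erase a, D b, ?_⟩
  filter_upwards [eventually_all.2 h] with t ht
  have hpos : ∀ s : Finset α, 0 < ev t (∏ a ∈ s, D a) := fun s => by
    rw [map_prod]; exact Finset.prod_pos fun a _ => (ht a).1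
  refine ⟨hpos _, fun a => ?_⟩
  rw [(ht a).2, ← Finset.mul_prod_erase _ _ (Finset.mem_univ a), map_mul, map_mul,
    mul_div_mul_right _ _ (hpos _).ne']

lemma mem_convexHull_range_iff {ι κ : Type*} [Fintype ι] (v : ι → κ → ℝ) (x : κ → ℝ) :
    x ∈ convexHull ℝ (range v) ↔
      ∃ c : ι → ℝ, (∀ i, 0 ≤ c i) ∧ ∑ i, c i = 1 ∧ ∀ j, x j = ∑ i, c i * v i j := by
  classical
  constructor
  · intro h
    refine convexHull_min (t := {x | ∃ c : ι → ℝ, (∀ i, 0 ≤ c i) ∧ ∑ i, c i = 1 ∧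
      ∀ j, x j = ∑ i, c i * v i j}) ?_ ?_ h
    · rintro _ ⟨i, rfl⟩
      refine ⟨Pi.single i 1, fun k => ?_, by simp, fun j => ?_⟩
      · by_cases hk : k = i
        · subst hk; simp
        · simp [hk]
      · simp [Pi.single_apply]
    · rintro x ⟨c, hc, hc1, hx⟩ y ⟨d, hd, hd1, hy⟩ a b ha hb hab
      refine ⟨fun i => a * c i + b * d i, fun i => ?_, ?_, fun j => ?_⟩
      · have := hc i; have := hd i; positivity
      · rw [Finset.sum_add_distrib, ← Finset.mul_sum, ← Finset.mul_sum, hc1, hd1]; simpa using hab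
      · simp only [Pi.add_apply, Pi.smul_apply, smul_eq_mul, hx, hy, Finset.mul_sum,
          ← Finset.sum_add_distrib]
        exact Finset.sum_congr rfl fun i _ => by ring
  · rintro ⟨c, hc, hc1, hx⟩
    refine mem_convexHull_of_exists_fintype c v hc hc1 (fun i => mem_range_self i) ?_
    ext j
    simp [hx, Finset.sum_apply]

/-- The convex hull of finitely many rational vectors is, for all large parameters, cut out by
finitely many linear inequalities with polynomial coefficients. -/
lemma hull_ineqs {ι κ : Type*} [Fintype ι] [Fintype κ] {v : ι → κ → ℕ → ℝ}
    (hv : ∀ i j, IsRat (v i j)) :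
    ∃ F : Finset ((κ → ℤ[X]) × ℤ[X]), ∀ᶠ t : ℕ in atTop, ∀ x : κ → ℝ,
      x ∈ convexHull ℝ (range fun i j => v i j t) ↔
        ∀ p ∈ F, 0 ≤ ∑ j, ev t (p.1 j) * x j + ev t p.2 := by
  classical
  obtain ⟨D, N, hDN⟩ := IsRat.common_denom (f := fun a : ι × κ => v a.1 a.2)
    fun a => hv a.1 a.2
  -- Homogenise: `x` lies in the hull iff `(x, 1)` lies in the cone over the `(N i, D)`.
  obtain ⟨F, hF⟩ := cone_ineqs (κ := Option κ) (fun i o => o.elim D fun j => N (i, j))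
    (Finset.univ : Finset ι)
  refine ⟨F.image fun p => (fun j => p (some j), p none), ?_⟩
  filter_upwards [hDN, hF] with t ht hF x
  obtain ⟨hD, hN⟩ := ht
  have h1 := hF fun o => o.elim 1 x
  simp only [Option.forall, Fintype.sum_option, Option.elim] at h1
  rw [mem_convexHull_range_iff, Finset.forall_mem_image]
  have h2 : (∃ c : ι → ℝ, (∀ i, 0 ≤ c i) ∧ ∑ i, c i = 1 ∧ ∀ j, x j = ∑ i, c i * v i j t) ↔
      ∃ c : ι → ℝ, (∀ i, 0 ≤ c i) ∧ (1 = ∑ i, c i * ev t D) ∧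
        ∀ j, x j = ∑ i, c i * ev t (N (i, j)) := by
    constructor
    · rintro ⟨c, hc, hc1, hx⟩
      refine ⟨fun i => c i / ev t D, fun i => div_nonneg (hc i) hD.le, ?_, fun j => ?_⟩
      · simp [div_mul_cancel₀ _ hD.ne', hc1]
      · rw [hx]
        refine Finset.sum_congr rfl fun i _ => ?_
        rw [hN (i, j)]; ring
    · rintro ⟨c, hc, hc1, hx⟩
      refine ⟨fun i => c i * ev t D, fun i => mul_nonneg (hc i) hD.le, hc1.symm, fun j => ?_⟩
      rw [hx]
      refine Finset.sum_congr rfl fun i _ => ?_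
      rw [hN (i, j)]; field_simp
  rw [h2, h1]
  refine forall₂_congr fun p _ => ?_
  rw [mul_one, add_comm]

/-- Membership of a rational vector in the convex hull of finitely many others is eventually
constant. -/
lemma hull_decide {ι κ : Type*} [Fintype ι] [Fintype κ] {v : ι → κ → ℕ → ℝ} {u : κ → ℕ → ℝ}
    (hv : ∀ i j, IsRat (v i j)) (hu : ∀ j, IsRat (u j)) :
    (∀ᶠ t : ℕ in atTop, (fun j => u j t) ∈ convexHull ℝ (range fun i j => v i j t)) ∨
      (∀ᶠ t : ℕ in atTop, (fun j => u j t) ∉ convexHull ℝ (range fun i j => v i j t)) := by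
  obtain ⟨F, hF⟩ := hull_ineqs hv
  obtain ⟨D, N, hDN⟩ := IsRat.common_denom hu
  set q : (κ → ℤ[X]) × ℤ[X] → ℤ[X] := fun p => ∑ j, p.1 j * N j + p.2 * D with hq
  have key : ∀ᶠ t : ℕ in atTop, ∀ p, ∑ j, ev t (p.1 j) * u j t + ev t p.2
      = ev t (q p) / ev t D := by
    filter_upwards [hDN] with t ht p
    obtain ⟨hD, hN⟩ := ht
    rw [eq_div_iff hD.ne']
    simp only [hq, map_add, map_sum, map_mul, add_mul, Finset.sum_mul, hN]
    congr 1
    refine Finset.sum_congr rfl fun j _ => ?_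
    field_simp
  by_cases h : ∀ p ∈ F, ∀ᶠ t : ℕ in atTop, 0 ≤ ev t (q p)
  · left
    filter_upwards [hF, hDN, key, (eventually_all_finset F).2 h] with t h1 h2 h3 h4
    rw [h1]
    intro p hp
    rw [h3]
    exact div_nonneg (h4 p hp) h2.1.le
  · right
    obtain ⟨p, hp, hn⟩ : ∃ p ∈ F, ¬ ∀ᶠ t : ℕ in atTop, 0 ≤ ev t (q p) := by
      by_contra hc; exact h fun p hp => by_contra fun hn => hc ⟨p, hp, hn⟩
    have hneg := (ev_nonneg_or_neg (q p)).resolve_left hn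
    filter_upwards [hF, hDN, key, hneg] with t h1 h2 h3 h4
    rw [h1]
    intro h
    have := h p hp
    rw [h3] at this
    exact absurd this (not_le.2 (div_neg_of_neg_of_pos h4 h2.1))

/-! ### Parametric systems with constant normals -/

/-- A property of integer vectors `a`, depending on a parameter `t`, which for all large `t` and
on the box `|a k| ≤ t` is a finite disjunction of finite systems of linear inequalities whose
normal vectors do not depend on `t` and whose right-hand sides are integer polynomials in `t`. -/
def IsDNF {κ : Type*} [Fintype κ] (Q : ℕ → (κ → ℤ) → Prop) : Prop :=
  ∃ 𝒞 : Finset (Finset ((κ → ℤ) × ℤ[X])), ∀ᶠ t : ℕ in atTop, ∀ a : κ → ℤ, (∀ k, |a k| ≤ t) →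
    (Q t a ↔ ∃ C ∈ 𝒞, ∀ c ∈ C, 0 ≤ ∑ k, c.1 k * a k + c.2.eval (t : ℤ))

namespace IsDNF

variable {κ : Type*} [Fintype κ] {Q R : ℕ → (κ → ℤ) → Prop}

lemma congr (hQ : IsDNF Q)
    (h : ∀ᶠ t : ℕ in atTop, ∀ a : κ → ℤ, (∀ k, |a k| ≤ t) → (R t a ↔ Q t a)) : IsDNF R := by
  obtain ⟨𝒞, h𝒞⟩ := hQ
  refine ⟨𝒞, ?_⟩
  filter_upwards [h, h𝒞] with t h1 h2 a ha
  rw [h1 a ha, h2 a ha]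

lemma atom (ℓ : κ → ℤ) (β : ℤ[X]) :
    IsDNF fun t a => 0 ≤ ∑ k, ℓ k * a k + β.eval (t : ℤ) :=
  ⟨{{(ℓ, β)}}, Eventually.of_forall fun t a _ => by simp⟩

lemma true : IsDNF fun _ (_ : κ → ℤ) => True :=
  ⟨{∅}, Eventually.of_forall fun t a _ => by simp⟩

lemma false : IsDNF fun _ (_ : κ → ℤ) => False :=
  ⟨∅, Eventually.of_forall fun t a _ => by simp⟩

lemma and (hQ : IsDNF Q) (hR : IsDNF R) : IsDNF fun t a => Q t a ∧ R t a := by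
  classical
  obtain ⟨A, hA⟩ := hQ
  obtain ⟨B, hB⟩ := hR
  refine ⟨Finset.image₂ (· ∪ ·) A B, ?_⟩
  filter_upwards [hA, hB] with t h1 h2 a ha
  rw [h1 a ha, h2 a ha]
  constructor
  · rintro ⟨⟨C, hC, h⟩, ⟨D, hD, h'⟩⟩
    refine ⟨C ∪ D, Finset.mem_image₂_of_mem hC hD, fun c hc => ?_⟩
    exact (Finset.mem_union.1 hc).elim (h c) (h' c)
  · rintro ⟨E, hE, h⟩
    obtain ⟨C, hC, D, hD, rfl⟩ := Finset.mem_image₂.1 hE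
    exact ⟨⟨C, hC, fun c hc => h c (Finset.mem_union_left _ hc)⟩,
      ⟨D, hD, fun c hc => h c (Finset.mem_union_right _ hc)⟩⟩

lemma or (hQ : IsDNF Q) (hR : IsDNF R) : IsDNF fun t a => Q t a ∨ R t a := by
  classical
  obtain ⟨A, hA⟩ := hQ
  obtain ⟨B, hB⟩ := hR
  refine ⟨A ∪ B, ?_⟩
  filter_upwards [hA, hB] with t h1 h2 a ha
  rw [h1 a ha, h2 a ha]
  simp only [Finset.mem_union, or_and_right, exists_or]

lemma forall_mem {α : Type*} (s : Finset α) {Q : α → ℕ → (κ → ℤ) → Prop}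
    (h : ∀ i ∈ s, IsDNF (Q i)) : IsDNF fun t a => ∀ i ∈ s, Q i t a := by
  classical
  induction s using Finset.induction_on with
  | empty => exact IsDNF.true.congr (Eventually.of_forall fun t a _ => by simp)
  | insert i s _ ih =>
    exact ((h i (Finset.mem_insert_self _ _)).and
      (ih fun j hj => h j (Finset.mem_insert_of_mem hj))).congr
      (Eventually.of_forall fun t a _ => by simp)

lemma exists_mem {α : Type*} (s : Finset α) {Q : α → ℕ → (κ → ℤ) → Prop}
    (h : ∀ i ∈ s, IsDNF (Q i)) : IsDNF fun t a => ∃ i ∈ s, Q i t a := by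
  classical
  induction s using Finset.induction_on with
  | empty => exact IsDNF.false.congr (Eventually.of_forall fun t a _ => by simp)
  | insert i s _ ih =>
    exact ((h i (Finset.mem_insert_self _ _)).or
      (ih fun j hj => h j (Finset.mem_insert_of_mem hj))).congr
      (Eventually.of_forall fun t a _ => by simp)

/-- A linear inequality with polynomial coefficients is turned into inequalities with constant
normals on the box `|a k| ≤ t`: the part `L` of the left-hand side with constant coefficients is
`O(t)`, so its quotient `q` by `t` takes boundedly many values and can be carried over to the
remaining terms, which are then divided by `t`. -/
lemma poly (M : ℕ) : ∀ (P : κ → ℤ[X]) (p₀ : ℤ[X]), (∀ k, (P k).natDegree ≤ M) →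
    IsDNF fun t a => 0 ≤ ∑ k, (P k).eval (t : ℤ) * a k + p₀.eval (t : ℤ) := by
  induction M with
  | zero =>
    intro P p₀ hP
    refine (IsDNF.atom (fun k => (P k).coeff 0) p₀).congr (Eventually.of_forall fun t a _ => ?_)
    have : ∀ k, (P k).eval (t : ℤ) = (P k).coeff 0 := fun k => by
      conv_lhs => rw [eq_C_of_natDegree_le_zero (hP k), eval_C]
    simp only [this]
  | succ M ih =>
    intro P p₀ hP
    set B : ℤ := ∑ k, |(P k).coeff 0| + |p₀.coeff 0| with hB
    refine (IsDNF.exists_mem (Finset.Icc (-B) B)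
      (Q := fun q t a => 0 ≤ ∑ k, (P k).coeff 0 * a k + (C (p₀.coeff 0) - C q * X).eval (t : ℤ) ∧
        0 ≤ ∑ k, (-(P k).coeff 0) * a k + (C q * X + X - 1 - C (p₀.coeff 0)).eval (t : ℤ) ∧
        0 ≤ ∑ k, (P k).divX.eval (t : ℤ) * a k + (p₀.divX + C q).eval (t : ℤ))
      fun q _ => (IsDNF.atom _ _).and ((IsDNF.atom _ _).and (ih _ _ fun k => ?_))).congr ?_
    · rw [natDegree_divX_eq_natDegree_tsub_one]
      have := hP k
      omega
    filter_upwards [eventually_ge_atTop 1] with t ht a ha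
    have ht0 : (0 : ℤ) < t := by exact_mod_cast ht
    have hdecomp : ∀ p : ℤ[X], p.eval (t : ℤ) = p.divX.eval (t : ℤ) * t + p.coeff 0 := fun p => by
      conv_lhs => rw [← divX_mul_X_add p]
      simp
    set L : ℤ := ∑ k, (P k).coeff 0 * a k + p₀.coeff 0 with hL
    set S : ℤ := ∑ k, (P k).divX.eval (t : ℤ) * a k + p₀.divX.eval (t : ℤ) with hS
    have htot : ∑ k, (P k).eval (t : ℤ) * a k + p₀.eval (t : ℤ) = L + t * S := by
      simp only [hdecomp (P _), hdecomp p₀, hL, hS, add_mul, Finset.sum_add_distrib, mul_add,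
        Finset.mul_sum]
      have : ∀ k, eval (t : ℤ) (P k).divX * t * a k = t * (eval (t : ℤ) (P k).divX * a k) :=
        fun k => by ring
      simp only [this]
      ring
    have hLB : |L| ≤ B * t := by
      rw [hL, hB, add_mul, Finset.sum_mul]
      refine (abs_add_le _ _).trans (add_le_add ((Finset.abs_sum_le_sum_abs _ _).trans
        (Finset.sum_le_sum fun k _ => ?_)) (le_mul_of_one_le_right (abs_nonneg _) (by omega)))
      rw [abs_mul]
      exact mul_le_mul_of_nonneg_left (ha k) (abs_nonneg _)
    have e1 : ∀ q : ℤ, ∑ k, (P k).coeff 0 * a k + (C (p₀.coeff 0) - C q * X).eval (t : ℤ)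
        = L - q * t := fun q => by simp [hL]; ring
    have e2 : ∀ q : ℤ, ∑ k, (-(P k).coeff 0) * a k
        + (C q * X + X - 1 - C (p₀.coeff 0)).eval (t : ℤ) = q * t + t - 1 - L := fun q => by
      simp [hL]; ring
    have e3 : ∀ q : ℤ, ∑ k, (P k).divX.eval (t : ℤ) * a k + (p₀.divX + C q).eval (t : ℤ)
        = S + q := fun q => by simp [hS]; ring
    simp only [htot, e1, e2, e3]
    obtain ⟨hL1, hL2⟩ := abs_le.1 hLB
    constructor
    · intro h
      have h1 := Int.emod_nonneg L ht0.ne'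
      have h2 := Int.emod_lt_of_pos L ht0
      have h3 := Int.mul_ediv_add_emod L t
      refine ⟨L / t, Finset.mem_Icc.2 ⟨?_, ?_⟩, by linarith, by linarith, ?_⟩
      · rw [Int.le_ediv_iff_mul_le ht0]; linarith
      · exact Int.ediv_le_of_le_mul ht0 hL2
      · by_contra hc
        have : S + L / t ≤ -1 := by omega
        nlinarith
    · rintro ⟨q, -, h1, h2, h3⟩
      nlinarith

end IsDNF

/-- Integer linear forms either have a common nonzero integer zero or determine the vector they are
evaluated at, by a rational left inverse. -/
lemma kernel_or_inverse {ι κ : Type*} [Fintype ι] [Fintype κ] (ℓ : ι → κ → ℤ) (I : Finset ι) :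
    (∃ u : κ → ℤ, u ≠ 0 ∧ ∀ i ∈ I, ∑ k, ℓ i k * u k = 0) ∨
      ∃ G : κ → ι → ℚ, ∀ (a : κ → ℤ) (k : κ),
        (a k : ℚ) = ∑ i ∈ I, G k i * ((∑ j, ℓ i j * a j : ℤ) : ℚ) := by
  classical
  set f : (κ → ℚ) →ₗ[ℚ] (ι → ℚ) :=
    Matrix.toLin' (Matrix.of fun i k => if i ∈ I then (ℓ i k : ℚ) else 0) with hf
  have hfa : ∀ (a : κ → ℚ) (i : ι), f a i = if i ∈ I then ∑ k, (ℓ i k : ℚ) * a k else 0 := by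
    intro a i
    rw [hf, Matrix.toLin'_apply]
    by_cases hi : i ∈ I <;> simp [Matrix.mulVec, dotProduct, hi]
  by_cases hker : LinearMap.ker f = ⊥
  · right
    obtain ⟨g, hg⟩ := f.exists_leftInverse_of_injective hker
    refine ⟨LinearMap.toMatrix' g, fun a k => ?_⟩
    have h1 : g (f fun k => (a k : ℚ)) k = a k := by
      rw [← LinearMap.comp_apply, hg]; rfl
    rw [← h1, ← LinearMap.toMatrix'_mulVec g, Matrix.mulVec, dotProduct,
      ← Finset.sum_subset (Finset.subset_univ I)]
    · refine Finset.sum_congr rfl fun i hi => ?_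
      rw [hfa, if_pos hi]; push_cast; rfl
    · intro i _ hi
      rw [hfa, if_neg hi, mul_zero]
  · left
    obtain ⟨w, hw, hw0⟩ := (Submodule.ne_bot_iff _).1 hker
    obtain ⟨b, hb⟩ := IsLocalization.exist_integer_multiples_of_finite (nonZeroDivisors ℤ) w
    choose u hu using hb
    have hb0 : ((b : ℤ) : ℚ) ≠ 0 := by exact_mod_cast nonZeroDivisors.ne_zero b.2
    have hu' : ∀ k, (u k : ℚ) = (b : ℤ) * w k := fun k => by
      have := hu k
      simpa [Submonoid.smul_def] using this
    refine ⟨u, fun h => hw0 ?_, fun i hi => ?_⟩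
    · ext k
      have := hu' k
      rw [h] at this
      simpa [hb0] using this.symm
    · have h1 : f w i = 0 := by rw [LinearMap.mem_ker.1 hw]; rfl
      rw [hfa, if_pos hi] at h1
      have : ((∑ k, ℓ i k * u k : ℤ) : ℚ) = 0 := by
        push_cast
        simp only [hu', mul_left_comm _ ((b : ℤ) : ℚ), ← Finset.mul_sum, h1, mul_zero]
      exact_mod_cast this

/-- The integer points of a system of inequalities with constant normals and parametric
right-hand sides: such a point is one of finitely many polynomial vectors, or can be moved in both
directions by one of finitely many nonzero vectors. If the inequalities that are nearly tight at
the point have a common integer kernel vector then that vector works; otherwise the point is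
determined by its bounded slacks in these inequalities. -/
lemma polynomial_or_movable {κ : Type*} [Fintype κ] (C : Finset ((κ → ℤ) × ℤ[X])) :
    ∃ (W : Finset (κ → ℚ[X])) (U : Finset (κ → ℤ)), (∀ u ∈ U, u ≠ 0) ∧
      ∀ (t : ℕ) (a : κ → ℤ), (∀ c ∈ C, 0 ≤ ∑ k, c.1 k * a k + c.2.eval (t : ℤ)) →
        (∃ w ∈ W, ∀ k, (a k : ℚ) = (w k).eval (t : ℚ)) ∨
        ∃ u ∈ U, (∀ c ∈ C, 0 ≤ ∑ k, c.1 k * (a k + u k) + c.2.eval (t : ℤ)) ∧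
          (∀ c ∈ C, 0 ≤ ∑ k, c.1 k * (a k - u k) + c.2.eval (t : ℤ)) := by
  classical
  set K : Finset C → Prop := fun I =>
    ∃ u : κ → ℤ, u ≠ 0 ∧ ∀ i ∈ I, ∑ k, i.1.1 k * u k = 0 with hK
  have hu : ∀ I : Finset C, ∃ u : κ → ℤ, K I → u ≠ 0 ∧ ∀ i ∈ I, ∑ k, i.1.1 k * u k = 0 := by
    intro I
    by_cases h : K I
    · exact h.imp fun u hu _ => hu
    · exact ⟨0, fun h' => absurd h' h⟩
  have hG : ∀ I : Finset C, ∃ G : κ → C → ℚ, ¬ K I → ∀ (a : κ → ℤ) (k : κ),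
      (a k : ℚ) = ∑ i ∈ I, G k i * ((∑ j, i.1.1 j * a j : ℤ) : ℚ) := by
    intro I
    rcases kernel_or_inverse (fun i : C => i.1.1) I with h | ⟨G, hG⟩
    · exact ⟨0, fun h' => absurd h h'⟩
    · exact ⟨G, fun _ => hG⟩
  choose u hu using hu
  choose G hG using hG
  -- A slack of at least `D` in an inequality permits a move by any `± u I`.
  set D : ℕ := ∑ I : Finset C, ∑ i : C, (∑ k, i.1.1 k * u I k).natAbs with hD
  have hDle : ∀ I (i : C), |∑ k, i.1.1 k * u I k| ≤ D := by
    intro I i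
    rw [Int.abs_eq_natAbs, hD]
    have h1 := Finset.single_le_sum (f := fun i : C => (∑ k, i.1.1 k * u I k).natAbs)
      (fun _ _ => Nat.zero_le _) (Finset.mem_univ i)
    have h2 := Finset.single_le_sum
      (f := fun I : Finset C => ∑ i : C, (∑ k, i.1.1 k * u I k).natAbs)
      (fun _ _ => Nat.zero_le _) (Finset.mem_univ I)
    exact_mod_cast h1.trans h2
  refine ⟨Finset.univ.image fun Is : Finset C × (C → Fin (D + 1)) => fun k =>
      ∑ i ∈ Is.1, Polynomial.C (G Is.1 k i) *
        (Polynomial.C ((Is.2 i : ℕ) : ℚ) - i.1.2.map (Int.castRingHom ℚ)),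
    (Finset.univ.filter K).image u, ?_, fun t a ha => ?_⟩
  · intro w hw
    obtain ⟨I, hI, rfl⟩ := Finset.mem_image.1 hw
    exact (hu I (Finset.mem_filter.1 hI).2).1
  set sl : C → ℤ := fun i => ∑ k, i.1.1 k * a k + i.1.2.eval (t : ℤ) with hsl
  set I : Finset C := Finset.univ.filter fun i => sl i < D with hI
  by_cases hKI : K I
  · right
    refine ⟨u I, Finset.mem_image_of_mem _ (Finset.mem_filter.2 ⟨Finset.mem_univ _, hKI⟩), ?_⟩
    have key : ∀ c ∈ C, |∑ k, c.1 k * u I k| ≤ ∑ k, c.1 k * a k + c.2.eval (t : ℤ) := by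
      intro c hc
      by_cases hcI : (⟨c, hc⟩ : C) ∈ I
      · have := (hu I hKI).2 _ hcI
        simp only at this
        rw [this, abs_zero]
        exact ha c hc
      · have h1 : (D : ℤ) ≤ sl ⟨c, hc⟩ := by
          by_contra hlt
          exact hcI (Finset.mem_filter.2 ⟨Finset.mem_univ _, not_le.1 hlt⟩)
        exact (hDle I ⟨c, hc⟩).trans h1
    constructor
    · intro c hc
      have := (abs_le.1 (key c hc)).1
      simp only [mul_add, Finset.sum_add_distrib]
      linarith
    · intro c hc
      have := (abs_le.1 (key c hc)).2
      simp only [mul_sub, Finset.sum_sub_distrib]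
      linarith
  · left
    have hDpos : ∀ i ∈ I, sl i < D := fun i hi => (Finset.mem_filter.1 hi).2
    have hs : ∀ i : C, ∃ s : ℕ, sl i = s := fun i => Int.eq_ofNat_of_zero_le (ha i.1 i.2)
    choose s hs using hs
    refine ⟨_, Finset.mem_image_of_mem _ (Finset.mem_univ
      (I, fun i => ⟨min (s i) D, by omega⟩)), fun k => ?_⟩
    rw [hG I hKI a k, eval_finsetSum]
    refine Finset.sum_congr rfl fun i hi => ?_
    have h1 : min (s i) D = s i := by have := hDpos i hi; rw [hs] at this; omega
    have h2 : ∑ k, i.1.1 k * a k = s i - i.1.2.eval (t : ℤ) := by rw [← hs i, hsl]; ring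
    simp only [h2, h1, eval_mul, eval_sub, eval_C, show (t : ℚ) = Int.castRingHom ℚ (t : ℤ) by simp,
      eval_map_apply]
    simp

/-! ### Candidates for the vertices -/

lemma exists_abs_ev_le_pow (p : ℤ[X]) : ∃ N : ℕ, ∀ᶠ t : ℕ in atTop, |ev t p| ≤ (t : ℝ) ^ N := by
  induction p using Polynomial.induction_on' with
  | add p q hp hq =>
    obtain ⟨N, hN⟩ := hp
    obtain ⟨M, hM⟩ := hq
    refine ⟨max N M + 1, ?_⟩
    filter_upwards [hN, hM, eventually_ge_atTop 2] with t h1 h2 ht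
    have ht : (2 : ℝ) ≤ t := by exact_mod_cast ht
    have h3 : (t : ℝ) ^ N ≤ t ^ max N M := pow_le_pow_right₀ (by linarith) (le_max_left _ _)
    have h4 : (t : ℝ) ^ M ≤ t ^ max N M := pow_le_pow_right₀ (by linarith) (le_max_right _ _)
    rw [map_add, pow_succ]
    have h5 : (0 : ℝ) ≤ t ^ max N M := by positivity
    nlinarith [abs_add_le (ev t p) (ev t q)]
  | monomial n a =>
    refine ⟨n + 1, ?_⟩
    filter_upwards [eventually_ge_atTop a.natAbs] with t ht
    have ht : |(a : ℝ)| ≤ t := by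
      rw [← Int.cast_abs, Int.abs_eq_natAbs]; exact_mod_cast ht
    rw [ev_apply, eval_monomial, pow_succ']
    push_cast
    rw [abs_mul, abs_pow, Nat.abs_cast]
    gcongr

lemma IsRat.exists_abs_le_pow {f : ℕ → ℝ} (hf : IsRat f) :
    ∃ N : ℕ, ∀ᶠ t : ℕ in atTop, |f t| ≤ (t : ℝ) ^ N := by
  obtain ⟨P, D, h⟩ := hf
  obtain ⟨N, hN⟩ := exists_abs_ev_le_pow P
  refine ⟨N, ?_⟩
  filter_upwards [h, hN] with t ⟨hD, hf⟩ h2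
  have hD1 : (1 : ℝ) ≤ ev t D := by
    rw [ev_apply] at hD ⊢
    exact_mod_cast hD
  rw [hf, abs_div, abs_of_pos hD]
  exact (div_le_self (abs_nonneg _) hD1).trans h2

lemma hull_bound {ι κ : Type*} [Fintype ι] [Fintype κ] {v : ι → κ → ℕ → ℝ}
    (hv : ∀ i j, IsRat (v i j)) :
    ∃ N : ℕ, ∀ᶠ t : ℕ in atTop, ∀ x ∈ convexHull ℝ (range fun i j => v i j t), ∀ j,
      |x j| ≤ (t : ℝ) ^ N := by
  choose N hN using fun a : ι × κ => (hv a.1 a.2).exists_abs_le_pow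
  refine ⟨Finset.univ.sup N, ?_⟩
  filter_upwards [eventually_all.2 hN, eventually_ge_atTop 1] with t h ht x hx j
  obtain ⟨c, hc, hc1, hx⟩ := (mem_convexHull_range_iff _ x).1 hx
  have ht : (1 : ℝ) ≤ t := by exact_mod_cast ht
  have hle : ∀ i, |v i j t| ≤ (t : ℝ) ^ Finset.univ.sup N := fun i =>
    (h (i, j)).trans (pow_le_pow_right₀ ht (Finset.le_sup (Finset.mem_univ (i, j))))
  calc |x j| ≤ ∑ i, |c i * v i j t| := by rw [hx]; exact Finset.abs_sum_le_sum_abs _ _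
    _ ≤ ∑ i, c i * (t : ℝ) ^ Finset.univ.sup N := Finset.sum_le_sum fun i _ => by
        rw [abs_mul, abs_of_nonneg (hc i)]
        exact mul_le_mul_of_nonneg_left (hle i) (hc i)
    _ = (t : ℝ) ^ Finset.univ.sup N := by rw [← Finset.sum_mul, hc1, one_mul]

/-- Digit expansion in base `t`; the leading digit carries the sign. -/
lemma exists_digits {t : ℤ} (ht : 0 < t) (N : ℕ) : ∀ x : ℤ, |x| ≤ t ^ (N + 1) →
    ∃ a : Fin (N + 1) → ℤ, (∀ i, |a i| ≤ t) ∧ x = ∑ i, a i * t ^ (i : ℕ) := by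
  induction N with
  | zero => exact fun x hx => ⟨fun _ => x, fun _ => by simpa using hx, by simp⟩
  | succ N ih =>
    intro x hx
    obtain ⟨h1, h2⟩ := abs_le.1 hx
    obtain ⟨a, ha, hxa⟩ := ih (x / t) (abs_le.2 ⟨by
        rw [Int.le_ediv_iff_mul_le ht, neg_mul, ← pow_succ]; exact h1,
      Int.ediv_le_of_le_mul ht (by rw [← pow_succ]; exact h2)⟩)
    refine ⟨Fin.cons (x % t) a, fun i => ?_, ?_⟩
    · refine Fin.cases ?_ (fun i => ?_) i
      · rw [Fin.cons_zero, abs_of_nonneg (Int.emod_nonneg _ ht.ne')]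
        exact (Int.emod_lt_of_pos _ ht).le
      · simpa using ha i
    · rw [Fin.sum_univ_succ]
      simp only [Fin.cons_zero, Fin.cons_succ, Fin.val_zero, pow_zero, mul_one, Fin.val_succ,
        pow_succ, ← mul_assoc, ← Finset.sum_mul, ← hxa]
      linarith [Int.mul_ediv_add_emod x t, mul_comm t (x / t)]

/-- For all large parameters the vertices of the integer hull are among finitely many polynomial
vectors. Writing the coordinates in base `t` turns the integer points into finitely many systems
with constant normals; a vertex cannot be moved in both directions. -/
lemma extreme_candidates {ι κ : Type*} [Fintype ι] [Fintype κ] {v : ι → κ → ℕ → ℝ}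
    (hv : ∀ i j, IsRat (v i j)) :
    ∃ W : Finset (κ → ℚ[X]), ∀ᶠ t : ℕ in atTop, ∀ x ∈ extremePoints ℝ (convexHull ℝ
      (convexHull ℝ (range fun i j => v i j t) ∩ {x : κ → ℝ | ∀ j, ∃ y : ℤ, x j = (y : ℝ)})),
      ∃ w ∈ W, ∀ j, x j = (((w j).eval (t : ℚ) : ℚ) : ℝ) := by
  classical
  obtain ⟨F, hF⟩ := hull_ineqs hv
  obtain ⟨N, hN⟩ := hull_bound hv
  -- `a (j, i)` is the `i`-th digit of the `j`-th coordinate.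
  have hdnf : IsDNF fun t (a : κ × Fin (N + 1) → ℤ) => ∀ p ∈ F,
      0 ≤ ∑ k, (p.1 k.1 * X ^ (k.2 : ℕ)).eval (t : ℤ) * a k + p.2.eval (t : ℤ) :=
    IsDNF.forall_mem F fun p _ => IsDNF.poly
      (Finset.univ.sup fun k : κ × Fin (N + 1) => (p.1 k.1 * X ^ (k.2 : ℕ)).natDegree) _ _
      fun k => Finset.le_sup (f := fun k : κ × Fin (N + 1) =>
        (p.1 k.1 * X ^ (k.2 : ℕ)).natDegree) (Finset.mem_univ k)
  obtain ⟨𝒞, h𝒞⟩ := hdnf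
  set box : Finset ((κ × Fin (N + 1) → ℤ) × ℤ[X]) :=
    Finset.univ.image (fun k => (Pi.single k 1, X)) ∪
      Finset.univ.image (fun k => (Pi.single k (-1), X)) with hbox
  have hboxmem : ∀ (t : ℕ) (a : κ × Fin (N + 1) → ℤ),
      (∀ c ∈ box, 0 ≤ ∑ k, c.1 k * a k + c.2.eval (t : ℤ)) ↔ ∀ k, |a k| ≤ t := by
    intro t a
    have hsum : ∀ (k : κ × Fin (N + 1)) (b : ℤ),
        ∑ l, (Pi.single k b : κ × Fin (N + 1) → ℤ) l * a l = b * a k := fun k b => by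
      simp [Pi.single_apply]
    rw [hbox]
    simp only [Finset.mem_union, or_imp, forall_and, Finset.mem_image, Finset.mem_univ, true_and,
      forall_exists_index, forall_apply_eq_imp_iff, hsum, eval_X, abs_le]
    rw [← forall_and, ← forall_and]
    exact forall_congr' fun k => by constructor <;> rintro ⟨h1, h2⟩ <;> constructor <;> linarith
  choose W U hU hWU using fun C : Finset ((κ × Fin (N + 1) → ℤ) × ℤ[X]) =>
    polynomial_or_movable (C ∪ box)
  refine ⟨𝒞.biUnion fun C => (W C).image fun w j => ∑ i : Fin (N + 1), w (j, i) * X ^ (i : ℕ), ?_⟩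
  have hne : ∀ᶠ t : ℕ in atTop, ∀ C ∈ 𝒞, ∀ u ∈ U C, ∃ j,
      ∑ i : Fin (N + 1), u (j, i) * (t : ℤ) ^ (i : ℕ) ≠ 0 := by
    refine (eventually_all_finset _).2 fun C _ => (eventually_all_finset _).2 fun u hu => ?_
    obtain ⟨⟨j, i⟩, hji⟩ := Function.ne_iff.1 (hU C u hu)
    have hp : ∑ i : Fin (N + 1), Polynomial.C (u (j, i)) * X ^ (i : ℕ) ≠ (0 : ℤ[X]) := fun h => hji <| by
      have := congrArg (fun p => coeff p (i : ℕ)) h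
      simpa [finsetSum_coeff, coeff_X_pow, Fin.val_inj] using this
    filter_upwards [ev_eventually_ne_zero hp] with t ht
    refine ⟨j, fun h => ht ?_⟩
    rw [ev_apply, eval_finsetSum]
    simpa using congrArg (Int.cast : ℤ → ℝ) h
  filter_upwards [hF, hN, h𝒞, hne, eventually_ge_atTop 1] with t hF hN h𝒞 hne ht x hx
  set S : Set (κ → ℝ) := convexHull ℝ (range fun i j => v i j t) ∩
    {x : κ → ℝ | ∀ j, ∃ y : ℤ, x j = (y : ℝ)} with hS
  set T : (κ × Fin (N + 1) → ℤ) → κ → ℤ := fun a j => ∑ i, a (j, i) * (t : ℤ) ^ (i : ℕ) with hT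
  have ht0 : (0 : ℤ) < t := by exact_mod_cast ht
  have hTF : ∀ a : κ × Fin (N + 1) → ℤ, (∀ k, |a k| ≤ t) →
      (((fun j => (T a j : ℝ)) ∈ S) ↔ ∃ C ∈ 𝒞, ∀ c ∈ C, 0 ≤ ∑ k, c.1 k * a k + c.2.eval (t : ℤ)) := by
    intro a ha
    rw [← h𝒞 a ha]
    have : (fun j => (T a j : ℝ)) ∈ S ↔ (fun j => (T a j : ℝ)) ∈ convexHull ℝ
        (range fun i j => v i j t) := ⟨fun h => h.1, fun h => ⟨h, fun j => ⟨_, rfl⟩⟩⟩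
    rw [this, hF]
    refine forall₂_congr fun p _ => ?_
    have h1 : ∑ k : κ × Fin (N + 1), (p.1 k.1 * X ^ (k.2 : ℕ)).eval (t : ℤ) * a k
        = ∑ j, (p.1 j).eval (t : ℤ) * T a j := by
      rw [Fintype.sum_prod_type]
      refine Finset.sum_congr rfl fun j _ => ?_
      rw [hT, Finset.mul_sum]
      refine Finset.sum_congr rfl fun i _ => ?_
      simp only [eval_mul, eval_pow, eval_X]
      ring
    rw [h1]
    simp only [ev_apply]
    exact_mod_cast Iff.rfl
  have hmem : ∀ C ∈ 𝒞, ∀ a, (∀ c ∈ C ∪ box, 0 ≤ ∑ k, c.1 k * a k + c.2.eval (t : ℤ)) →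
      (fun j => (T a j : ℝ)) ∈ S := fun C hC a h =>
    (hTF a ((hboxmem t a).1 fun c hc => h c (Finset.mem_union_right _ hc))).2
      ⟨C, hC, fun c hc => h c (Finset.mem_union_left _ hc)⟩
  have hxS : x ∈ S := extremePoints_convexHull_subset hx
  choose y hy using hxS.2
  have hyb : ∀ j, |y j| ≤ (t : ℤ) ^ (N + 1) := fun j => by
    have h1 := hN x hxS.1 j
    rw [hy j] at h1
    have h2 : |y j| ≤ (t : ℤ) ^ N := by exact_mod_cast h1
    exact h2.trans (pow_le_pow_right₀ (by omega) (by omega))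
  choose b hb hyb using fun j => exists_digits ht0 N (y j) (hyb j)
  set a : κ × Fin (N + 1) → ℤ := fun k => b k.1 k.2 with ha
  have hxa : x = fun j => (T a j : ℝ) := by
    ext j; rw [hy j, hyb j]
  have habox : ∀ k, |a k| ≤ (t : ℤ) := fun k => hb k.1 k.2
  obtain ⟨C, hC, haC⟩ := (hTF a habox).1 (hxa ▸ hxS)
  rcases hWU C t a fun c hc => (Finset.mem_union.1 hc).elim (haC c)
    ((hboxmem t a).2 habox c) with ⟨w, hw, haw⟩ | ⟨u, hu, hadd, hsub⟩
  · refine ⟨_, Finset.mem_biUnion.2 ⟨C, hC, Finset.mem_image_of_mem _ hw⟩, fun j => ?_⟩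
    rw [hxa, eval_finsetSum]
    simp only [eval_mul, eval_pow, eval_X, ← haw, hT]
    push_cast
    rfl
  · exfalso
    obtain ⟨j, hj⟩ := hne C hC u hu
    have h1 := subset_convexHull ℝ S (hmem C hC (fun k => a k + u k) hadd)
    have h2 := subset_convexHull ℝ S (hmem C hC (fun k => a k - u k) hsub)
    have h3 := hx.2 h1 h2 ⟨1 / 2, 1 / 2, by norm_num, by norm_num, by norm_num, by
      rw [hxa]
      ext j
      simp only [hT, Pi.add_apply, Pi.smul_apply, smul_eq_mul, add_mul, sub_mul,
        Finset.sum_add_distrib, Finset.sum_sub_distrib]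
      push_cast
      ring⟩
    have h4 := congrFun h3 j
    rw [hxa] at h4
    simp only [hT, add_mul, Finset.sum_add_distrib] at h4
    have h5 := Int.cast_injective (α := ℝ) h4
    exact hj (by linarith)

/-! ### Rational functions, integrality, and the vertices -/

lemma exists_int_multiple (p : ℚ[X]) : ∃ (b : ℤ) (N : ℤ[X]), b ≠ 0 ∧
    ∀ t : ℤ, ((N.eval t : ℤ) : ℚ) = b * p.eval (t : ℚ) := by
  obtain ⟨b, hb, h⟩ := IsLocalization.integerNormalization_spec (nonZeroDivisors ℤ) p
  refine ⟨b, IsLocalization.integerNormalization (nonZeroDivisors ℤ) p,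
    nonZeroDivisors.ne_zero hb, fun t => ?_⟩
  have := congrArg (eval (t : ℚ)) h
  rw [eval_smul, show (t : ℚ) = algebraMap ℤ ℚ t by simp, eval_map_apply] at this
  simpa using this

lemma exists_int_multiple_real (p : ℚ[X]) : ∃ (b : ℤ) (N : ℤ[X]), b ≠ 0 ∧
    ∀ t : ℕ, ev t N = b * ((p.eval (t : ℚ) : ℚ) : ℝ) := by
  obtain ⟨b, N, hb, h⟩ := exists_int_multiple p
  refine ⟨b, N, hb, fun t => ?_⟩
  rw [ev_apply]
  exact_mod_cast congrArg (Rat.cast : ℚ → ℝ) (h t)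

lemma eventually_eval_ne_zero {p : ℚ[X]} (hp : p ≠ 0) :
    ∀ᶠ t : ℕ in atTop, p.eval (t : ℚ) ≠ 0 := by
  have h : {t : ℕ | p.eval (t : ℚ) = 0}.Finite :=
    ((p.roots.toFinset.finite_toSet).preimage (f := fun t : ℕ => (t : ℚ))
      Nat.cast_injective.injOn).subset fun t ht => by simpa [hp] using ht
  rw [← Nat.cofinite_eq_atTop]
  exact h.compl_mem_cofinite

lemma isRat_div {p q : ℚ[X]} (hq : q ≠ 0) :
    IsRat fun t => ((p.eval (t : ℚ) : ℚ) : ℝ) / ((q.eval (t : ℚ) : ℚ) : ℝ) := by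
  obtain ⟨b, P, hb, hP⟩ := exists_int_multiple_real p
  obtain ⟨c, Q, hc, hQ⟩ := exists_int_multiple_real q
  -- Multiplying through by `b * Q` makes the denominator `(b * Q) ^ 2` positive.
  refine ⟨P * C (c * b) * Q, (C b * Q) ^ 2, ?_⟩
  filter_upwards [eventually_eval_ne_zero hq] with t ht
  have hb' : (b : ℝ) ≠ 0 := by exact_mod_cast hb
  have hc' : (c : ℝ) ≠ 0 := by exact_mod_cast hc
  have hq' : ((q.eval (t : ℚ) : ℚ) : ℝ) ≠ 0 := by exact_mod_cast ht
  have hC : ∀ z : ℤ, ev t (C z) = z := fun z => by rw [ev_apply, eval_C]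
  simp only [map_mul, map_pow, hP, hQ, hC]
  constructor
  · positivity
  · field_simp

lemma isRat_poly (p : ℚ[X]) : IsRat fun t => ((p.eval (t : ℚ) : ℚ) : ℝ) := by
  simpa using isRat_div (p := p) one_ne_zero

lemma isRat_ratFunc (f : RatFunc ℚ) :
    IsRat fun t => RatFunc.eval (algebraMap ℚ ℝ) (t : ℝ) f := by
  have h : ∀ (p : ℚ[X]) (t : ℕ), p.eval₂ (algebraMap ℚ ℝ) (t : ℝ) = ((p.eval (t : ℚ) : ℚ) : ℝ) :=
    fun p t => by
      rw [show (t : ℝ) = algebraMap ℚ ℝ (t : ℚ) by simp, eval₂_at_apply]; rfl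
  simpa only [RatFunc.eval, h] using isRat_div (p := f.num) f.denom_ne_zero

/-- Integrality of the values of finitely many rational polynomials is periodic. -/
lemma exists_period {α : Type*} (s : Finset α) (p : α → ℚ[X]) : ∃ d : ℕ, 0 < d ∧
    ∀ a ∈ s, ∀ t t' : ℕ, t ≡ t' [MOD d] → (∃ y : ℤ, (p a).eval (t : ℚ) = y) →
      ∃ y : ℤ, (p a).eval (t' : ℚ) = y := by
  choose b N hb hN using fun a => exists_int_multiple (p a)
  refine ⟨∏ a ∈ s, (b a).natAbs, Finset.prod_pos fun a _ => Int.natAbs_pos.2 (hb a), ?_⟩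
  rintro a ha t t' htt ⟨y, hy⟩
  have hb' : (b a : ℚ) ≠ 0 := by exact_mod_cast hb a
  have h1 : b a ∣ (t' : ℤ) - t :=
    Int.natAbs_dvd.1 ((Int.natCast_dvd_natCast.2 (Finset.dvd_prod_of_mem _ ha)).trans
      (Nat.modEq_iff_dvd.1 htt))
  have h2 : (N a).eval (t : ℤ) = b a * y := by
    have := hN a t
    rw [Int.cast_natCast, hy] at this
    exact_mod_cast this
  obtain ⟨z, hz⟩ : b a ∣ (N a).eval (t' : ℤ) := by
    have h3 := (dvd_add_right (Dvd.intro y h2.symm)).2 (h1.trans (sub_dvd_eval_sub (t' : ℤ) t (N a)))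
    simpa using h3
  refine ⟨z, ?_⟩
  have := hN a t'
  rw [hz, Int.cast_natCast] at this
  push_cast at this
  exact (mul_left_cancel₀ hb' this).symm

lemma finite_lattice_points_s11 {κ : Type*} [Fintype κ] {A : Set (κ → ℝ)} {B : ℕ}
    (hA : ∀ x ∈ A, ∀ j, |x j| ≤ B) :
    (A ∩ {x : κ → ℝ | ∀ j, ∃ y : ℤ, x j = (y : ℝ)}).Finite := by
  classical
  refine ((Set.finite_Icc (fun _ : κ => -(B : ℤ)) (fun _ => (B : ℤ))).image
    fun y j => (y j : ℝ)).subset ?_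
  rintro x ⟨hx, hxi⟩
  choose y hy using hxi
  refine ⟨y, ?_, funext fun j => (hy j).symm⟩
  have h : ∀ j, |y j| ≤ B := fun j => by
    have := hA x hx j
    rw [hy] at this
    exact_mod_cast this
  exact ⟨fun j => (abs_le.1 (h j)).1, fun j => (abs_le.1 (h j)).2⟩


/-- **Calegari–Walker conjecture (Theorem 3.5 of \cite{CW} without the `O(t)` hypothesis).**
If `R(t)` is the convex hull of vectors of rational functions `v₁(t), …, v_k(t)`, then
there is a modulus `d` such that on each residue class mod `d`, for all sufficiently
large `t`, the vertices of the convex hull of the lattice points of `R(t)` are given by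
finitely many fixed polynomial vectors evaluated at `t`. -/
theorem convex_hull_lattice_vertices_EQP (n k : ℕ) (hn : 0 < n) (hk : 0 < k)
    (v : Fin k → Fin n → RatFunc ℚ) :
    ∃ d : ℕ, 0 < d ∧ ∀ r : ℕ, r < d →
      ∃ (z : ℕ) (w : Fin z → Fin n → Polynomial ℚ),
        ∀ᶠ t : ℕ in Filter.atTop, t % d = r →
          Set.extremePoints ℝ
            (convexHull ℝ
              (convexHull ℝ
                  (Set.range fun i : Fin k => fun j : Fin n =>
                    RatFunc.eval (algebraMap ℚ ℝ) (t : ℝ) (v i j)) ∩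
                {x : Fin n → ℝ | ∀ j, ∃ y : ℤ, x j = (y : ℝ)})) =
          Set.range (fun h : Fin z => fun j : Fin n => (((w h j).eval (t : ℚ) : ℚ) : ℝ)) := by
  classical
  set f : Fin k → Fin n → ℕ → ℝ := fun i j t => RatFunc.eval (algebraMap ℚ ℝ) (t : ℝ) (v i j)
    with hf
  have hv : ∀ i j, IsRat (f i j) := fun i j => isRat_ratFunc (v i j)
  obtain ⟨W, hW⟩ := extreme_candidates hv
  obtain ⟨d, hd, hper⟩ := exists_period (W ×ˢ (Finset.univ : Finset (Fin n))) fun a => a.1 a.2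
  refine ⟨d, hd, fun r hr => ?_⟩
  set pt : (Fin n → ℚ[X]) → ℕ → Fin n → ℝ := fun w t j => (((w j).eval (t : ℚ) : ℚ) : ℝ) with hpt
  -- The candidates giving lattice points of the polytope on this residue class.
  set Wr : Finset (Fin n → ℚ[X]) := W.filter fun w =>
    (∀ j, ∃ y : ℤ, (w j).eval (r : ℚ) = y) ∧
      ∀ᶠ t : ℕ in atTop, pt w t ∈ convexHull ℝ (range fun i j => f i j t) with hWr
  -- Those of them that are not in the convex hull of the others.
  set V : Finset (Fin n → ℚ[X]) := Wr.filter fun w => ¬ ∀ᶠ t : ℕ in atTop,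
    pt w t ∈ convexHull ℝ (range fun (w' : ↥(Wr.erase w)) j => pt w' t j) with hV
  refine ⟨V.card, fun h => (V.equivFin.symm h).1, ?_⟩
  have e1 : ∀ᶠ t : ℕ in atTop, ∀ w ∈ W, pt w t ∈ convexHull ℝ (range fun i j => f i j t) →
      ∀ᶠ t : ℕ in atTop, pt w t ∈ convexHull ℝ (range fun i j => f i j t) := by
    refine (eventually_all_finset _).2 fun w _ => ?_
    rcases hull_decide hv (fun j => isRat_poly (w j)) with h | h
    · exact Eventually.of_forall fun _ _ => h
    · filter_upwards [h] with t h1 h2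
      exact absurd h2 h1
  have e2 : ∀ᶠ t : ℕ in atTop, ∀ w ∈ Wr, pt w t ∈ convexHull ℝ (range fun i j => f i j t) :=
    (eventually_all_finset _).2 fun w hw => (Finset.mem_filter.1 hw).2.2
  have e3 : ∀ᶠ t : ℕ in atTop, ∀ w ∈ Wr, (w ∉ V ↔
      pt w t ∈ convexHull ℝ (range fun (w' : ↥(Wr.erase w)) j => pt w' t j)) := by
    refine (eventually_all_finset _).2 fun w hw => ?_
    rcases hull_decide (v := fun (w' : ↥(Wr.erase w)) j t => pt w' t j)
      (fun i j => isRat_poly (i.1 j)) (fun j => isRat_poly (w j)) with h | h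
    · have hwV : w ∉ V := fun hwV => (Finset.mem_filter.1 hwV).2 h
      filter_upwards [h] with t h1
      exact iff_of_true hwV h1
    · have hwV : w ∈ V := Finset.mem_filter.2 ⟨hw, fun h' => by
        obtain ⟨t, h1, h2⟩ := (h.and h').exists
        exact h1 h2⟩
      filter_upwards [h] with t h1
      exact iff_of_false (not_not.2 hwV) h1
  have e4 : ∀ᶠ t : ℕ in atTop, ∀ w ∈ Wr, ∀ w' ∈ Wr, pt w t = pt w' t → w = w' := by
    refine (eventually_all_finset _).2 fun w _ => (eventually_all_finset _).2 fun w' _ => ?_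
    by_cases h : w = w'
    · exact Eventually.of_forall fun _ _ => h
    · obtain ⟨j, hj⟩ := Function.ne_iff.1 h
      filter_upwards [eventually_eval_ne_zero (sub_ne_zero.2 hj)] with t ht heq
      refine absurd ?_ ht
      have := congrFun heq j
      simp only [hpt] at this
      rw [eval_sub, sub_eq_zero]
      exact_mod_cast this
  obtain ⟨N, hN⟩ := hull_bound hv
  filter_upwards [hW, e1, e2, e3, e4, hN] with t hW e1 e2 e3 e4 hN htr
  have hmod : t ≡ r [MOD d] := by rw [Nat.ModEq, htr, Nat.mod_eq_of_lt hr]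
  set S : Set (Fin n → ℝ) := convexHull ℝ (range fun i j => f i j t) ∩
    {x : Fin n → ℝ | ∀ j, ∃ y : ℤ, x j = (y : ℝ)} with hS
  have hSfin : S.Finite := finite_lattice_points_s11 (B := t ^ N) fun x hx j => by
    push_cast; exact hN x hx j
  change extremePoints ℝ (convexHull ℝ S) = _
  set K := convexHull ℝ S with hK
  have hKconv : Convex ℝ K := convex_convexHull ℝ S
  have hWrS : ∀ w ∈ Wr, pt w t ∈ S := fun w hw => by
    obtain ⟨hwW, hint, -⟩ := Finset.mem_filter.1 hw
    refine ⟨e2 w hw, fun j => ?_⟩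
    obtain ⟨y, hy⟩ := hper (w, j) (Finset.mem_product.2 ⟨hwW, Finset.mem_univ j⟩) r t hmod.symm
      (hint j)
    exact ⟨y, by simp only [hpt]; rw [hy]; simp⟩
  have hext : ∀ x ∈ extremePoints ℝ K, ∃ w ∈ Wr, x = pt w t := by
    intro x hx
    obtain ⟨w, hw, hxw⟩ := hW x hx
    have hxw : x = pt w t := funext hxw
    have hxS : x ∈ S := extremePoints_convexHull_subset hx
    refine ⟨w, Finset.mem_filter.2 ⟨hw, fun j => ?_, e1 w hw (hxw ▸ hxS.1)⟩, hxw⟩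
    refine hper (w, j) (Finset.mem_product.2 ⟨hw, Finset.mem_univ j⟩) t r hmod ?_
    obtain ⟨y, hy⟩ := hxS.2 j
    rw [hxw] at hy
    exact ⟨y, by simp only [hpt] at hy; exact_mod_cast hy⟩
  have hVext : ∀ w ∈ Wr, (w ∈ V ↔ pt w t ∈ extremePoints ℝ K) := by
    intro w hw
    rw [← not_iff_not, e3 w hw]
    constructor
    · intro h hx
      refine (hKconv.mem_extremePoints_iff_mem_sdiff_convexHull_sdiff.1 hx).2
        (convexHull_mono ?_ h)
      rintro _ ⟨⟨w', hw'⟩, rfl⟩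
      obtain ⟨hne, hw'⟩ := Finset.mem_erase.1 hw'
      exact ⟨subset_convexHull ℝ S (hWrS w' hw'), fun h => hne (e4 w' hw' w hw h)⟩
    · intro hx
      have hKcomp : IsCompact K := hSfin.isCompact_convexHull (𝕜 := ℝ)
      have hsub : extremePoints ℝ K ⊆ range fun (w' : ↥(Wr.erase w)) j => pt w' t j := by
        intro y hy
        obtain ⟨w', hw', rfl⟩ := hext y hy
        exact ⟨⟨w', Finset.mem_erase.2 ⟨fun h => hx (h ▸ hy), hw'⟩⟩, rfl⟩
      have hmem : pt w t ∈ closure (convexHull ℝ (extremePoints ℝ K)) := by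
        rw [closure_convexHull_extremePoints hKcomp hKconv]
        exact subset_convexHull ℝ S (hWrS w hw)
      exact closure_minimal (convexHull_mono hsub) ((finite_range _).isClosed_convexHull (𝕜 := ℝ)) hmem
  ext x
  constructor
  · intro hx
    obtain ⟨w, hw, rfl⟩ := hext x hx
    refine ⟨V.equivFin ⟨w, (hVext w hw).2 hx⟩, ?_⟩
    simp [hpt]
  · rintro ⟨h, rfl⟩
    have hwV := (V.equivFin.symm h).2
    exact (hVext _ (Finset.mem_filter.1 hwV).1).1 hwV
end

section
/- Let n and p be positive integers and let w_1, …, w_p ∈ (ℝ[t])^n be pairwise distinct polynomial vectors. Then there exists a subset U ⊆ {1,…,p} such that for all sufficiently large positive integers t: the points w_h(t) for h ∈ U are pairwise distinct, and {w_h(t) : h ∈ U} is exactly the set of extreme points of the convex hull of {w_1(t), …, w_p(t)}. -/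
/-! For large `t` the points `w_h(t)` are pairwise distinct. By separation from a compact convex
set, `w_h(t)` is then an extreme point of the hull exactly when some linear functional takes a
value at `w_h(t)` exceeding its values at all the other `w_k(t)` by at least `1`; the gap `1` is obtained by rescaling. This is the feasibility
of a finite system of linear inequalities whose coefficients are polynomials in `t`.

Fourier–Motzkin elimination (`feasible_stabilizes`) shows that feasibility of such a system is
eventually constant in `t`: a nonzero polynomial has an eventually constant sign, so for large `t`
the same pairs of rows are combined at each elimination step, and the combined rows again have
polynomial coefficients. With no variables left, only signs of polynomials remain.
-/

open Polynomial in
lemma poly_sign (q : ℝ[X]) :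
    q = 0 ∨ (∀ᶠ t : ℕ in Filter.atTop, 0 < q.eval (t : ℝ)) ∨
      (∀ᶠ t : ℕ in Filter.atTop, q.eval (t : ℝ) < 0) := by
  -- It suffices to treat a nonnegative leading coefficient, the other case following for `-q`.
  have key : ∀ q : ℝ[X], q ≠ 0 → 0 ≤ q.leadingCoeff →
      ∀ᶠ t : ℕ in Filter.atTop, 0 < q.eval (t : ℝ) := by
    intro q hq hl
    by_cases hd : 0 < q.degree
    · exact ((q.tendsto_atTop_of_leadingCoeff_nonneg hd hl).comp
        tendsto_natCast_atTop_atTop).eventually_gt_atTop 0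
    · have hc := eq_C_of_degree_le_zero (not_lt.mp hd)
      rw [hc] at hl hq ⊢
      rw [leadingCoeff_C] at hl
      have : q.coeff 0 ≠ 0 := fun h => hq (by rw [h, C_0])
      exact Filter.Eventually.of_forall fun t => by simpa using lt_of_le_of_ne hl this.symm
  by_cases hq : q = 0
  · exact Or.inl hq
  rcases le_total 0 q.leadingCoeff with h | h
  · exact Or.inr (Or.inl (key q hq h))
  · have := key (-q) (neg_ne_zero.mpr hq) (by simpa using h)
    exact Or.inr (Or.inr (by simpa using this))

/-- Elimination of a single real variable from a finite system of linear inequalities. -/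
lemma exists_mul_le_iff {ι : Type} [Finite ι] (α β : ι → ℝ) :
    (∃ x : ℝ, ∀ i, α i * x ≤ β i) ↔
      (∀ i, α i = 0 → 0 ≤ β i) ∧ ∀ i k, 0 < α i → α k < 0 → α k * β i ≤ α i * β k := by
  classical
  cases nonempty_fintype ι
  constructor
  · rintro ⟨x, hx⟩
    refine ⟨fun i hi => by simpa [hi] using hx i, fun i k hi hk => ?_⟩
    nlinarith [mul_le_mul_of_nonpos_left (hx i) hk.le, mul_le_mul_of_nonneg_left (hx k) hi.le]
  · rintro ⟨h0, h1⟩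
    suffices ∃ x : ℝ, (∀ i, 0 < α i → x ≤ β i / α i) ∧ ∀ k, α k < 0 → β k / α k ≤ x by
      obtain ⟨x, hP, hN⟩ := this
      refine ⟨x, fun i => ?_⟩
      rcases lt_trichotomy (α i) 0 with h | h | h
      · have := hN i h
        rwa [div_le_iff_of_neg h, mul_comm] at this
      · simpa [h] using h0 i h
      · have := hP i h
        rwa [le_div_iff₀ h, mul_comm] at this
    by_cases hP : (Finset.univ.filter fun i => 0 < α i).Nonempty
    · -- The least of the upper bounds works.
      refine ⟨(Finset.univ.filter fun i => 0 < α i).inf' hP fun i => β i / α i,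
        fun i hi => Finset.inf'_le _ (by simpa using hi), fun k hk => ?_⟩
      refine Finset.le_inf' _ _ fun i hi => ?_
      have hi : 0 < α i := by simpa using hi
      rw [div_le_iff_of_neg hk, div_mul_eq_mul_div, div_le_iff₀ hi]
      linarith [h1 i k hi hk]
    · obtain ⟨M, hM⟩ := (Set.finite_range fun i => β i / α i).bddAbove
      exact ⟨M, fun i hi => (hP ⟨i, by simpa using hi⟩).elim, fun k _ => hM ⟨k, rfl⟩⟩

open Polynomial in
/-- Feasibility of a finite system of linear inequalities with polynomial coefficients in `t` is
eventually constant in `t`, by Fourier–Motzkin elimination. -/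
lemma feasible_stabilizes (m : ℕ) : ∀ (ι : Type) [Finite ι] (a : ι → Fin m → ℝ[X]) (b : ι → ℝ[X]),
    (∀ᶠ t : ℕ in Filter.atTop, ∃ x : Fin m → ℝ,
      ∀ i, ∑ j, (a i j).eval (t : ℝ) * x j ≤ (b i).eval (t : ℝ)) ∨
    (∀ᶠ t : ℕ in Filter.atTop, ¬ ∃ x : Fin m → ℝ,
      ∀ i, ∑ j, (a i j).eval (t : ℝ) * x j ≤ (b i).eval (t : ℝ)) := by
  induction m with
  | zero =>
    intro ι _ a b
    by_cases h : ∃ i, ∀ᶠ t : ℕ in Filter.atTop, (b i).eval (t : ℝ) < 0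
    · obtain ⟨i, hi⟩ := h
      right
      filter_upwards [hi] with t ht
      rintro ⟨x, hx⟩
      have := hx i
      simp only [Finset.univ_eq_empty, Finset.sum_empty] at this
      linarith
    · left
      have : ∀ i, ∀ᶠ t : ℕ in Filter.atTop, 0 ≤ (b i).eval (t : ℝ) := by
        intro i
        rcases poly_sign (b i) with h0 | h0 | h0
        · simp [h0]
        · exact h0.mono fun _ => le_of_lt
        · exact (h ⟨i, h0⟩).elim
      filter_upwards [Filter.eventually_all.mpr this] with t ht
      exact ⟨0, fun i => by simpa using ht i⟩
  | succ m ih =>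
    intro ι _ a b
    let P : ι → Prop := fun i => ∀ᶠ t : ℕ in Filter.atTop, 0 < (a i 0).eval (t : ℝ)
    let N : ι → Prop := fun i => ∀ᶠ t : ℕ in Filter.atTop, (a i 0).eval (t : ℝ) < 0
    let κ := {i // a i 0 = 0} ⊕ ({i // P i} × {i // N i})
    let a' : κ → Fin m → ℝ[X] := Sum.elim (fun i j => a i j.succ)
      (fun q j => a q.1 0 * a q.2 j.succ - a q.2 0 * a q.1 j.succ)
    let b' : κ → ℝ[X] := Sum.elim (fun i => b i) (fun q => a q.1 0 * b q.2 - a q.2 0 * b q.1)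
    have hsign : ∀ᶠ t : ℕ in Filter.atTop, ∀ i,
        (a i 0 = 0 ∧ (a i 0).eval (t : ℝ) = 0) ∨ (P i ∧ 0 < (a i 0).eval (t : ℝ)) ∨
        (N i ∧ (a i 0).eval (t : ℝ) < 0) := by
      refine Filter.eventually_all.mpr fun i => ?_
      rcases poly_sign (a i 0) with h | h | h
      · simp [h]
      · filter_upwards [h] with t ht using Or.inr (Or.inl ⟨h, ht⟩)
      · filter_upwards [h] with t ht using Or.inr (Or.inr ⟨h, ht⟩)
    have hP : ∀ᶠ t : ℕ in Filter.atTop, ∀ i : {i // P i}, 0 < (a i 0).eval (t : ℝ) :=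
      Filter.eventually_all.mpr fun i => i.2
    have hN : ∀ᶠ t : ℕ in Filter.atTop, ∀ i : {i // N i}, (a i 0).eval (t : ℝ) < 0 :=
      Filter.eventually_all.mpr fun i => i.2
    have key : ∀ᶠ t : ℕ in Filter.atTop,
        ((∃ x : Fin (m + 1) → ℝ, ∀ i, ∑ j, (a i j).eval (t : ℝ) * x j ≤ (b i).eval (t : ℝ)) ↔
        ∃ x : Fin m → ℝ, ∀ i, ∑ j, (a' i j).eval (t : ℝ) * x j ≤ (b' i).eval (t : ℝ)) := by
      filter_upwards [hsign, hP, hN] with t hs hPt hNt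
      have e1 : (∃ x : Fin (m + 1) → ℝ,
          ∀ i, ∑ j, (a i j).eval (t : ℝ) * x j ≤ (b i).eval (t : ℝ)) ↔
          ∃ y : Fin m → ℝ, ∃ x : ℝ, ∀ i, (a i 0).eval (t : ℝ) * x ≤
            (b i).eval (t : ℝ) - ∑ j, (a i j.succ).eval (t : ℝ) * y j := by
        constructor
        · rintro ⟨x, hx⟩
          refine ⟨fun j => x j.succ, x 0, fun i => ?_⟩
          have := hx i
          rw [Fin.sum_univ_succ] at this
          linarith
        · rintro ⟨y, x, hx⟩
          refine ⟨Fin.cons x y, fun i => ?_⟩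
          rw [Fin.sum_univ_succ]
          simp only [Fin.cons_zero, Fin.cons_succ]
          linarith [hx i]
      rw [e1]
      refine exists_congr fun y => ?_
      rw [exists_mul_le_iff]
      have e2 : ∀ i k, ∑ j, (a i 0 * a k j.succ - a k 0 * a i j.succ).eval (t : ℝ) * y j =
          (a i 0).eval (t : ℝ) * ∑ j, (a k j.succ).eval (t : ℝ) * y j -
          (a k 0).eval (t : ℝ) * ∑ j, (a i j.succ).eval (t : ℝ) * y j := by
        intro i k
        rw [Finset.mul_sum, Finset.mul_sum, ← Finset.sum_sub_distrib]
        refine Finset.sum_congr rfl fun j _ => ?_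
        simp only [eval_sub, eval_mul]
        ring
      constructor
      · rintro ⟨h0, h1⟩ (i | ⟨i, k⟩)
        · have := h0 i (by rw [i.2, eval_zero])
          simp only [a', b', Sum.elim_inl]
          linarith
        · have := h1 i k (hPt i) (hNt k)
          simp only [a', b', Sum.elim_inr]
          rw [e2]
          simp only [eval_sub, eval_mul]
          linarith
      · intro h
        refine ⟨fun i hi => ?_, fun i k hi hk => ?_⟩
        · have hz : a i 0 = 0 := by
            rcases hs i with h' | h' | h'
            · exact h'.1
            · linarith [h'.2]
            · linarith [h'.2]
          have := h (Sum.inl ⟨i, hz⟩)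
          simp only [a', b', Sum.elim_inl] at this
          linarith
        · have hi' : P i := by
            rcases hs i with h' | h' | h'
            · linarith [h'.2]
            · exact h'.1
            · linarith [h'.2]
          have hk' : N k := by
            rcases hs k with h' | h' | h'
            · linarith [h'.2]
            · linarith [h'.2]
            · exact h'.1
          have := h (Sum.inr (⟨i, hi'⟩, ⟨k, hk'⟩))
          simp only [a', b', Sum.elim_inr] at this
          rw [e2] at this
          simp only [eval_sub, eval_mul] at this
          linarith
    rcases ih κ a' b' with h | h
    · left
      filter_upwards [h, key] with t ht hk using hk.mpr ht
    · right
      filter_upwards [h, key] with t ht hk using fun hx => ht (hk.mp hx)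

/-- A point of a finite family of pairwise distinct points is extreme in the hull iff a linear
functional separates it from the others with gap at least `1`. -/
lemma mem_extremePoints_iff_exists_gap {n p : ℕ} (f : Fin p → Fin n → ℝ)
    (hf : Function.Injective f) (h : Fin p) :
    f h ∈ Set.extremePoints ℝ (convexHull ℝ (Set.range f)) ↔
      ∃ y : Fin n → ℝ, ∀ k : {k // k ≠ h}, ∑ j, (f k j - f h j) * y j ≤ -1 := by
  constructor
  · intro hx
    rw [(convex_convexHull ℝ _).mem_extremePoints_iff_mem_sdiff_convexHull_sdiff] at hx
    have hnot : f h ∉ convexHull ℝ (f '' {h}ᶜ) := by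
      refine fun hm => hx.2 (convexHull_mono ?_ hm)
      rintro _ ⟨k, hk, rfl⟩
      exact ⟨subset_convexHull ℝ _ ⟨k, rfl⟩, fun e => hk (hf e)⟩
    obtain ⟨l, u, hl, hu⟩ := geometric_hahn_banach_point_closed (convex_convexHull ℝ (f '' {h}ᶜ))
      ((Set.toFinite (f '' {h}ᶜ)).isClosed_convexHull ℝ) hnot
    have hc : 0 < u - l (f h) := by linarith
    refine ⟨fun j => -(l (Pi.single j 1)) / (u - l (f h)), fun k => ?_⟩
    have hk := hu (f k) (subset_convexHull ℝ _ ⟨k, k.2, rfl⟩)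
    have e : l (f k - f h) = ∑ j, (f k j - f h j) * l (Pi.single j 1) := by
      have := LinearMap.pi_apply_eq_sum_univ (l : (Fin n → ℝ) →ₗ[ℝ] ℝ) (f k - f h)
      simp only [ContinuousLinearMap.coe_coe, smul_eq_mul, Pi.sub_apply] at this
      rw [this]
      refine Finset.sum_congr rfl fun j _ => ?_
      congr 2
      ext i
      simp [Pi.single_apply, eq_comm]
    have e2 : ∑ j, (f k j - f h j) * (-(l (Pi.single j 1)) / (u - l (f h))) =
        -(l (f k - f h)) / (u - l (f h)) := by
      rw [e, ← Finset.sum_neg_distrib, Finset.sum_div]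
      exact Finset.sum_congr rfl fun j _ => by ring
    rw [e2, div_le_iff₀ hc, map_sub]
    linarith
  · rintro ⟨y, hy⟩
    let L : (Fin n → ℝ) → ℝ := fun z => ∑ j, z j * y j
    have hL : ∀ (r s : ℝ) (z v : Fin n → ℝ), L (r • z + s • v) = r * L z + s * L v := by
      intro r s z v
      simp only [L, Finset.mul_sum, ← Finset.sum_add_distrib]
      exact Finset.sum_congr rfl fun j _ => by simp; ring
    -- The open half-space below `f h`, together with the point `f h` itself, is convex.
    have hsub : convexHull ℝ (Set.range f) ⊆ {z | z = f h ∨ L z < L (f h)} := by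
      refine convexHull_min ?_ ?_
      · rintro _ ⟨k, rfl⟩
        by_cases hk : k = h
        · exact Or.inl (by rw [hk])
        · right
          have := hy ⟨k, hk⟩
          simp only [sub_mul, Finset.sum_sub_distrib] at this
          simp only [L]
          linarith
      · intro z hz v hv r s hr hs hrs
        by_cases hr0 : r = 0
        · have : s = 1 := by linarith
          simpa [hr0, this] using hv
        by_cases hs0 : s = 0
        · have : r = 1 := by linarith
          simpa [hs0, this] using hz
        have hr' : 0 < r := lt_of_le_of_ne hr (Ne.symm hr0)
        have hs' : 0 < s := lt_of_le_of_ne hs (Ne.symm hs0)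
        have hs1 : s = 1 - r := by linarith
        rcases hz with rfl | hz <;> rcases hv with rfl | hv
        · left
          rw [← add_smul, hrs, one_smul]
        all_goals
          right
          rw [hL]
          subst hs1
          nlinarith
    rw [mem_extremePoints_iff_left]
    refine ⟨subset_convexHull ℝ _ ⟨h, rfl⟩, fun z hz v hv ⟨r, s, hr, hs, hrs, he⟩ => ?_⟩
    rcases hsub hz with hz | hz
    · exact hz
    · exfalso
      have hv' : L v ≤ L (f h) := by
        rcases hsub hv with hv | hv
        · rw [hv]
        · exact hv.le
      have h1 := hL r s z v
      rw [he] at h1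
      have hs1 : s = 1 - r := by linarith
      subst hs1
      nlinarith

/-- Given pairwise distinct polynomial vectors `w₁, …, w_p ∈ (ℝ[t])ⁿ`, there is a fixed
subset `U ⊆ {1, …, p}` such that for all sufficiently large positive integers `t`, the
points `w_h(t)` for `h ∈ U` are pairwise distinct and form exactly the set of extreme
points of the convex hull of `{w₁(t), …, w_p(t)}`. -/
theorem extremePoints_of_polynomial_vectors_stabilize (n p : ℕ) (hn : 0 < n) (hp : 0 < p)
    (w : Fin p → Fin n → Polynomial ℝ) (hw : Function.Injective w) :
    ∃ U : Finset (Fin p), ∀ᶠ t : ℕ in Filter.atTop,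
      Set.InjOn (fun h : Fin p => fun j : Fin n => (w h j).eval (t : ℝ)) ↑U ∧
      Set.extremePoints ℝ
          (convexHull ℝ (Set.range fun h : Fin p => fun j : Fin n => (w h j).eval (t : ℝ))) =
        (fun h : Fin p => fun j : Fin n => (w h j).eval (t : ℝ)) '' ↑U := by
  classical
  have hinj : ∀ᶠ t : ℕ in Filter.atTop, Function.Injective
      (fun h : Fin p => fun j : Fin n => (w h j).eval (t : ℝ)) := by
    have : ∀ᶠ t : ℕ in Filter.atTop, ∀ h k : Fin p, h ≠ k →
        (fun j => (w h j).eval (t : ℝ)) ≠ fun j => (w k j).eval (t : ℝ) := by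
      refine Filter.eventually_all.mpr fun h => Filter.eventually_all.mpr fun k => ?_
      by_cases hk : h = k
      · simp [hk]
      obtain ⟨j, hj⟩ := Function.ne_iff.mp (hw.ne hk)
      have hne : ∀ᶠ t : ℕ in Filter.atTop, (w h j - w k j).eval (t : ℝ) ≠ 0 := by
        rcases poly_sign (w h j - w k j) with h0 | h0 | h0
        · exact (hj (sub_eq_zero.mp h0)).elim
        · exact h0.mono fun _ => ne_of_gt
        · exact h0.mono fun _ => ne_of_lt
      filter_upwards [hne] with t ht _ he
      exact ht (by rw [Polynomial.eval_sub, sub_eq_zero]; exact congrFun he j)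
    filter_upwards [this] with t ht h k hk
    by_contra hne
    exact ht h k hne hk
  let E : Fin p → ℕ → Prop := fun h t => (fun j : Fin n => (w h j).eval (t : ℝ)) ∈
    Set.extremePoints ℝ
      (convexHull ℝ (Set.range fun h : Fin p => fun j : Fin n => (w h j).eval (t : ℝ)))
  have hE : ∀ h, (∀ᶠ t in Filter.atTop, E h t) ∨ (∀ᶠ t in Filter.atTop, ¬ E h t) := by
    intro h
    rcases feasible_stabilizes n {k // k ≠ h} (fun k j => w k j - w h j) (fun _ => -1) with hf | hf
    · left
      filter_upwards [hf, hinj] with t ht hi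
      refine (mem_extremePoints_iff_exists_gap _ hi h).mpr ?_
      simpa using ht
    · right
      filter_upwards [hf, hinj] with t ht hi
      refine fun he => ht ?_
      simpa using (mem_extremePoints_iff_exists_gap _ hi h).mp he
  refine ⟨Finset.univ.filter fun h => ∀ᶠ t in Filter.atTop, E h t, ?_⟩
  have hall : ∀ᶠ t in Filter.atTop, ∀ h, (E h t ↔ ∀ᶠ t in Filter.atTop, E h t) := by
    refine Filter.eventually_all.mpr fun h => ?_
    by_cases hh : ∀ᶠ t in Filter.atTop, E h t
    · filter_upwards [hh] with t ht using iff_of_true ht hh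
    · filter_upwards [(hE h).resolve_left hh] with t ht using iff_of_false ht hh
  filter_upwards [hinj, hall] with t hi ha
  refine ⟨hi.injOn, Set.ext fun x => ⟨fun hx => ?_, ?_⟩⟩
  · obtain ⟨h, rfl⟩ := extremePoints_convexHull_subset hx
    exact ⟨h, by simpa using (ha h).mp hx, rfl⟩
  · rintro ⟨h, hh, rfl⟩
    exact (ha h).mpr (by simpa using hh)
end

section
/- Let n be a positive integer, V a finite index set, and for each h ∈ V let w_h ∈ (ℝ[t])^n be a polynomial vector. Suppose that for all sufficiently large positive integers t the family (w_h(t))_{h∈V} is affinely independent. Let w ∈ (ℝ[t])^n be another polynomial vector. Then either w(t) lies in the convex hull of {w_h(t) : h ∈ V} for all sufficiently large positive integers t, or w(t) does not lie in the convex hull of {w_h(t) : h ∈ V} for all sufficiently large positive integers t. -/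
/-!
Affine independence of the `w_h(t)` says that the matrix `A(t)`, whose columns are the vectors
`w_h(t)` extended by a coordinate `1`, has independent columns; membership of `w(t)` in the convex
hull says that the system `A(t) x = b(t)`, with `b(t)` the vector `w(t)` extended by `1`, has a
nonnegative solution. When the columns are independent, the Gram matrix `AᵀA` is invertible, so by
Cramer's rule the only candidate for `x` is `p(t) / d(t)`, where `d = det (AᵀA)` and
`p = adj(AᵀA) Aᵀ b` have polynomial entries (`exists_nonneg_solution_iff`). Hence, for large `t`,
membership is equivalent to finitely many polynomial sign conditions, `0 ≤ d * p_h` for every `h`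
and `A p = d b` in every coordinate. A polynomial has eventually constant sign, so each of these
conditions is eventually true or eventually false, and so is their conjunction.
-/

open Filter Polynomial Matrix

/-- A property of natural numbers that is eventually true or eventually false. -/
def EventuallyDecided (P : ℕ → Prop) : Prop :=
  (∀ᶠ t in atTop, P t) ∨ (∀ᶠ t in atTop, ¬ P t)

namespace EventuallyDecided

lemma and {P Q : ℕ → Prop} (hP : EventuallyDecided P) (hQ : EventuallyDecided Q) :
    EventuallyDecided fun t => P t ∧ Q t := by
  rcases hP with hP | hP
  · rcases hQ with hQ | hQ
    · exact Or.inl (hP.and hQ)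
    · exact Or.inr (hQ.mono fun t h h' => h h'.2)
  · exact Or.inr (hP.mono fun t h h' => h h'.1)

lemma forall_finite {ι : Type*} [Finite ι] {P : ι → ℕ → Prop}
    (hP : ∀ i, EventuallyDecided (P i)) : EventuallyDecided fun t => ∀ i, P i t := by
  by_cases h : ∀ i, ∀ᶠ t in atTop, P i t
  · exact Or.inl (eventually_all.2 h)
  · obtain ⟨i, hi⟩ := not_forall.1 h
    exact Or.inr (((hP i).resolve_left hi).mono fun t h h' => h (h' i))

lemma congr {P Q : ℕ → Prop} (hP : EventuallyDecided P) (h : ∀ᶠ t in atTop, P t ↔ Q t) :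
    EventuallyDecided Q := by
  rcases hP with hP | hP
  · exact Or.inl ((hP.and h).mono fun t ht => ht.2.1 ht.1)
  · exact Or.inr ((hP.and h).mono fun t ht hq => ht.1 (ht.2.2 hq))

lemma eval_nonneg (q : ℝ[X]) : EventuallyDecided fun t => 0 ≤ q.eval (t : ℝ) := by
  by_cases hd : 0 < q.degree
  · rcases le_total 0 q.leadingCoeff with hl | hl
    · exact Or.inl (((q.tendsto_atTop_of_leadingCoeff_nonneg hd hl).comp
        tendsto_natCast_atTop_atTop).eventually_ge_atTop 0)
    · refine Or.inr ((((q.tendsto_atBot_of_leadingCoeff_nonpos hd hl).comp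
        tendsto_natCast_atTop_atTop).eventually_lt_atBot 0).mono fun t ht => ?_)
      exact not_le.2 ht
  · rw [eq_C_of_degree_le_zero (not_lt.1 hd)]
    by_cases hc : 0 ≤ q.coeff 0
    · exact Or.inl (Eventually.of_forall fun t => by simpa using hc)
    · exact Or.inr (Eventually.of_forall fun t => by simpa using hc)

lemma eval_eq (q r : ℝ[X]) :
    EventuallyDecided fun t => q.eval (t : ℝ) = r.eval (t : ℝ) := by
  refine ((eval_nonneg (q - r)).and (eval_nonneg (r - q))).congr (Eventually.of_forall fun t => ?_)
  simp only [eval_sub, sub_nonneg]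
  exact ⟨fun h => le_antisymm h.2 h.1, fun h => ⟨h.ge, h.le⟩⟩

end EventuallyDecided

/-- The vector `adj(AᵀA) Aᵀ b`. By Cramer's rule it is `det (AᵀA)` times any solution `x` of
`A x = b`; it involves no division, so it makes sense for polynomial matrices. -/
def cramerNumerator {R m V : Type*} [CommRing R] [Fintype m] [Fintype V] [DecidableEq V]
    (A : Matrix m V R) (b : m → R) : V → R :=
  (Aᵀ * A).adjugate *ᵥ (Aᵀ *ᵥ b)

lemma map_cramerNumerator {R S m V : Type*} [CommRing R] [CommRing S] [Fintype m] [Fintype V]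
    [DecidableEq V] (f : R →+* S) (A : Matrix m V R) (b : m → R) (h : V) :
    f (cramerNumerator A b h) = cramerNumerator (A.map f) (f ∘ b) h := by
  have h1 : (Aᵀ * A).adjugate.map f = ((A.map f)ᵀ * A.map f).adjugate := by
    have := f.map_adjugate (Aᵀ * A)
    simpa only [RingHom.mapMatrix_apply, Matrix.map_mul, ← Matrix.transpose_map] using this
  have h2 : f ∘ (Aᵀ *ᵥ b) = (A.map f)ᵀ *ᵥ (f ∘ b) := by
    funext i
    simpa only [← Matrix.transpose_map, Function.comp_apply] using f.map_mulVec Aᵀ b i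
  rw [cramerNumerator, cramerNumerator, RingHom.map_mulVec, h1, h2]

lemma det_gram_ne_zero {m V : Type*} [Fintype m] [Fintype V] [DecidableEq V]
    {A : Matrix m V ℝ} (hA : ∀ v, A *ᵥ v = 0 → v = 0) : (Aᵀ * A).det ≠ 0 := by
  intro h
  obtain ⟨v, hv, hv0⟩ := exists_mulVec_eq_zero_iff.2 h
  refine hv (hA v ?_)
  rw [← conjTranspose_eq_transpose_of_trivial, conjTranspose_mul_self_mulVec_eq_zero] at hv0
  exact hv0

/-- For a matrix with independent columns, the existence of a nonnegative solution of `A x = b` is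
a division-free condition on the entries of `A` and `b`. -/
lemma exists_nonneg_solution_iff {m V : Type*} [Fintype m] [Fintype V] [DecidableEq V]
    {A : Matrix m V ℝ} (hA : ∀ v, A *ᵥ v = 0 → v = 0) (b : m → ℝ) :
    (∃ x : V → ℝ, (∀ h, 0 ≤ x h) ∧ A *ᵥ x = b) ↔
      (∀ h, 0 ≤ (Aᵀ * A).det * cramerNumerator A b h) ∧
        ∀ i, (A *ᵥ cramerNumerator A b) i = (Aᵀ * A).det * b i := by
  have hd := det_gram_ne_zero hA
  constructor
  · rintro ⟨x, hx, rfl⟩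
    have key : cramerNumerator A (A *ᵥ x) = (Aᵀ * A).det • x := by
      rw [cramerNumerator, mulVec_mulVec x, mulVec_mulVec, adjugate_mul, smul_mulVec, one_mulVec]
    rw [key, mulVec_smul]
    refine ⟨fun h => ?_, fun i => rfl⟩
    rw [Pi.smul_apply, smul_eq_mul, ← mul_assoc]
    exact mul_nonneg (mul_self_nonneg _) (hx h)
  · rintro ⟨h1, h2⟩
    refine ⟨(Aᵀ * A).det⁻¹ • cramerNumerator A b, fun h => ?_, ?_⟩
    · have : (Aᵀ * A).det⁻¹ * cramerNumerator A b h =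
          ((Aᵀ * A).det⁻¹ * (Aᵀ * A).det⁻¹) * ((Aᵀ * A).det * cramerNumerator A b h) := by
        field_simp
      rw [Pi.smul_apply, smul_eq_mul, this]
      exact mul_nonneg (mul_self_nonneg _) (h1 h)
    · funext i
      rw [mulVec_smul, Pi.smul_apply, smul_eq_mul, h2, inv_mul_cancel_left₀ hd]

/-- The matrix whose column `h` is the vector `v h` extended by a coordinate `1`, the new
coordinate being indexed by `none`. -/
def homogMatrix {R V : Type*} [One R] {n : ℕ} (v : V → Fin n → R) : Matrix (Option (Fin n)) V R :=
  Matrix.of fun i h => i.elim 1 (v h)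

lemma homogMatrix_mulVec_eq_iff {V : Type*} [Fintype V] {n : ℕ} (v : V → Fin n → ℝ) (x : V → ℝ)
    (c : ℝ) (p : Fin n → ℝ) :
    (homogMatrix v *ᵥ x = fun i => i.elim c p) ↔ ∑ h, x h = c ∧ ∑ h, x h • v h = p := by
  simp only [funext_iff, Option.forall, homogMatrix, mulVec, dotProduct, of_apply, Option.elim,
    mul_one, Finset.sum_apply, Pi.smul_apply, smul_eq_mul, mul_comm]

lemma eq_zero_of_homogMatrix_mulVec {V : Type*} [Fintype V] {n : ℕ} {v : V → Fin n → ℝ}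
    (hv : AffineIndependent ℝ v) (x : V → ℝ) (hx : homogMatrix v *ᵥ x = 0) : x = 0 := by
  have h0 : (0 : Option (Fin n) → ℝ) = fun i => i.elim 0 0 := by
    funext i; cases i <;> rfl
  rw [h0, homogMatrix_mulVec_eq_iff] at hx
  funext h
  exact affineIndependent_iff.1 hv Finset.univ x hx.1 hx.2 h (Finset.mem_univ h)

lemma mem_convexHull_range_iff_s16 {V : Type*} [Fintype V] {n : ℕ} (v : V → Fin n → ℝ)
    (p : Fin n → ℝ) :
    p ∈ convexHull ℝ (Set.range v) ↔
      ∃ x : V → ℝ, (∀ h, 0 ≤ x h) ∧ homogMatrix v *ᵥ x = fun i => i.elim 1 p := by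
  simp only [homogMatrix_mulVec_eq_iff]
  constructor
  · intro hp
    rw [convexHull_range_eq_exists_affineCombination] at hp
    classical
    obtain ⟨s, x, hx0, hx1, rfl⟩ := hp
    refine ⟨fun h => if h ∈ s then x h else 0, fun h => ?_, ?_, ?_⟩
    · dsimp only
      split_ifs with hs
      exacts [hx0 h hs, le_rfl]
    · simpa using hx1
    · rw [s.affineCombination_eq_linear_combination v x hx1]
      simp [ite_smul]
  · rintro ⟨x, hx0, hx1, hx⟩
    exact mem_convexHull_of_exists_fintype x v hx0 hx1 (fun h => ⟨h, rfl⟩) hx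

/-- Let `(w_h)_{h ∈ V}` be a finite family of polynomial vectors that is affinely
independent at all sufficiently large positive integers `t`, and let `w` be another
polynomial vector. Then either `w(t)` lies in the convex hull of the `w_h(t)` for all
sufficiently large `t`, or it lies outside for all sufficiently large `t`. -/
theorem convex_combination_eventually_stable (n : ℕ) (hn : 0 < n) (V : Type*) [Finite V]
    (wv : V → Fin n → Polynomial ℝ)
    (hind : ∀ᶠ t : ℕ in Filter.atTop,
      AffineIndependent ℝ fun h : V => fun j : Fin n => (wv h j).eval (t : ℝ))
    (w : Fin n → Polynomial ℝ) :
    (∀ᶠ t : ℕ in Filter.atTop,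
        (fun j : Fin n => (w j).eval (t : ℝ)) ∈
          convexHull ℝ (Set.range fun h : V => fun j : Fin n => (wv h j).eval (t : ℝ))) ∨
    (∀ᶠ t : ℕ in Filter.atTop,
        (fun j : Fin n => (w j).eval (t : ℝ)) ∉
          convexHull ℝ (Set.range fun h : V => fun j : Fin n => (wv h j).eval (t : ℝ))) := by
  classical
  have := Fintype.ofFinite V
  set A : Matrix (Option (Fin n)) V ℝ[X] := homogMatrix wv with hA
  set b : Option (Fin n) → ℝ[X] := fun i => i.elim 1 w with hb
  set d : ℝ[X] := (Aᵀ * A).det with hd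
  set p : V → ℝ[X] := cramerNumerator A b with hp
  have hdec : EventuallyDecided fun t =>
      (∀ h, 0 ≤ (d * p h).eval (t : ℝ)) ∧
        ∀ i, ((A *ᵥ p) i).eval (t : ℝ) = (d * b i).eval (t : ℝ) :=
    (EventuallyDecided.forall_finite fun h => .eval_nonneg _).and
      (EventuallyDecided.forall_finite fun i => .eval_eq _ _)
  refine hdec.congr (hind.mono fun t ht => ?_)
  -- Evaluation at `t` is a ring homomorphism, so it commutes with all the constructions above.
  have hAt : A.map (evalRingHom (t : ℝ)) = homogMatrix fun h j => (wv h j).eval (t : ℝ) := by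
    ext i h
    cases i <;> simp [hA, homogMatrix]
  have hbt : evalRingHom (t : ℝ) ∘ b = fun i => i.elim 1 fun j => (w j).eval (t : ℝ) := by
    funext i
    cases i <;> simp [hb]
  have hdt : d.eval (t : ℝ) =
      ((A.map (evalRingHom (t : ℝ)))ᵀ * A.map (evalRingHom (t : ℝ))).det := by
    rw [hd, ← coe_evalRingHom, RingHom.map_det, RingHom.mapMatrix_apply, Matrix.map_mul,
      Matrix.transpose_map]
  have hpt : evalRingHom (t : ℝ) ∘ p =
      cramerNumerator (A.map (evalRingHom (t : ℝ))) (evalRingHom (t : ℝ) ∘ b) :=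
    funext fun h => map_cramerNumerator _ A b h
  have hApt : ∀ i, ((A *ᵥ p) i).eval (t : ℝ) =
      (A.map (evalRingHom (t : ℝ)) *ᵥ (evalRingHom (t : ℝ) ∘ p)) i := fun i =>
    RingHom.map_mulVec (evalRingHom (t : ℝ)) A p i
  rw [mem_convexHull_range_iff_s16, ← hAt, ← hbt, exists_nonneg_solution_iff
    (by rw [hAt]; exact eq_zero_of_homogMatrix_mulVec ht), ← hpt, ← hdt]
  simp only [eval_mul, hApt, Function.comp_apply, coe_evalRingHom]
end
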